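/- Let n ≥ 2, −∞ < μ < 1/4, 1 < p < p_c := 1 + 2/(n−2+α₊), and let F be a nonempty closed subset of the boundary hyperplane ∂ℝⁿ₊ = {x ∈ ℝⁿ : x₁ = 0}. Then there exist a constant c > 0 depending only on n, μ, p, and a positive classical solution U of ΔU + (μ/x₁²)U = U^p on ℝⁿ₊ such that: (i) U(x) → 0 as x → y for every boundary point y ∈ ∂ℝⁿ₊ \ F; (ii) for every point (0,ξ) ∈ F one has c⁻¹ x₁^{−2/(p−1)} ≤ U(x₁,ξ) ≤ c x₁^{−2/(p−1)} for all x₁ ∈ (0,1); and (iii) c⁻¹ x₁^{α₊} dist(x,F)^{−α₊−2/(p−1)} ≤ U(x) ≤ c x₁^{α₊} dist(x,F)^{−α₊−2/(p−1)} for all x ∈ ℝⁿ₊. -/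

import Mathlib

open Real Set

noncomputable def lap {n : ℕ} (u : EuclideanSpace ℝ (Fin n) → ℝ)
    (x : EuclideanSpace ℝ (Fin n)) : ℝ :=
  ∑ i : Fin n, iteratedFDeriv ℝ 2 u x ![EuclideanSpace.single i 1, EuclideanSpace.single i 1]

noncomputable def x1 {n : ℕ} (x : EuclideanSpace ℝ (Fin n)) : ℝ :=
  if h : 0 < n then x ⟨0, h⟩ else 0

def halfSpace (n : ℕ) : Set (EuclideanSpace ℝ (Fin n)) := {x | 0 < x1 x}

noncomputable def aPlus (μ : ℝ) : ℝ := 1 / 2 + Real.sqrt (1 / 4 - μ)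

noncomputable def aMinus (μ : ℝ) : ℝ := 1 / 2 - Real.sqrt (1 / 4 - μ)

noncomputable def Lam (n : ℕ) (s : ℝ) : ℝ := s * (s + n - 2)

/-- First coordinate unit vector of `ℝⁿ`. -/
noncomputable def e1 (n : ℕ) : EuclideanSpace ℝ (Fin n) :=
  if h : 0 < n then EuclideanSpace.single ⟨0, h⟩ 1 else 0

/-!
Write `a = 2 / (p - 1)`, `α = α₊` and `x₁ = ⟪e, x⟫`. For `y ∈ F` the function
`δ x₁ ^ α |x - y| ^ (-α - a)` is a subsolution when `δ` is small: `p < p_c` says that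
`a + 2 - n - α > 0`, the sign with which the Laplacian of this homogeneous function appears. The
maximum over `y ∈ F` of these subsolutions is the profile `δ x₁ ^ α dist(x, F) ^ (-α - a)`, and `U`
is the minimal solution above it.

Minimality gives the upper bound at a point `x` from a supersolution chosen for `x` alone. With `ξ`
the projection of `x` to the boundary and `d = dist(ξ, F)`, the barrier
`A x₁ ^ α q ^ (-(α + a) / 2)`, where `q` is a smooth version of the squared distance to the boundary
outside `B(ξ, d)`, corrected by a term of order `x₁ ^ (α + 1)`, lies above the profile on the whole
half-space and is comparable to it at `x`.

The minimal solution is the limit of the monotone iteration `u ↦ G (K / x₁² u - u ^ p)`, with `G`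
the Green operator of `-Δ + s (s - 1) / x₁²` and `K = s (s - 1) + μ` large. For an integer `s` the
substitution `u = x₁ ^ s v` turns this operator into the Laplacian of `ℝ ^ (2 s) × ℝⁿ` acting on
functions invariant under rotations around the boundary hyperplane, so that `G` is a Newton
potential and no elliptic theory beyond the Newton kernel is needed.
-/

open Filter InnerProductSpace Laplacian MeasureTheory Metric Module Topology
open scoped RealInnerProductSpace

section LaplacianCalculus

variable {E : Type*} [NormedAddCommGroup E] [InnerProductSpace ℝ E] {u v : E → ℝ} {x g h : E}
  {l m : ℝ}

theorem eventually_hasFDerivAt_of_contDiffAt_two (hu : ContDiffAt ℝ 2 u x) :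
    ∀ᶠ y in 𝓝 x, HasFDerivAt u (fderiv ℝ u y) y :=
  (hu.eventually (by simp)).mono fun _ hy ↦ (hy.differentiableAt two_ne_zero).hasFDerivAt

theorem hasFDerivAt_fderiv_of_contDiffAt_two (hu : ContDiffAt ℝ 2 u x) :
    HasFDerivAt (fderiv ℝ u) (fderiv ℝ (fderiv ℝ u) x) x :=
  ((hu.fderiv_right (m := 1) (by norm_num)).differentiableAt one_ne_zero).hasFDerivAt

variable [FiniteDimensional ℝ E]

theorem laplacian_eq_sum_of_hasFDerivAt {ι : Type*} [Fintype ι] (b : OrthonormalBasis ι ℝ E)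
    {u' : E → E →L[ℝ] ℝ} {u'' : E →L[ℝ] E →L[ℝ] ℝ} (h₁ : ∀ᶠ y in 𝓝 x, HasFDerivAt u (u' y) y)
    (h₂ : HasFDerivAt u' u'' x) : Δ u x = ∑ i, u'' (b i) (b i) := by
  have hfderiv : fderiv ℝ u =ᶠ[𝓝 x] u' := h₁.mono fun y hy ↦ hy.fderiv
  simp only [laplacian_eq_iteratedFDeriv_orthonormalBasis u b, iteratedFDeriv_two_apply,
    hfderiv.fderiv_eq, h₂.fderiv, Matrix.cons_val_zero, Matrix.cons_val_one]

theorem laplacian_eq_sum_fderiv {ι : Type*} [Fintype ι] (b : OrthonormalBasis ι ℝ E)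
    (hu : ContDiffAt ℝ 2 u x) : Δ u x = ∑ i, fderiv ℝ (fderiv ℝ u) x (b i) (b i) :=
  laplacian_eq_sum_of_hasFDerivAt b (eventually_hasFDerivAt_of_contDiffAt_two hu)
    (hasFDerivAt_fderiv_of_contDiffAt_two hu)

/-- `u` is `C²` at `x` with gradient `g` and Laplacian `l`. Carrying the gradient along makes the
product and chain rules for the Laplacian compositional. -/
structure HasLaplacianAt (u : E → ℝ) (g : E) (l : ℝ) (x : E) : Prop where
  contDiffAt : ContDiffAt ℝ 2 u x
  hasFDerivAt : HasFDerivAt u (innerSL ℝ g) x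
  laplacian_eq : Δ u x = l

namespace HasLaplacianAt

theorem fderiv_apply (hu : HasLaplacianAt u g l x) (w : E) : fderiv ℝ u x w = ⟪g, w⟫ := by
  rw [hu.hasFDerivAt.fderiv, innerSL_apply_apply]

theorem congr (hu : HasLaplacianAt u g l x) (hg : g = h) (hl : l = m) : HasLaplacianAt u h m x :=
  hg ▸ hl ▸ hu

theorem const (c : ℝ) : HasLaplacianAt (fun _ : E ↦ c) 0 0 x where
  contDiffAt := contDiffAt_const
  hasFDerivAt := by simpa using hasFDerivAt_const c x
  laplacian_eq := by simp

theorem inner_left (e : E) : HasLaplacianAt (fun y ↦ ⟪e, y⟫) e 0 x where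
  contDiffAt := (innerSL ℝ e).contDiff.contDiffAt
  hasFDerivAt := (innerSL ℝ e).hasFDerivAt
  laplacian_eq := by
    rw [laplacian_eq_sum_of_hasFDerivAt (u := fun y ↦ ⟪e, y⟫) (stdOrthonormalBasis ℝ E)
      (.of_forall fun _ ↦ (innerSL ℝ e).hasFDerivAt) (hasFDerivAt_const _ _)]
    simp

theorem norm_sub_sq (ξ : E) :
    HasLaplacianAt (fun y ↦ ‖y - ξ‖ ^ 2) ((2 : ℝ) • (x - ξ)) (2 * finrank ℝ E) x where
  contDiffAt := (contDiff_id.sub contDiff_const).norm_sq ℝ |>.contDiffAt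
  hasFDerivAt := ((hasFDerivAt_id x).sub_const ξ).norm_sq.congr_fderiv <| by
    ext; simp [two_mul]
  laplacian_eq := by
    have h₁ (y : E) : HasFDerivAt (fun y ↦ ‖y - ξ‖ ^ 2) ((2 : ℝ) • innerSL ℝ (y - ξ)) y := by
      refine ((hasFDerivAt_id y).sub_const ξ).norm_sq.congr_fderiv ?_
      ext; simp [two_mul]
    have h₂ : HasFDerivAt (fun y ↦ (2 : ℝ) • innerSL ℝ (y - ξ)) ((2 : ℝ) • innerSL ℝ) x :=
      ((innerSL ℝ).hasFDerivAt.comp x ((hasFDerivAt_id x).sub_const ξ)).const_smul (2 : ℝ)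
    have hself (w : E) : ((2 : ℝ) • innerSL ℝ : E →L[ℝ] E →L[ℝ] ℝ) w w = 2 * ‖w‖ ^ 2 :=
      congrArg (2 * ·) (real_inner_self_eq_norm_sq w)
    rw [laplacian_eq_sum_of_hasFDerivAt (stdOrthonormalBasis ℝ E) (.of_forall h₁) h₂,
      Finset.sum_congr rfl fun i _ ↦ hself _]
    simp [mul_comm]

theorem add (hu : HasLaplacianAt u g l x) (hv : HasLaplacianAt v h m x) :
    HasLaplacianAt (fun y ↦ u y + v y) (g + h) (l + m) x where
  contDiffAt := hu.contDiffAt.add hv.contDiffAt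
  hasFDerivAt := (hu.hasFDerivAt.add hv.hasFDerivAt).congr_fderiv (by simp)
  laplacian_eq := by
    rw [← hu.laplacian_eq, ← hv.laplacian_eq, ← hu.contDiffAt.laplacian_add hv.contDiffAt]; rfl

theorem const_mul (hu : HasLaplacianAt u g l x) (c : ℝ) :
    HasLaplacianAt (fun y ↦ c * u y) (c • g) (c * l) x where
  contDiffAt := contDiffAt_const.mul hu.contDiffAt
  hasFDerivAt := (hu.hasFDerivAt.const_mul c).congr_fderiv (by simp)
  laplacian_eq := by
    rw [← hu.laplacian_eq, ← smul_eq_mul, ← laplacian_smul c hu.contDiffAt]; rfl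

theorem sub (hu : HasLaplacianAt u g l x) (hv : HasLaplacianAt v h m x) :
    HasLaplacianAt (fun y ↦ u y - v y) (g - h) (l - m) x := by
  simpa [← sub_eq_add_neg] using hu.add (hv.const_mul (-1))

theorem mul (hu : HasLaplacianAt u g l x) (hv : HasLaplacianAt v h m x) :
    HasLaplacianAt (fun y ↦ u y * v y) (u x • h + v x • g) (u x * m + v x * l + 2 * ⟪g, h⟫) x where
  contDiffAt := hu.contDiffAt.mul hv.contDiffAt
  hasFDerivAt := (hu.hasFDerivAt.mul hv.hasFDerivAt).congr_fderiv (by simp)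
  laplacian_eq := by
    set b := stdOrthonormalBasis ℝ E
    have h₁ : ∀ᶠ y in 𝓝 x,
        HasFDerivAt (fun y ↦ u y * v y) (u y • fderiv ℝ v y + v y • fderiv ℝ u y) y := by
      filter_upwards [eventually_hasFDerivAt_of_contDiffAt_two hu.contDiffAt,
        eventually_hasFDerivAt_of_contDiffAt_two hv.contDiffAt] with y hu' hv'
      exact hu'.mul hv'
    have h₂ := (hu.hasFDerivAt.smul (hasFDerivAt_fderiv_of_contDiffAt_two hv.contDiffAt)).add
      (hv.hasFDerivAt.smul (hasFDerivAt_fderiv_of_contDiffAt_two hu.contDiffAt))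
    rw [laplacian_eq_sum_of_hasFDerivAt b h₁ h₂, ← hu.laplacian_eq, ← hv.laplacian_eq,
      laplacian_eq_sum_fderiv b hu.contDiffAt, laplacian_eq_sum_fderiv b hv.contDiffAt,
      ← b.sum_inner_mul_inner g h]
    simp only [Finset.mul_sum, ← Finset.sum_add_distrib]
    refine Finset.sum_congr rfl fun i _ ↦ ?_
    simp [hu.fderiv_apply, hv.fderiv_apply, real_inner_comm (b i)]
    ring

theorem comp {φ φ' : ℝ → ℝ} {φ'' : ℝ} (hu : HasLaplacianAt u g l x)
    (hφ : ContDiffAt ℝ 2 φ (u x)) (hφ' : ∀ᶠ t in 𝓝 (u x), HasDerivAt φ (φ' t) t)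
    (hφ'' : HasDerivAt φ' φ'' (u x)) :
    HasLaplacianAt (fun y ↦ φ (u y)) (φ' (u x) • g) (φ' (u x) * l + φ'' * ‖g‖ ^ 2) x where
  contDiffAt := hφ.comp x hu.contDiffAt
  hasFDerivAt := (hφ'.self_of_nhds.comp_hasFDerivAt x hu.hasFDerivAt).congr_fderiv (by simp)
  laplacian_eq := by
    set b := stdOrthonormalBasis ℝ E
    have h₁ : ∀ᶠ y in 𝓝 x, HasFDerivAt (fun y ↦ φ (u y)) (φ' (u y) • fderiv ℝ u y) y := by
      filter_upwards [eventually_hasFDerivAt_of_contDiffAt_two hu.contDiffAt,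
        hu.contDiffAt.continuousAt.eventually hφ'] with y hu' hφ'
      exact hφ'.comp_hasFDerivAt y hu'
    have h₂ := (hφ''.comp_hasFDerivAt x hu.hasFDerivAt).smul
      (hasFDerivAt_fderiv_of_contDiffAt_two hu.contDiffAt)
    rw [laplacian_eq_sum_of_hasFDerivAt b h₁ h₂, ← hu.laplacian_eq,
      laplacian_eq_sum_fderiv b hu.contDiffAt, ← real_inner_self_eq_norm_sq,
      ← b.sum_inner_mul_inner g g]
    simp only [Finset.mul_sum, ← Finset.sum_add_distrib]
    refine Finset.sum_congr rfl fun i _ ↦ ?_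
    simp [hu.fderiv_apply, real_inner_comm (b i)]
    ring

theorem rpow_const (hu : HasLaplacianAt u g l x) (hpos : 0 < u x) (γ : ℝ) :
    HasLaplacianAt (fun y ↦ u y ^ γ) ((γ * u x ^ (γ - 1)) • g)
      (γ * u x ^ (γ - 1) * l + γ * (γ - 1) * u x ^ (γ - 2) * ‖g‖ ^ 2) x := by
  refine (hu.comp (φ' := fun t ↦ γ * t ^ (γ - 1)) (φ'' := γ * ((γ - 1) * u x ^ (γ - 1 - 1)))
    (contDiffAt_rpow_const_of_ne hpos.ne') ?_ ?_).congr rfl ?_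
  · filter_upwards [lt_mem_nhds hpos] with t ht
    exact hasDerivAt_rpow_const (.inl ht.ne')
  · exact (hasDerivAt_rpow_const (.inl hpos.ne')).const_mul γ
  · rw [show γ - 1 - 1 = γ - 2 by ring]; ring

end HasLaplacianAt

theorem hasLaplacianAt_of_contDiffAt (hu : ContDiffAt ℝ 2 u x) :
    HasLaplacianAt u (gradient u x) (Δ u x) x where
  contDiffAt := hu
  hasFDerivAt := (hu.differentiableAt two_ne_zero).hasGradientAt.hasFDerivAt
  laplacian_eq := rfl

end LaplacianCalculus

section MaximumPrinciple

variable {E : Type*} [NormedAddCommGroup E] [InnerProductSpace ℝ E] {u : E → ℝ} {x e : E}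

theorem deriv_deriv_add_smul (hu : ContDiffAt ℝ 2 u x) (v : E) :
    deriv (deriv fun t : ℝ ↦ u (x + t • v)) 0 = fderiv ℝ (fderiv ℝ u) x v v := by
  have hline (t : ℝ) : HasDerivAt (fun t : ℝ ↦ x + t • v) v t := by
    simpa using ((hasDerivAt_id t).smul_const v).const_add x
  have htendsto : Tendsto (fun t : ℝ ↦ x + t • v) (𝓝 0) (𝓝 x) := by
    simpa using (hline 0).continuousAt.tendsto
  have hderiv : deriv (fun t : ℝ ↦ u (x + t • v)) =ᶠ[𝓝 0] fun t ↦ fderiv ℝ u (x + t • v) v := by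
    filter_upwards [htendsto.eventually (eventually_hasFDerivAt_of_contDiffAt_two hu)] with t ht
    exact (ht.comp_hasDerivAt t (hline t)).deriv
  have hfderiv : HasFDerivAt (fderiv ℝ u) (fderiv ℝ (fderiv ℝ u) x) (x + (0 : ℝ) • v) := by
    simpa using hasFDerivAt_fderiv_of_contDiffAt_two hu
  have happly : HasFDerivAt (fun y ↦ fderiv ℝ u y v)
      ((ContinuousLinearMap.apply ℝ ℝ v).comp (fderiv ℝ (fderiv ℝ u) x)) (x + (0 : ℝ) • v) :=
    (ContinuousLinearMap.apply ℝ ℝ v).hasFDerivAt.comp _ hfderiv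
  rw [hderiv.deriv_eq]
  exact (happly.comp_hasDerivAt (0 : ℝ) (hline 0)).deriv

theorem deriv_deriv_nonneg_of_isLocalMin {φ : ℝ → ℝ} {t : ℝ} (hmin : IsLocalMin φ t)
    (hcont : ContinuousAt φ t) : 0 ≤ deriv (deriv φ) t := by
  by_contra! hneg
  have hmax := isLocalMax_of_deriv_deriv_neg hneg hmin.deriv_eq_zero hcont
  have hconst : φ =ᶠ[𝓝 t] fun _ ↦ φ t := by
    filter_upwards [hmin, hmax] with y hge hle using le_antisymm hle hge
  simp [hconst.deriv.deriv_eq] at hneg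

theorem fderiv_fderiv_apply_self_nonneg_of_isLocalMin (hu : ContDiffAt ℝ 2 u x)
    (hmin : IsLocalMin u x) (v : E) : 0 ≤ fderiv ℝ (fderiv ℝ u) x v v := by
  have hline : ContinuousAt (fun t : ℝ ↦ x + t • v) 0 := by fun_prop
  have htendsto : Tendsto (fun t : ℝ ↦ x + t • v) (𝓝 0) (𝓝 x) := by simpa using hline.tendsto
  rw [← deriv_deriv_add_smul hu v]
  refine deriv_deriv_nonneg_of_isLocalMin ?_ ?_
  · filter_upwards [htendsto.eventually hmin] with t ht
    simpa using ht
  · exact ContinuousAt.comp (g := u) (by simpa using hu.continuousAt) hline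

theorem laplacian_nonneg_of_isLocalMin [FiniteDimensional ℝ E] (hu : ContDiffAt ℝ 2 u x)
    (hmin : IsLocalMin u x) : 0 ≤ Δ u x := by
  rw [laplacian_eq_sum_fderiv (stdOrthonormalBasis ℝ E) hu]
  exact Finset.sum_nonneg fun i _ ↦ fderiv_fderiv_apply_self_nonneg_of_isLocalMin hu hmin _

/-- The open half-space with inner normal `e`. -/
def openHalfSpace (e : E) : Set E := {x | 0 < ⟪e, x⟫}

theorem isOpen_openHalfSpace (e : E) : IsOpen (openHalfSpace e) :=
  isOpen_lt continuous_const (innerSL ℝ e).continuous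

theorem inner_sq_le_norm_sq_of_norm_eq_one (he : ‖e‖ = 1) (x : E) : ⟪e, x⟫ ^ 2 ≤ ‖x‖ ^ 2 := by
  simpa [he] using sq_le_sq' (by linarith [neg_le_of_abs_le (abs_real_inner_le_norm e x)])
    (real_inner_le_norm e x)

/-- An exhaustion function of the half-space with inner normal `e`, tending to infinity both at the
boundary and at infinity. -/
noncomputable def halfSpaceExhaustion (e x : E) : ℝ := (⟪e, x⟫ ^ 2)⁻¹ + ‖x‖ ^ 2

theorem isCompact_halfSpaceExhaustion_le [FiniteDimensional ℝ E] (e : E) (R : ℝ) :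
    IsCompact {x | x ∈ openHalfSpace e ∧ halfSpaceExhaustion e x ≤ R} := by
  have hinner : Continuous fun x : E ↦ ⟪e, x⟫ := (innerSL ℝ e).continuous
  have heq : {x | x ∈ openHalfSpace e ∧ halfSpaceExhaustion e x ≤ R} =
      {x | 0 ≤ ⟪e, x⟫ ∧ 1 + ‖x‖ ^ 2 * ⟪e, x⟫ ^ 2 ≤ R * ⟪e, x⟫ ^ 2} := by
    ext x
    have hiff (hx : 0 < ⟪e, x⟫) :
        halfSpaceExhaustion e x ≤ R ↔ 1 + ‖x‖ ^ 2 * ⟪e, x⟫ ^ 2 ≤ R * ⟪e, x⟫ ^ 2 := by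
      rw [halfSpaceExhaustion, ← mul_le_mul_iff_left₀ (pow_pos hx 2), add_mul,
        inv_mul_cancel₀ (pow_pos hx 2).ne']
    refine ⟨fun ⟨hx, h⟩ ↦ ⟨le_of_lt hx, (hiff hx).1 h⟩, fun ⟨hx, h⟩ ↦ ?_⟩
    have hpos : 0 < ⟪e, x⟫ := hx.lt_of_ne' fun h₀ ↦ by norm_num [h₀] at h
    exact ⟨hpos, (hiff hpos).2 h⟩
  refine isCompact_of_isClosed_isBounded ?_ ((isBounded_closedBall (x := 0) (r := √R)).subset ?_)
  · rw [heq]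
    exact (isClosed_le continuous_const hinner).inter
      (isClosed_le (f := fun x ↦ 1 + ‖x‖ ^ 2 * ⟪e, x⟫ ^ 2) (g := fun x ↦ R * ⟪e, x⟫ ^ 2)
        (by fun_prop) (by fun_prop))
  · rintro x ⟨-, hx⟩
    have : 0 ≤ (⟪e, x⟫ ^ 2)⁻¹ := by positivity
    exact mem_closedBall_zero_iff.2 (le_sqrt_of_sq_le (by rw [halfSpaceExhaustion] at hx; linarith))

/-- The barrier `x₁⁻ᵃ (x₁⁻² + ‖x‖²)` for the maximum principle, where `x₁ = ⟪e, x⟫`. It dominates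
`x₁⁻ᵃ` at the boundary and at infinity. -/
noncomputable def halfSpaceBarrier (e : E) (a : ℝ) (x : E) : ℝ :=
  ⟪e, x⟫ ^ (-a - 2) + ⟪e, x⟫ ^ (-a) * ‖x - 0‖ ^ 2

theorem halfSpaceBarrier_eq (a : ℝ) (hx : x ∈ openHalfSpace e) :
    halfSpaceBarrier e a x = ⟪e, x⟫ ^ (-a) * halfSpaceExhaustion e x := by
  rw [halfSpaceBarrier, halfSpaceExhaustion, rpow_sub hx, rpow_two, sub_zero, div_eq_mul_inv,
    mul_add]

variable [FiniteDimensional ℝ E]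

theorem hasLaplacianAt_halfSpaceBarrier (he : ‖e‖ = 1) (a : ℝ) (hx : x ∈ openHalfSpace e) :
    ∃ g, HasLaplacianAt (halfSpaceBarrier e a) g
      (⟪e, x⟫ ^ (-a) * ((a + 2) * (a + 3) * (⟪e, x⟫ ^ 4)⁻¹ + 2 * finrank ℝ E
        + a * (a + 1) * (⟪e, x⟫ ^ 2)⁻¹ * ‖x‖ ^ 2 - 4 * a)) x := by
  have hpos : 0 < ⟪e, x⟫ := hx
  have hinner := HasLaplacianAt.inner_left (x := x) e
  refine ⟨_, ((hinner.rpow_const hpos (-a - 2)).add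
    ((hinner.rpow_const hpos (-a)).mul (HasLaplacianAt.norm_sub_sq 0))).congr rfl ?_⟩
  have h₁ : ⟪e, x⟫ ^ (-a - 1) = ⟪e, x⟫ ^ (-a) * ⟪e, x⟫⁻¹ := by
    rw [rpow_sub_one hpos.ne', div_eq_mul_inv]
  have h₂ : ⟪e, x⟫ ^ (-a - 2) = ⟪e, x⟫ ^ (-a) * (⟪e, x⟫ ^ 2)⁻¹ := by
    rw [rpow_sub hpos, rpow_two, div_eq_mul_inv]
  have h₄ : ⟪e, x⟫ ^ (-a - 2 - 2) = ⟪e, x⟫ ^ (-a) * (⟪e, x⟫ ^ 4)⁻¹ := by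
    rw [rpow_sub hpos, h₂, rpow_two]; field_simp
  simp only [h₁, h₂, h₄, he, sub_zero, inner_smul_left, inner_smul_right, mul_zero,
    RCLike.conj_to_real]
  field_simp
  ring

theorem laplacian_halfSpaceBarrier_le (he : ‖e‖ = 1) {a k : ℝ} (ha : 0 < a)
    (hk : (a + 2) * (a + 3) + 2 * finrank ℝ E ≤ k) (hx : x ∈ openHalfSpace e) :
    Δ (halfSpaceBarrier e a) x ≤ k / ⟪e, x⟫ ^ 2 * halfSpaceBarrier e a x := by
  obtain ⟨_, hbarrier⟩ := hasLaplacianAt_halfSpaceBarrier he a hx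
  have hpos : 0 < ⟪e, x⟫ := hx
  set Q := (⟪e, x⟫ ^ 2)⁻¹ with hQ
  have : 0 < Q := by positivity
  have hone : 1 ≤ Q * ‖x‖ ^ 2 := by
    rw [hQ, inv_mul_eq_div, one_le_div (by positivity)]
    exact inner_sq_le_norm_sq_of_norm_eq_one he x
  have hQ₄ : (⟪e, x⟫ ^ 4)⁻¹ = Q ^ 2 := by rw [hQ, ← inv_pow]; ring
  rw [hbarrier.laplacian_eq, halfSpaceBarrier_eq a hx, halfSpaceExhaustion, div_eq_mul_inv, ← hQ,
    mul_left_comm, hQ₄]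
  gcongr
  calc (a + 2) * (a + 3) * Q ^ 2 + 2 * finrank ℝ E + a * (a + 1) * Q * ‖x‖ ^ 2 - 4 * a
      ≤ (a + 2) * (a + 3) * Q ^ 2 + 2 * finrank ℝ E * (Q * ‖x‖ ^ 2)
        + (a + 2) * (a + 3) * (Q * ‖x‖ ^ 2) := by
        nlinarith [mul_le_mul_of_nonneg_left hone (by positivity : (0 : ℝ) ≤ 2 * finrank ℝ E)]
    _ ≤ k * Q ^ 2 + k * (Q * ‖x‖ ^ 2) := by
        have hdim : (0 : ℝ) ≤ 2 * finrank ℝ E := by positivity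
        nlinarith [mul_le_mul_of_nonneg_right hk (by positivity : 0 ≤ Q * ‖x‖ ^ 2),
          mul_le_mul_of_nonneg_right hk (sq_nonneg Q), mul_nonneg hdim (sq_nonneg Q)]
    _ = k * Q * (Q + ‖x‖ ^ 2) := by ring
    _ = _ := by ring

variable {z : E → ℝ} {a k C : ℝ}

theorem add_halfSpaceBarrier_nonneg (he : ‖e‖ = 1) (ha : 0 < a)
    (hk : (a + 2) * (a + 3) + 2 * finrank ℝ E ≤ k)
    (hz : ∀ x ∈ openHalfSpace e, ContDiffAt ℝ 2 z x)
    (hΔ : ∀ x ∈ openHalfSpace e, Δ z x ≤ k / ⟪e, x⟫ ^ 2 * z x)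
    (hbound : ∀ x ∈ openHalfSpace e, -(C * ⟪e, x⟫ ^ (-a)) ≤ z x) {η : ℝ} (hη : 0 < η)
    (hx : x ∈ openHalfSpace e) : 0 ≤ z x + η * halfSpaceBarrier e a x := by
  by_contra! hneg
  set Z := fun y ↦ z y + η * halfSpaceBarrier e a y with hZ
  have hb (y : E) (hy : y ∈ openHalfSpace e) :=
    (hasLaplacianAt_halfSpaceBarrier he a hy).choose_spec
  have hZΔ (y : E) (hy : y ∈ openHalfSpace e) :=
    (hasLaplacianAt_of_contDiffAt (hz y hy)).add ((hb y hy).const_mul η)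
  set K := {y : E | y ∈ openHalfSpace e ∧ halfSpaceExhaustion e y ≤ C / η}
  have hout (y : E) (hy : y ∈ openHalfSpace e) (hyK : y ∉ K) : 0 ≤ Z y := by
    have hlarge : C < halfSpaceExhaustion e y * η := by
      rw [← div_lt_iff₀ hη]
      exact not_le.1 fun h ↦ hyK ⟨hy, h⟩
    have hpow : 0 < ⟪e, y⟫ ^ (-a) := rpow_pos_of_pos hy _
    simp only [hZ, halfSpaceBarrier_eq a hy]
    nlinarith [hbound y hy]
  have hxK : x ∈ K := by
    by_contra h
    exact (hout x hx h).not_gt hneg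
  obtain ⟨y, hyK, hmin⟩ := (isCompact_halfSpaceExhaustion_le e (C / η)).exists_isMinOn ⟨x, hxK⟩
    fun y hy ↦ (hZΔ y hy.1).contDiffAt.continuousAt.continuousWithinAt
  have hyneg : Z y < 0 := (hmin hxK).trans_lt hneg
  have hlocal : IsLocalMin Z y := by
    filter_upwards [(isOpen_openHalfSpace e).mem_nhds hyK.1] with w hw
    by_cases hwK : w ∈ K
    · exact hmin hwK
    · exact hyneg.le.trans (hout w hw hwK)
  have hnonneg := laplacian_nonneg_of_isLocalMin (hZΔ y hyK.1).contDiffAt hlocal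
  have hpos : 0 < ⟪e, y⟫ := hyK.1
  have hk₀ : 0 < k := lt_of_lt_of_le (by positivity) hk
  have hterm : k / ⟪e, y⟫ ^ 2 * Z y < 0 := mul_neg_of_pos_of_neg (by positivity) hyneg
  have hbarrier := mul_le_mul_of_nonneg_left (laplacian_halfSpaceBarrier_le he ha hk hyK.1) hη.le
  rw [(hZΔ y hyK.1).laplacian_eq, ← (hb y hyK.1).laplacian_eq] at hnonneg
  simp only [hZ] at hterm
  linarith [hΔ y hyK.1]

theorem nonneg_of_laplacian_le_div_inner_sq_mul (he : ‖e‖ = 1) (ha : 0 < a)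
    (hk : (a + 2) * (a + 3) + 2 * finrank ℝ E ≤ k)
    (hz : ∀ x ∈ openHalfSpace e, ContDiffAt ℝ 2 z x)
    (hΔ : ∀ x ∈ openHalfSpace e, Δ z x ≤ k / ⟪e, x⟫ ^ 2 * z x)
    (hbound : ∀ x ∈ openHalfSpace e, -(C * ⟪e, x⟫ ^ (-a)) ≤ z x)
    (hx : x ∈ openHalfSpace e) : 0 ≤ z x := by
  have hlim : Tendsto (fun η : ℝ ↦ z x + η * halfSpaceBarrier e a x) (𝓝[>] 0) (𝓝 (z x)) := by
    have hcont : Continuous fun η : ℝ ↦ z x + η * halfSpaceBarrier e a x := by fun_prop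
    simpa using (hcont.tendsto 0).mono_left nhdsWithin_le_nhds
  refine ge_of_tendsto hlim ?_
  filter_upwards [self_mem_nhdsWithin] with η hη
  exact add_halfSpaceBarrier_nonneg he ha hk hz hΔ hbound hη hx

end MaximumPrinciple

section Convolution

variable {V F : Type*} [NormedAddCommGroup V] [NormedAddCommGroup F]
  {g : V → ℝ} {C R r : ℝ} {K : V → F} {x : V}

theorem norm_smul_comp_sub_le_indicator [NormedSpace ℝ F] (hgC : ∀ y, ‖g y‖ ≤ C)
    (hgR : Function.support g ⊆ ball 0 R) (K : V → F) (hx : x ∈ ball 0 r) (y : V) :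
    ‖g y • K (x - y)‖ ≤ C * (ball 0 (R + r)).indicator (fun z ↦ ‖K z‖) (x - y) := by
  have hC : 0 ≤ C := (norm_nonneg _).trans (hgC y)
  by_cases hy : g y = 0
  · simpa [hy] using mul_nonneg hC (indicator_nonneg (fun _ _ ↦ norm_nonneg _) _)
  · have hyR : ‖y‖ < R := mem_ball_zero_iff.1 (hgR hy)
    have hsub : x - y ∈ ball (0 : V) (R + r) := by
      rw [mem_ball_zero_iff] at hx ⊢
      linarith [norm_sub_le x y]
    rw [indicator_of_mem hsub, norm_smul]
    gcongr
    exact hgC y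

variable [InnerProductSpace ℝ V] [FiniteDimensional ℝ V] [MeasurableSpace V] [BorelSpace V]

theorem integrable_indicator_norm_comp_sub (hK : LocallyIntegrable K) (x : V) (r : ℝ) :
    Integrable fun y ↦ (ball 0 r).indicator (fun z ↦ ‖K z‖) (x - y) :=
  (IntegrableOn.integrable_indicator ((hK.integrableOn_isCompact
    (isCompact_closedBall 0 r)).mono_set ball_subset_closedBall).norm
    measurableSet_ball).comp_sub_left x

variable [NormedSpace ℝ F]

theorem integrable_smul_comp_sub (hg : AEStronglyMeasurable g) (hgC : ∀ y, ‖g y‖ ≤ C)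
    (hgR : Function.support g ⊆ ball 0 R) (hK : LocallyIntegrable K) (x : V) :
    Integrable fun y ↦ g y • K (x - y) := by
  refine ((integrable_indicator_norm_comp_sub hK x (R + (‖x‖ + 1))).const_mul C).mono' ?_
    (.of_forall (norm_smul_comp_sub_le_indicator hgC hgR K (by simp)))
  exact hg.smul (hK.aestronglyMeasurable.comp_measurePreserving
    (Measure.measurePreserving_sub_left volume x))

theorem norm_integral_smul_comp_sub_le (hgC : ∀ y, ‖g y‖ ≤ C) (hgR : Function.support g ⊆ ball 0 R)
    (hK : LocallyIntegrable K) (hx : x ∈ ball 0 r) :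
    ‖∫ y, g y • K (x - y)‖ ≤ C * ∫ z in ball 0 (R + r), ‖K z‖ := by
  refine (norm_integral_le_of_norm_le
    ((integrable_indicator_norm_comp_sub hK x (R + r)).const_mul C)
    (.of_forall (norm_smul_comp_sub_le_indicator hgC hgR K hx))).trans_eq ?_
  rw [integral_const_mul,
    integral_sub_left_eq_self ((ball (0 : V) (R + r)).indicator fun z ↦ ‖K z‖) volume x,
    integral_indicator measurableSet_ball]

theorem tendstoUniformlyOn_integral_smul_comp_sub (hg : AEStronglyMeasurable g)
    (hgC : ∀ y, ‖g y‖ ≤ C) (hgR : Function.support g ⊆ ball 0 R) {ι : Type*} {l : Filter ι}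
    {Kι : ι → V → F} (hKι : ∀ i, LocallyIntegrable (Kι i)) (hK : LocallyIntegrable K)
    (hlim : ∀ r, Tendsto (fun i ↦ ∫ z in ball 0 r, ‖Kι i z - K z‖) l (𝓝 0)) (r : ℝ) :
    TendstoUniformlyOn (fun i x ↦ ∫ y, g y • Kι i (x - y)) (fun x ↦ ∫ y, g y • K (x - y)) l
      (ball 0 r) := by
  rw [Metric.tendstoUniformlyOn_iff]
  intro ε hε
  have hsmall : ∀ᶠ i in l, C * ∫ z in ball 0 (R + r), ‖Kι i z - K z‖ < ε := by
    simpa using ((hlim (R + r)).const_mul C).eventually_lt_const (by simpa using hε)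
  filter_upwards [hsmall] with i hi x hx
  rw [dist_comm, dist_eq_norm, ← integral_sub (integrable_smul_comp_sub hg hgC hgR (hKι i) x)
    (integrable_smul_comp_sub hg hgC hgR hK x)]
  simp only [← smul_sub]
  exact (norm_integral_smul_comp_sub_le hgC hgR ((hKι i).sub hK) hx).trans_lt hi

theorem exists_integrable_forall_norm_smul_comp_sub_le (hgC : ∀ y, ‖g y‖ ≤ C)
    (hgR : Function.support g ⊆ ball 0 R) (hK : Continuous K) (r : ℝ) :
    ∃ b : V → ℝ, Integrable b ∧ ∀ x ∈ ball 0 r, ∀ y, ‖g y • K (x - y)‖ ≤ b y := by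
  obtain ⟨B, hB⟩ := (isCompact_closedBall (0 : V) (R + r)).exists_bound_of_continuousOn
    hK.continuousOn
  refine ⟨(ball 0 R).indicator fun _ ↦ C * B,
    (integrableOn_const measure_ball_lt_top.ne).integrable_indicator measurableSet_ball,
    fun x hx y ↦ ?_⟩
  by_cases hy : y ∈ ball (0 : V) R
  · rw [indicator_of_mem hy, norm_smul]
    have hsub : x - y ∈ closedBall (0 : V) (R + r) := by
      rw [mem_ball_zero_iff] at hx hy
      rw [mem_closedBall_zero_iff]
      linarith [norm_sub_le x y]
    exact mul_le_mul (hgC y) (hB _ hsub) (norm_nonneg _) ((norm_nonneg _).trans (hgC y))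
  · have hgy : g y = 0 := by
      by_contra h
      exact hy (hgR h)
    simp [hgy, indicator_of_notMem hy]

theorem continuous_integral_smul_comp_sub (hg : AEStronglyMeasurable g) (hgC : ∀ y, ‖g y‖ ≤ C)
    (hgR : Function.support g ⊆ ball 0 R) (hK : Continuous K) :
    Continuous fun x ↦ ∫ y, g y • K (x - y) := by
  refine continuous_iff_continuousAt.2 fun x ↦ ?_
  obtain ⟨b, hb, hle⟩ := exists_integrable_forall_norm_smul_comp_sub_le hgC hgR hK (‖x‖ + 1)
  refine continuousAt_of_dominated ?_ ?_ hb (.of_forall fun y ↦ by fun_prop)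
  · exact .of_forall fun x' ↦ hg.smul (by fun_prop : Continuous _).aestronglyMeasurable
  · filter_upwards [isOpen_ball.mem_nhds (show x ∈ ball 0 (‖x‖ + 1) by simp)] with x' hx'
    exact .of_forall (hle x' hx')

variable {K' : V → V →L[ℝ] F}

theorem hasFDerivAt_integral_smul_comp_sub (hg : AEStronglyMeasurable g) (hgC : ∀ y, ‖g y‖ ≤ C)
    (hgR : Function.support g ⊆ ball 0 R) (hK : ∀ z, HasFDerivAt K (K' z) z) (hK' : Continuous K')
    (x : V) : HasFDerivAt (fun x ↦ ∫ y, g y • K (x - y)) (∫ y, g y • K' (x - y)) x := by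
  have hKcont : Continuous K := continuous_iff_continuousAt.2 fun z ↦ (hK z).continuousAt
  obtain ⟨b, hb, hle⟩ := exists_integrable_forall_norm_smul_comp_sub_le hgC hgR hK' (‖x‖ + 1)
  refine hasFDerivAt_integral_of_dominated_of_fderiv_le (F := fun x y ↦ g y • K (x - y))
    (F' := fun x y ↦ g y • K' (x - y))
    (isOpen_ball.mem_nhds (show x ∈ ball 0 (‖x‖ + 1) by simp)) ?_
    (integrable_smul_comp_sub hg hgC hgR hKcont.locallyIntegrable x) ?_
    (.of_forall fun y x' hx' ↦ hle x' hx' y) hb (.of_forall fun y x' _ ↦ ?_)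
  · exact .of_forall fun x' ↦ hg.smul (by fun_prop : Continuous _).aestronglyMeasurable
  · exact (integrable_smul_comp_sub hg hgC hgR hK'.locallyIntegrable x).aestronglyMeasurable
  · exact (HasFDerivAt.comp x' (hK _) ((hasFDerivAt_id x').sub_const y)).const_smul (g y)

theorem hasFDerivAt_integral_smul_comp_sub_of_tendsto (hg : AEStronglyMeasurable g)
    (hgC : ∀ y, ‖g y‖ ≤ C) (hgR : Function.support g ⊆ ball 0 R) {ι : Type*} {l : Filter ι}
    [l.NeBot] {Kι : ι → V → F} {Kι' : ι → V → V →L[ℝ] F}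
    (hderiv : ∀ i z, HasFDerivAt (Kι i) (Kι' i z) z) (hcont : ∀ i, Continuous (Kι' i))
    (hK : LocallyIntegrable K) (hK' : LocallyIntegrable K')
    (hlim : ∀ r, Tendsto (fun i ↦ ∫ z in ball 0 r, ‖Kι i z - K z‖) l (𝓝 0))
    (hlim' : ∀ r, Tendsto (fun i ↦ ∫ z in ball 0 r, ‖Kι' i z - K' z‖) l (𝓝 0)) (x : V) :
    HasFDerivAt (fun x ↦ ∫ y, g y • K (x - y)) (∫ y, g y • K' (x - y)) x ∧
      ContinuousAt (fun x ↦ ∫ y, g y • K' (x - y)) x := by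
  have hx : x ∈ ball 0 (‖x‖ + 1) := by simp
  have hKι (i : ι) : Continuous (Kι i) :=
    continuous_iff_continuousAt.2 fun z ↦ (hderiv i z).continuousAt
  have hunif' := tendstoUniformlyOn_integral_smul_comp_sub hg hgC hgR
    (fun i ↦ (hcont i).locallyIntegrable) hK' hlim' (‖x‖ + 1)
  refine ⟨hasFDerivAt_of_tendstoUniformlyOn isOpen_ball hunif'
    (fun i x' _ ↦ hasFDerivAt_integral_smul_comp_sub hg hgC hgR (hderiv i) (hcont i) x')
    (fun x' hx' ↦ (tendstoUniformlyOn_integral_smul_comp_sub hg hgC hgR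
      (fun i ↦ (hKι i).locallyIntegrable) hK hlim (‖x‖ + 1)).tendsto_at hx') hx, ?_⟩
  exact (hunif'.continuousOn (.of_forall fun i ↦
    (continuous_integral_smul_comp_sub hg hgC hgR (hcont i)).continuousOn)).continuousAt
    (isOpen_ball.mem_nhds hx)

end Convolution

section RieszKernel

variable {V : Type*} [NormedAddCommGroup V] {ε γ r : ℝ} {z : V}

/-- The regularised Riesz kernel `(‖z‖² + ε)^γ`; for `ε = 0` it is the Riesz kernel `‖z‖^(2γ)`,
with the junk value `0` at the origin when `γ < 0`. -/
noncomputable def rieszKernel (ε γ : ℝ) (z : V) : ℝ := (‖z‖ ^ 2 + ε) ^ γ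

theorem rieszKernel_nonneg (hε : 0 ≤ ε) (γ : ℝ) (z : V) : 0 ≤ rieszKernel ε γ z := by
  unfold rieszKernel
  positivity

theorem rieszKernel_zero_eq (γ : ℝ) (z : V) : rieszKernel 0 γ z = ‖z‖ ^ (2 * γ) := by
  rw [rieszKernel, add_zero, rpow_mul (norm_nonneg z), rpow_two]

theorem rieszKernel_le_norm_rpow (hε : 0 ≤ ε) (hγ : γ ≤ 0) (hz : z ≠ 0) :
    rieszKernel ε γ z ≤ ‖z‖ ^ (2 * γ) := by
  rw [← rieszKernel_zero_eq]
  exact rpow_le_rpow_of_nonpos (by positivity) (by simpa) hγ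

theorem norm_rpow_sub_le_mul_rieszKernel (hr : 0 < r) (hz : r ≤ ‖z‖) {δ : ℝ} (hδ : 0 ≤ δ) (γ : ℝ) :
    ‖z‖ ^ (2 * γ - δ) ≤ r ^ (-δ) * rieszKernel 0 γ z := by
  have hz' : 0 < ‖z‖ := hr.trans_le hz
  rw [rieszKernel_zero_eq, sub_eq_neg_add, rpow_add hz']
  gcongr ?_ * _
  exact rpow_le_rpow_of_nonpos hr hz (neg_nonpos.2 hδ)

theorem rieszKernel_sub_le_mul {x₀ x y : V} (hγ : γ ≤ 0) (hr : 0 < r) (hx : x ∈ ball x₀ r)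
    (hy : y ∉ ball x₀ (2 * r)) :
    rieszKernel 0 γ (x - y) ≤ 2 ^ (-(2 * γ)) * rieszKernel 0 γ (x₀ - y) := by
  rw [mem_ball_iff_norm] at hx hy
  rw [norm_sub_rev] at hx
  have hfar : 2 * r ≤ ‖x₀ - y‖ := by
    rw [norm_sub_rev]
    exact not_lt.1 hy
  have hhalf : 2⁻¹ * ‖x₀ - y‖ ≤ ‖x - y‖ := by
    linarith [norm_sub_le_norm_sub_add_norm_sub x₀ x y]
  rw [rieszKernel_zero_eq, rieszKernel_zero_eq]
  calc ‖x - y‖ ^ (2 * γ) ≤ (2⁻¹ * ‖x₀ - y‖) ^ (2 * γ) :=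
        rpow_le_rpow_of_nonpos (by linarith) hhalf (by linarith)
    _ = 2 ^ (-(2 * γ)) * ‖x₀ - y‖ ^ (2 * γ) := by
        rw [mul_rpow (by norm_num) (norm_nonneg _), inv_rpow zero_le_two, rpow_neg zero_le_two]

variable [InnerProductSpace ℝ V]

/-- The derivative of `rieszKernel ε γ`. -/
noncomputable def rieszKernelFDeriv (ε γ : ℝ) (z : V) : V →L[ℝ] ℝ :=
  (2 * γ * rieszKernel ε (γ - 1) z) • innerSL ℝ z

/-- The derivative of `z ↦ rieszKernelFDeriv ε γ z w`, that is, the second derivative of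
`rieszKernel ε γ` with one slot filled by `w`. -/
noncomputable def rieszKernelHessian (ε γ : ℝ) (w z : V) : V →L[ℝ] ℝ :=
  (2 * γ * rieszKernel ε (γ - 1) z) • innerSL ℝ w +
    (2 * γ * ⟪w, z⟫) • rieszKernelFDeriv ε (γ - 1) z

theorem hasFDerivAt_rieszKernel (h : 0 < ‖z‖ ^ 2 + ε) :
    HasFDerivAt (rieszKernel ε γ) (rieszKernelFDeriv ε γ z) z := by
  refine ((((hasStrictFDerivAt_norm_sq z).hasFDerivAt.add_const ε).rpow_const
    (.inl h.ne'))).congr_fderiv ?_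
  rw [rieszKernelFDeriv, rieszKernel, ← Nat.cast_smul_eq_nsmul ℝ, smul_smul]
  exact congrArg (· • innerSL ℝ z) (by push_cast; ring)

theorem hasFDerivAt_rieszKernelFDeriv_apply (h : 0 < ‖z‖ ^ 2 + ε) (w : V) :
    HasFDerivAt (fun z ↦ rieszKernelFDeriv ε γ z w) (rieszKernelHessian ε γ w z) z := by
  refine ((((hasFDerivAt_rieszKernel (γ := γ - 1) h).const_mul (2 * γ)).mul
    (innerSL ℝ w).hasFDerivAt).congr_fderiv ?_).congr_of_eventuallyEq (.of_forall fun y ↦ ?_)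
  · simp only [rieszKernelHessian, innerSL_apply_apply, smul_smul]
    rw [mul_comm ⟪w, z⟫]
  · simp [rieszKernelFDeriv, real_inner_comm]

theorem continuousAt_rieszKernel (h : 0 < ‖z‖ ^ 2 + ε) : ContinuousAt (rieszKernel ε γ) z :=
  (hasFDerivAt_rieszKernel h).continuousAt

theorem continuousAt_rieszKernelFDeriv (h : 0 < ‖z‖ ^ 2 + ε) :
    ContinuousAt (rieszKernelFDeriv ε γ) z :=
  ((continuousAt_rieszKernel h).const_mul (2 * γ)).smul (innerSL ℝ).continuous.continuousAt

theorem continuousAt_rieszKernelHessian (h : 0 < ‖z‖ ^ 2 + ε) (w : V) :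
    ContinuousAt (rieszKernelHessian ε γ w) z :=
  (((continuousAt_rieszKernel h).const_mul (2 * γ)).smul continuousAt_const).add
    ((innerSL ℝ w).continuous.continuousAt.const_mul (2 * γ) |>.smul
      (continuousAt_rieszKernelFDeriv h))

theorem norm_rieszKernelFDeriv_le (hε : 0 ≤ ε) (hγ : γ ≤ 1) (hz : z ≠ 0) :
    ‖rieszKernelFDeriv ε γ z‖ ≤ 2 * |γ| * ‖z‖ ^ (2 * γ - 1) := by
  have hz' : 0 < ‖z‖ := norm_pos_iff.2 hz
  have hpow : ‖z‖ ^ (2 * (γ - 1)) * ‖z‖ = ‖z‖ ^ (2 * γ - 1) := by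
    rw [← rpow_add_one hz'.ne']
    ring_nf
  rw [rieszKernelFDeriv, norm_smul, innerSL_apply_norm, norm_mul, norm_mul, Real.norm_eq_abs γ,
    Real.norm_of_nonneg zero_le_two, Real.norm_of_nonneg (rieszKernel_nonneg hε _ z), ← hpow,
    mul_assoc _ _ ‖z‖]
  gcongr
  exact rieszKernel_le_norm_rpow hε (by linarith) hz

theorem norm_rieszKernelHessian_le (hε : 0 ≤ ε) (hγ : γ ≤ 1) (w : V) (hz : z ≠ 0) :
    ‖rieszKernelHessian ε γ w z‖ ≤
      2 * |γ| * (1 + 2 * |γ - 1|) * ‖w‖ * ‖z‖ ^ (2 * γ - 2) := by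
  have hz' : 0 < ‖z‖ := norm_pos_iff.2 hz
  have hpow : ‖z‖ * ‖z‖ ^ (2 * (γ - 1) - 1) = ‖z‖ ^ (2 * γ - 2) := by
    rw [mul_comm, ← rpow_add_one hz'.ne']
    ring_nf
  have hfst : ‖(2 * γ * rieszKernel ε (γ - 1) z) • innerSL ℝ w‖ ≤
      2 * |γ| * ‖z‖ ^ (2 * γ - 2) * ‖w‖ := by
    rw [norm_smul, innerSL_apply_norm, norm_mul, norm_mul, Real.norm_eq_abs γ,
      Real.norm_of_nonneg zero_le_two, Real.norm_of_nonneg (rieszKernel_nonneg hε _ z)]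
    gcongr
    exact (rieszKernel_le_norm_rpow hε (by linarith) hz).trans_eq (by ring_nf)
  have hsnd : ‖(2 * γ * ⟪w, z⟫) • rieszKernelFDeriv ε (γ - 1) z‖ ≤
      2 * |γ| * (‖w‖ * ‖z‖) * (2 * |γ - 1| * ‖z‖ ^ (2 * (γ - 1) - 1)) := by
    rw [norm_smul, norm_mul, norm_mul, Real.norm_eq_abs γ, Real.norm_of_nonneg zero_le_two]
    gcongr
    · exact abs_real_inner_le_norm w z
    · exact norm_rieszKernelFDeriv_le hε (by linarith) hz
  calc ‖rieszKernelHessian ε γ w z‖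
      ≤ 2 * |γ| * ‖z‖ ^ (2 * γ - 2) * ‖w‖ +
          2 * |γ| * (‖w‖ * ‖z‖) * (2 * |γ - 1| * ‖z‖ ^ (2 * (γ - 1) - 1)) :=
        norm_add_le_of_le hfst hsnd
    _ = 2 * |γ| * (1 + 2 * |γ - 1|) * ‖w‖ * ‖z‖ ^ (2 * γ - 2) := by
        rw [← hpow]
        ring

theorem sum_rieszKernelHessian_apply {ι : Type*} [Fintype ι] (b : OrthonormalBasis ι ℝ V)
    (h : 0 < ‖z‖ ^ 2 + ε) (hγ : 2 * (γ - 1) = -finrank ℝ V) :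
    ∑ i, rieszKernelHessian ε γ (b i) z (b i) =
      2 * γ * finrank ℝ V * ε * rieszKernel ε (γ - 2) z := by
  have hpow : rieszKernel ε (γ - 1) z = (‖z‖ ^ 2 + ε) * rieszKernel ε (γ - 2) z := by
    rw [rieszKernel, rieszKernel, show γ - 1 = 1 + (γ - 2) by ring, rpow_add h, rpow_one]
  have hterm (i : ι) : rieszKernelHessian ε γ (b i) z (b i) = 2 * γ * rieszKernel ε (γ - 1) z +
      4 * γ * (γ - 1) * rieszKernel ε (γ - 2) z * ⟪b i, z⟫ ^ 2 := by
    simp only [rieszKernelHessian, rieszKernelFDeriv, add_apply, smul_apply,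
      innerSL_apply_apply, smul_eq_mul, real_inner_self_eq_norm_sq,
      b.norm_eq_one, real_inner_comm (b i) z]
    rw [show γ - 1 - 1 = γ - 2 by ring]
    ring
  simp only [hterm, Finset.sum_add_distrib, ← Finset.mul_sum, b.sum_sq_inner_right,
    Finset.sum_const, Finset.card_univ, nsmul_eq_mul, ← finrank_eq_card_basis b.toBasis, hpow]
  linear_combination 2 * γ * ‖z‖ ^ 2 * rieszKernel ε (γ - 2) z * hγ

end RieszKernel

section SecondDerivatives

variable {V : Type*} [NormedAddCommGroup V] [InnerProductSpace ℝ V] [FiniteDimensional ℝ V]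
  {u : V → ℝ} {u' : V → V →L[ℝ] ℝ}

theorem contDiffOn_two_of_hasFDerivAt_apply {U : Set V} (hU : IsOpen U)
    {u'' : V → V → V →L[ℝ] ℝ} (h₁ : ∀ x ∈ U, HasFDerivAt u (u' x) x)
    (h₂ : ∀ w, ∀ x ∈ U, HasFDerivAt (fun z ↦ u' z w) (u'' w x) x ∧ ContinuousAt (u'' w) x) :
    ContDiffOn ℝ 2 u U := by
  rw [show (2 : WithTop ℕ∞) = 1 + 1 from one_add_one_eq_two.symm,
    contDiffOn_succ_iff_hasFDerivWithinAt_of_uniqueDiffOn hU.uniqueDiffOn]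
  refine ⟨by simp, u', contDiffOn_clm_apply.2 fun w x hx ↦ ?_,
    fun x hx ↦ (h₁ x hx).hasFDerivWithinAt⟩
  exact (contDiffAt_one_iff.2 ⟨u'' w, U, hU.mem_nhds hx,
    fun y hy ↦ (h₂ w y hy).2.continuousWithinAt, fun y hy ↦ (h₂ w y hy).1⟩).contDiffWithinAt

theorem laplacian_eq_sum_of_hasFDerivAt_apply {x : V} {ι : Type*} [Fintype ι]
    (b : OrthonormalBasis ι ℝ V) {u'' : V → V →L[ℝ] ℝ} (hu : ContDiffAt ℝ 2 u x)
    (h₁ : ∀ᶠ y in 𝓝 x, HasFDerivAt u (u' y) y)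
    (h₂ : ∀ w, HasFDerivAt (fun z ↦ u' z w) (u'' w) x) : Δ u x = ∑ i, u'' (b i) (b i) := by
  rw [laplacian_eq_sum_fderiv b hu]
  refine Finset.sum_congr rfl fun i _ ↦ ?_
  have heval := (hasFDerivAt_fderiv_of_contDiffAt_two hu).clm_apply (hasFDerivAt_const (b i) x)
  have hfderiv : (fun y ↦ u' y (b i)) =ᶠ[𝓝 x] fun y ↦ fderiv ℝ u y (b i) :=
    h₁.mono fun y hy ↦ by simp only [hy.fderiv]
  rw [(h₂ (b i)).unique (heval.congr_of_eventuallyEq hfderiv)]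
  simp

end SecondDerivatives

section RieszKernelIntegrability

variable {V : Type*} [NormedAddCommGroup V] [MeasurableSpace V] [BorelSpace V] {γ : ℝ} {ε : ℕ → ℝ}

@[fun_prop]
theorem measurable_rieszKernel (ε γ : ℝ) : Measurable (rieszKernel (V := V) ε γ) := by
  unfold rieszKernel
  fun_prop

variable [InnerProductSpace ℝ V] [FiniteDimensional ℝ V]

theorem tendsto_setIntegral_norm_sub_of_norm_le_rpow {F : Type*} [NormedAddCommGroup F]
    {K : V → F} {Kι : ℕ → V → F} {B σ : ℝ} (hV : 1 ≤ finrank ℝ V) (hσ : σ < finrank ℝ V)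
    (hKι : ∀ i, AEStronglyMeasurable (Kι i)) (hK : AEStronglyMeasurable K)
    (hle : ∀ i, ∀ z ≠ 0, ‖Kι i z‖ ≤ B * ‖z‖ ^ (-σ))
    (hlim : ∀ z ≠ 0, Tendsto (fun i ↦ Kι i z) atTop (𝓝 (K z))) (r : ℝ) :
    Tendsto (fun i ↦ ∫ z in ball 0 r, ‖Kι i z - K z‖) atTop (𝓝 0) := by
  have : Nontrivial V := Module.nontrivial_of_finrank_pos (R := ℝ) hV
  have hne : ∀ᵐ z ∂(volume : Measure V).restrict (ball 0 r), z ≠ 0 :=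
    ae_restrict_of_ae (Measure.ae_ne volume 0)
  have hint : IntegrableOn (fun z : V ↦ (B + B) * ‖z‖ ^ (-σ)) (ball 0 r) := by
    refine integrableOn_ball_of_norm_le_rpow (C := |B + B|) hV hσ (.of_forall fun z ↦ ?_)
      (by fun_prop : Measurable _).aestronglyMeasurable
    rw [norm_mul, Real.norm_eq_abs, Real.norm_of_nonneg (by positivity)]
  have hconv := tendsto_integral_of_dominated_convergence (f := fun _ ↦ (0 : ℝ))
    (F := fun i z ↦ ‖Kι i z - K z‖) _ (fun i ↦ ((hKι i).sub hK).norm.restrict) hint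
    (fun i ↦ ?_) (hne.mono fun z hz ↦ ?_)
  · simpa using hconv
  · filter_upwards [hne] with z hz
    have hKz : ‖K z‖ ≤ B * ‖z‖ ^ (-σ) :=
      le_of_tendsto (hlim z hz).norm (.of_forall fun i ↦ hle i z hz)
    rw [norm_norm, add_mul]
    exact (norm_sub_le _ _).trans (add_le_add (hle i z hz) hKz)
  · simpa using ((hlim z hz).sub_const (K z)).norm

theorem aestronglyMeasurable_rieszKernelFDeriv (ε γ : ℝ) :
    AEStronglyMeasurable (rieszKernelFDeriv (V := V) ε γ) :=
  ((measurable_rieszKernel ε (γ - 1)).const_mul (2 * γ)).aestronglyMeasurable.smul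
    (innerSL ℝ).continuous.aestronglyMeasurable

theorem tendsto_setIntegral_norm_rieszKernel_sub (hγ : γ ≤ 0) (hV : 1 - 2 * γ < finrank ℝ V)
    (hε : ∀ j, 0 < ε j) (hlim : Tendsto ε atTop (𝓝 0)) (r : ℝ) :
    Tendsto (fun j ↦ ∫ z : V in ball 0 r, ‖rieszKernel (ε j) γ z - rieszKernel 0 γ z‖) atTop
      (𝓝 0) := by
  refine tendsto_setIntegral_norm_sub_of_norm_le_rpow (B := 1) (σ := -(2 * γ)) ?_ (by linarith)
    (fun j ↦ (measurable_rieszKernel _ _).aestronglyMeasurable)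
    (measurable_rieszKernel _ _).aestronglyMeasurable (fun j z hz ↦ ?_) (fun z hz ↦ ?_) r
  · exact_mod_cast (by linarith : (1 : ℝ) < finrank ℝ V).le
  · rw [Real.norm_of_nonneg (rieszKernel_nonneg (hε j).le γ z), one_mul, neg_neg]
    exact rieszKernel_le_norm_rpow (hε j).le hγ hz
  · exact (tendsto_const_nhds.add hlim).rpow_const (.inl (by simpa using hz))

theorem tendsto_setIntegral_norm_rieszKernelFDeriv_sub (hγ : γ ≤ 0)
    (hV : 1 - 2 * γ < finrank ℝ V) (hε : ∀ j, 0 < ε j) (hlim : Tendsto ε atTop (𝓝 0)) (r : ℝ) :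
    Tendsto (fun j ↦ ∫ z : V in ball 0 r,
      ‖rieszKernelFDeriv (ε j) γ z - rieszKernelFDeriv 0 γ z‖) atTop (𝓝 0) := by
  refine tendsto_setIntegral_norm_sub_of_norm_le_rpow (B := 2 * |γ|) (σ := 1 - 2 * γ) ?_ hV
    (fun j ↦ aestronglyMeasurable_rieszKernelFDeriv _ _)
    (aestronglyMeasurable_rieszKernelFDeriv _ _) (fun j z hz ↦ ?_) (fun z hz ↦ ?_) r
  · exact_mod_cast (by linarith : (1 : ℝ) < finrank ℝ V).le
  · rw [neg_sub]
    exact norm_rieszKernelFDeriv_le (hε j).le (by linarith) hz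
  · exact (((tendsto_const_nhds.add hlim).rpow_const (.inl (by simpa using hz))).const_mul
      _).smul_const _

theorem locallyIntegrable_rieszKernel (hγ : γ ≤ 0) (hV : 1 - 2 * γ < finrank ℝ V) :
    LocallyIntegrable (rieszKernel (V := V) 0 γ) := by
  refine locallyIntegrable_of_norm_le_rpow (C := 1) (α := -(2 * γ)) ?_ (by linarith)
    (.of_forall fun z ↦ ?_) (measurable_rieszKernel 0 γ).aestronglyMeasurable
  · exact_mod_cast (by linarith : (1 : ℝ) < finrank ℝ V).le
  · rw [Real.norm_of_nonneg (rieszKernel_nonneg le_rfl γ z), rieszKernel_zero_eq, one_mul, neg_neg]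

theorem locallyIntegrable_rieszKernelFDeriv (hγ : γ ≤ 0) (hV : 1 - 2 * γ < finrank ℝ V) :
    LocallyIntegrable (rieszKernelFDeriv (V := V) 0 γ) := by
  have hdim : 1 ≤ finrank ℝ V := by exact_mod_cast (by linarith : (1 : ℝ) < finrank ℝ V).le
  have : Nontrivial V := Module.nontrivial_of_finrank_pos (R := ℝ) hdim
  refine locallyIntegrable_of_norm_le_rpow (C := 2 * |γ|) (α := 1 - 2 * γ) hdim hV ?_
    (aestronglyMeasurable_rieszKernelFDeriv 0 γ)
  filter_upwards [Measure.ae_ne volume (0 : V)] with z hz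
  rw [neg_sub]
  exact norm_rieszKernelFDeriv_le le_rfl (by linarith) hz

end RieszKernelIntegrability

section CompactlySupportedDensity

variable {V : Type*} [NormedAddCommGroup V] {g : V → ℝ}

theorem exists_bound_and_support_subset_ball (hg : Continuous g) (hc : HasCompactSupport g) :
    ∃ C R, (∀ y, ‖g y‖ ≤ C) ∧ Function.support g ⊆ ball 0 R := by
  obtain ⟨C, hC⟩ := hc.exists_bound_of_continuous hg
  obtain ⟨R, hR⟩ := hc.isBounded.subset_ball 0
  exact ⟨C, R, hC, (subset_tsupport g).trans hR⟩

variable [InnerProductSpace ℝ V] [FiniteDimensional ℝ V] [MeasurableSpace V] [BorelSpace V] {γ : ℝ}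

theorem integral_fderiv_mul_comp_sub (hg : ContDiff ℝ 1 g) (hc : HasCompactSupport g)
    {K : V → ℝ} {K' : V → V →L[ℝ] ℝ} (hK : ∀ z, HasFDerivAt K (K' z) z) (hK' : Continuous K')
    (x w : V) : ∫ y, fderiv ℝ g y w * K (x - y) = ∫ y, g y * K' (x - y) w := by
  have hKcont : Continuous K := continuous_iff_continuousAt.2 fun z ↦ (hK z).continuousAt
  have := hg.continuous
  have := hg.continuous_fderiv one_ne_zero
  have hderiv (y : V) : HasFDerivAt (fun y ↦ K (x - y)) (-K' (x - y)) y := by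
    refine ((hK (x - y)).comp y ((hasFDerivAt_id y).const_sub x)).congr_fderiv ?_
    ext
    simp
  have hfderiv (y : V) : fderiv ℝ (fun y ↦ K (x - y)) y w = -K' (x - y) w := by
    rw [(hderiv y).fderiv, neg_apply]
  have hparts := integral_mul_fderiv_eq_neg_fderiv_mul_of_integrable (μ := volume) (v := w)
    (f := fun y ↦ K (x - y)) (g := g) ?_ ?_ ?_ (fun y _ ↦ (hderiv y).differentiableAt)
    fun y _ ↦ (hg.differentiable one_ne_zero).differentiableAt
  · simpa only [hfderiv, neg_mul, integral_neg, neg_neg, mul_comm (K' _ _),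
      mul_comm (K _)] using hparts
  · simp only [hfderiv]
    exact Continuous.integrable_of_hasCompactSupport (by fun_prop) hc.mul_left
  · exact Continuous.integrable_of_hasCompactSupport (by fun_prop)
      (hc.fderiv_apply ℝ w).mul_left
  · exact Continuous.integrable_of_hasCompactSupport (by fun_prop) hc.mul_left

end CompactlySupportedDensity

section NewtonPotential

/-- The exponent `1 - dim V / 2` for which the Riesz kernel `‖z‖^(2 - dim V)` is the Newton kernel
of `V`. -/
noncomputable def newtonExponent (V : Type*) [NormedAddCommGroup V] [NormedSpace ℝ V] : ℝ :=
  1 - finrank ℝ V / 2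

variable {V : Type*} [NormedAddCommGroup V] [InnerProductSpace ℝ V]

theorem two_mul_newtonExponent_sub_one : 2 * (newtonExponent V - 1) = -finrank ℝ V := by
  unfold newtonExponent
  ring

theorem one_sub_two_mul_newtonExponent_lt : 1 - 2 * newtonExponent V < finrank ℝ V := by
  linarith [two_mul_newtonExponent_sub_one (V := V)]

theorem newtonExponent_neg (hV : 3 ≤ finrank ℝ V) : newtonExponent V < 0 := by
  have : (3 : ℝ) ≤ finrank ℝ V := by exact_mod_cast hV
  linarith [two_mul_newtonExponent_sub_one (V := V)]

theorem pow_finrank_mul_rieszKernel_one_smul {c : ℝ} (hc : 0 < c) (z : V) :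
    c ^ finrank ℝ V * rieszKernel 1 (newtonExponent V - 2) (c • z) =
      (c ^ 2)⁻¹ * rieszKernel (c ^ 2)⁻¹ (newtonExponent V - 2) z := by
  have hsq : ‖c • z‖ ^ 2 + 1 = c ^ (2 : ℝ) * (‖z‖ ^ 2 + (c ^ 2)⁻¹) := by
    rw [norm_smul, mul_pow, Real.norm_of_nonneg hc.le, rpow_two]
    field_simp
  have hexp : c ^ finrank ℝ V * c ^ (2 * (newtonExponent V - 2)) = (c ^ 2)⁻¹ := by
    rw [← rpow_natCast, ← rpow_add hc, ← rpow_two, ← rpow_neg hc.le]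
    congr 1
    linarith [two_mul_newtonExponent_sub_one (V := V)]
  rw [rieszKernel, hsq, mul_rpow (by positivity) (by positivity), ← rpow_mul hc.le, ← mul_assoc,
    hexp, rieszKernel]

theorem tendsto_norm_pow_mul_rieszKernel_one :
    Tendsto (fun z : V ↦ ‖z‖ ^ finrank ℝ V * rieszKernel 1 (newtonExponent V - 2) z)
      (Bornology.cobounded V) (𝓝 0) := by
  refine squeeze_zero' (g := fun z ↦ ‖z‖ ^ (-2 : ℝ)) (.of_forall fun z ↦ ?_) ?_
    ((tendsto_rpow_neg_atTop two_pos).comp tendsto_norm_cobounded_atTop)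
  · exact mul_nonneg (by positivity) (rieszKernel_nonneg zero_le_one _ z)
  filter_upwards [Bornology.eventually_ne_cobounded 0] with z hz
  have hz' : 0 < ‖z‖ := norm_pos_iff.2 hz
  have hexp : (-2 : ℝ) = finrank ℝ V + 2 * (newtonExponent V - 2) := by
    linarith [two_mul_newtonExponent_sub_one (V := V)]
  rw [hexp, rpow_add hz', rpow_natCast]
  gcongr
  refine rieszKernel_le_norm_rpow zero_le_one ?_ hz
  linarith [two_mul_newtonExponent_sub_one (V := V), (finrank ℝ V).cast_nonneg (α := ℝ)]

variable [FiniteDimensional ℝ V] [MeasurableSpace V] [BorelSpace V] {g : V → ℝ} {x : V}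

/-- The Newton potential of the density `g`, without the normalising constant: it solves
`-Δ u = newtonConst V * g`. -/
noncomputable def newtonPotential (g : V → ℝ) (x : V) : ℝ :=
  ∫ y, g y • rieszKernel 0 (newtonExponent V) (x - y)

variable (V) in
/-- The constant in `-Δ (newtonPotential g) = newtonConst V * g`. -/
noncomputable def newtonConst : ℝ :=
  -(2 * newtonExponent V * finrank ℝ V * ∫ z : V, rieszKernel 1 (newtonExponent V - 2) z)

theorem integrable_rieszKernel_one :
    Integrable (rieszKernel (V := V) 1 (newtonExponent V - 2)) := by
  refine (integrable_rpow_neg_one_add_norm_sq (lt_add_of_pos_right _ two_pos)).congr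
    (.of_forall fun z ↦ ?_)
  dsimp only [rieszKernel]
  rw [add_comm]
  congr 1
  linarith [two_mul_newtonExponent_sub_one (V := V)]

theorem integral_rieszKernel_one_pos : 0 < ∫ z : V, rieszKernel 1 (newtonExponent V - 2) z := by
  have hpos (z : V) : 0 < rieszKernel 1 (newtonExponent V - 2) z :=
    rpow_pos_of_pos (by positivity) _
  rw [integral_pos_iff_support_of_nonneg (fun z ↦ (hpos z).le) integrable_rieszKernel_one,
    Function.support_eq_univ fun z ↦ (hpos z).ne']
  exact isOpen_univ.measure_pos _ univ_nonempty

theorem newtonConst_pos (hV : 3 ≤ finrank ℝ V) : 0 < newtonConst V := by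
  have hdim : (0 : ℝ) < finrank ℝ V := by exact_mod_cast (by omega : 0 < finrank ℝ V)
  have := mul_pos (mul_pos (neg_pos.2 (newtonExponent_neg hV)) hdim)
    (integral_rieszKernel_one_pos (V := V))
  unfold newtonConst
  linarith

theorem tendsto_integral_mul_rieszKernel_inv_sq (hg : Integrable g) (hx : ContinuousAt g x) :
    Tendsto (fun c : ℝ ↦ ∫ y, g y * ((c ^ 2)⁻¹ *
      rieszKernel (c ^ 2)⁻¹ (newtonExponent V - 2) (x - y))) atTop
      (𝓝 (g x * ∫ z : V, rieszKernel 1 (newtonExponent V - 2) z)) := by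
  set I : ℝ := ∫ z : V, rieszKernel 1 (newtonExponent V - 2) z with hI
  have hIpos : 0 < I := integral_rieszKernel_one_pos
  have hpeak := tendsto_integral_comp_smul_smul_of_integrable'
    (φ := fun z : V ↦ I⁻¹ * rieszKernel 1 (newtonExponent V - 2) z)
    (fun z ↦ mul_nonneg (inv_nonneg.2 hIpos.le) (rieszKernel_nonneg zero_le_one _ z))
    (by rw [integral_const_mul, ← hI, inv_mul_cancel₀ hIpos.ne'])
    (by simpa [mul_left_comm] using tendsto_norm_pow_mul_rieszKernel_one.const_mul I⁻¹) hg hx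
  rw [mul_comm]
  refine (hpeak.const_mul I).congr' ?_
  filter_upwards [eventually_gt_atTop 0] with c hc
  rw [← integral_const_mul]
  refine integral_congr_ae (.of_forall fun y ↦ ?_)
  dsimp only
  rw [← pow_finrank_mul_rieszKernel_one_smul hc, smul_eq_mul]
  field_simp

end NewtonPotential

section NewtonPotentialRegularity

variable {V : Type*} [NormedAddCommGroup V] [InnerProductSpace ℝ V]

theorem continuous_rieszKernelFDeriv {ε : ℝ} (hε : 0 < ε) (γ : ℝ) :
    Continuous (rieszKernelFDeriv (V := V) ε γ) :=
  continuous_iff_continuousAt.2 fun _ ↦ continuousAt_rieszKernelFDeriv (by positivity)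

theorem continuous_rieszKernelHessian {ε : ℝ} (hε : 0 < ε) (γ : ℝ) (w : V) :
    Continuous (rieszKernelHessian (V := V) ε γ w) :=
  continuous_iff_continuousAt.2 fun _ ↦ continuousAt_rieszKernelHessian (by positivity) w

variable [FiniteDimensional ℝ V] [MeasurableSpace V] [BorelSpace V] {g : V → ℝ} {C R : ℝ}

theorem exists_pos_tendsto_integral_mul_rieszKernel (hg : Integrable g) {x : V}
    (hx : ContinuousAt g x) :
    ∃ ε : ℕ → ℝ, (∀ j, 0 < ε j) ∧ Tendsto ε atTop (𝓝 0) ∧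
      Tendsto (fun j ↦ ∫ y, g y * (ε j * rieszKernel (ε j) (newtonExponent V - 2) (x - y))) atTop
        (𝓝 (g x * ∫ z : V, rieszKernel 1 (newtonExponent V - 2) z)) := by
  have hatTop : Tendsto (fun j : ℕ ↦ (j : ℝ) + 1) atTop atTop :=
    tendsto_natCast_atTop_atTop.atTop_add tendsto_const_nhds
  exact ⟨fun j ↦ (((j : ℝ) + 1) ^ 2)⁻¹, fun j ↦ by positivity,
    ((tendsto_pow_atTop two_ne_zero).comp hatTop).inv_tendsto_atTop,
    (tendsto_integral_mul_rieszKernel_inv_sq hg hx).comp hatTop⟩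

theorem hasFDerivAt_newtonPotential (hV : 3 ≤ finrank ℝ V) (hg : AEStronglyMeasurable g)
    (hgC : ∀ y, ‖g y‖ ≤ C) (hgR : Function.support g ⊆ ball 0 R) (x : V) :
    HasFDerivAt (newtonPotential g)
      (∫ y, g y • rieszKernelFDeriv 0 (newtonExponent V) (x - y)) x ∧
      ContinuousAt (fun x ↦ ∫ y, g y • rieszKernelFDeriv 0 (newtonExponent V) (x - y)) x := by
  have hγ : newtonExponent V ≤ 0 := (newtonExponent_neg hV).le
  have hdim := one_sub_two_mul_newtonExponent_lt (V := V)
  have hε (j : ℕ) : (0 : ℝ) < 1 / ((j : ℝ) + 1) := by positivity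
  have hlim := tendsto_one_div_add_atTop_nhds_zero_nat (𝕜 := ℝ)
  exact hasFDerivAt_integral_smul_comp_sub_of_tendsto hg hgC hgR
    (fun j z ↦ hasFDerivAt_rieszKernel (by have := hε j; positivity))
    (fun j ↦ continuous_rieszKernelFDeriv (hε j) _) (locallyIntegrable_rieszKernel hγ hdim)
    (locallyIntegrable_rieszKernelFDeriv hγ hdim)
    (tendsto_setIntegral_norm_rieszKernel_sub hγ hdim hε hlim)
    (tendsto_setIntegral_norm_rieszKernelFDeriv_sub hγ hdim hε hlim) x

theorem tendsto_integral_smul_rieszKernelFDeriv (hV : 3 ≤ finrank ℝ V)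
    (hg : AEStronglyMeasurable g) (hgC : ∀ y, ‖g y‖ ≤ C) (hgR : Function.support g ⊆ ball 0 R)
    {ε : ℕ → ℝ} (hε : ∀ j, 0 < ε j) (hlim : Tendsto ε atTop (𝓝 0)) (x w : V) :
    Tendsto (fun j ↦ ∫ y, g y * rieszKernelFDeriv (ε j) (newtonExponent V) (x - y) w) atTop
      (𝓝 ((∫ y, g y • rieszKernelFDeriv 0 (newtonExponent V) (x - y)) w)) := by
  have hγ : newtonExponent V ≤ 0 := (newtonExponent_neg hV).le
  have hdim := one_sub_two_mul_newtonExponent_lt (V := V)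
  have hcont (j : ℕ) := (continuous_rieszKernelFDeriv (V := V) (hε j)
    (newtonExponent V)).locallyIntegrable (μ := volume)
  have hunif := (tendstoUniformlyOn_integral_smul_comp_sub hg hgC hgR hcont
    (locallyIntegrable_rieszKernelFDeriv hγ hdim)
    (tendsto_setIntegral_norm_rieszKernelFDeriv_sub hγ hdim hε hlim) (‖x‖ + 1)).tendsto_at
    (x := x) (by simp)
  refine ((ContinuousLinearMap.apply ℝ ℝ w).continuous.tendsto _ |>.comp hunif).congr fun j ↦ ?_
  exact ContinuousLinearMap.integral_apply (integrable_smul_comp_sub hg hgC hgR (hcont j) x) w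

theorem tendsto_integral_smul_rieszKernel (hV : 3 ≤ finrank ℝ V)
    (hg : AEStronglyMeasurable g) (hgC : ∀ y, ‖g y‖ ≤ C) (hgR : Function.support g ⊆ ball 0 R)
    {ε : ℕ → ℝ} (hε : ∀ j, 0 < ε j) (hlim : Tendsto ε atTop (𝓝 0)) (x : V) :
    Tendsto (fun j ↦ ∫ y, g y * rieszKernel (ε j) (newtonExponent V) (x - y)) atTop
      (𝓝 (newtonPotential g x)) := by
  have hγ : newtonExponent V ≤ 0 := (newtonExponent_neg hV).le
  have hdim := one_sub_two_mul_newtonExponent_lt (V := V)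
  have hcont (j : ℕ) : LocallyIntegrable (rieszKernel (V := V) (ε j) (newtonExponent V)) :=
    (continuous_iff_continuousAt.2 fun z ↦ continuousAt_rieszKernel
      (by have := hε j; positivity)).locallyIntegrable
  exact (tendstoUniformlyOn_integral_smul_comp_sub hg hgC hgR hcont
    (locallyIntegrable_rieszKernel hγ hdim)
    (tendsto_setIntegral_norm_rieszKernel_sub hγ hdim hε hlim) (‖x‖ + 1)).tendsto_at (by simp)

theorem integral_smul_rieszKernelFDeriv_apply (hV : 3 ≤ finrank ℝ V) (hg : ContDiff ℝ 1 g)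
    (hc : HasCompactSupport g) (x w : V) :
    (∫ y, g y • rieszKernelFDeriv 0 (newtonExponent V) (x - y)) w =
      newtonPotential (fun y ↦ fderiv ℝ g y w) x := by
  have hg' : Continuous fun y ↦ fderiv ℝ g y w := by
    have := hg.continuous_fderiv one_ne_zero
    fun_prop
  obtain ⟨C, R, hC, hR⟩ := exists_bound_and_support_subset_ball hg.continuous hc
  obtain ⟨C', R', hC', hR'⟩ := exists_bound_and_support_subset_ball hg' (hc.fderiv_apply ℝ w)
  have hε (j : ℕ) : (0 : ℝ) < 1 / ((j : ℝ) + 1) := by positivity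
  have hlim := tendsto_one_div_add_atTop_nhds_zero_nat (𝕜 := ℝ)
  refine tendsto_nhds_unique (tendsto_integral_smul_rieszKernelFDeriv hV
    hg.continuous.aestronglyMeasurable hC hR hε hlim x w)
    ((tendsto_integral_smul_rieszKernel hV hg'.aestronglyMeasurable hC' hR' hε hlim x).congr
      fun j ↦ ?_)
  exact integral_fderiv_mul_comp_sub hg hc
    (fun z ↦ hasFDerivAt_rieszKernel (by have := hε j; positivity))
    (continuous_rieszKernelFDeriv (hε j) _) x w

theorem hasFDerivAt_integral_smul_rieszKernelFDeriv_apply (hV : 3 ≤ finrank ℝ V)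
    (hg : ContDiff ℝ 1 g) (hc : HasCompactSupport g) (w x : V) :
    HasFDerivAt (fun x ↦ (∫ y, g y • rieszKernelFDeriv 0 (newtonExponent V) (x - y)) w)
      (∫ y, fderiv ℝ g y w • rieszKernelFDeriv 0 (newtonExponent V) (x - y)) x ∧
      ContinuousAt
        (fun x ↦ ∫ y, fderiv ℝ g y w • rieszKernelFDeriv 0 (newtonExponent V) (x - y)) x := by
  have hg' : Continuous fun y ↦ fderiv ℝ g y w := by
    have := hg.continuous_fderiv one_ne_zero
    fun_prop
  obtain ⟨C, R, hC, hR⟩ := exists_bound_and_support_subset_ball hg' (hc.fderiv_apply ℝ w)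
  simp only [integral_smul_rieszKernelFDeriv_apply hV hg hc]
  exact hasFDerivAt_newtonPotential hV hg'.aestronglyMeasurable hC hR x

theorem contDiff_two_newtonPotential (hV : 3 ≤ finrank ℝ V) (hg : ContDiff ℝ 1 g)
    (hc : HasCompactSupport g) : ContDiff ℝ 2 (newtonPotential g) := by
  obtain ⟨C, R, hC, hR⟩ := exists_bound_and_support_subset_ball hg.continuous hc
  rw [← contDiffOn_univ]
  exact contDiffOn_two_of_hasFDerivAt_apply isOpen_univ
    (fun x _ ↦ (hasFDerivAt_newtonPotential hV hg.continuous.aestronglyMeasurable hC hR x).1)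
    fun w x _ ↦ hasFDerivAt_integral_smul_rieszKernelFDeriv_apply hV hg hc w x

theorem sum_integral_fderiv_mul_rieszKernelFDeriv {ι : Type*} [Fintype ι]
    (b : OrthonormalBasis ι ℝ V) (hg : ContDiff ℝ 1 g) (hc : HasCompactSupport g) {ε : ℝ}
    (hε : 0 < ε) (x : V) :
    ∑ i, ∫ y, fderiv ℝ g y (b i) * rieszKernelFDeriv ε (newtonExponent V) (x - y) (b i) =
      2 * newtonExponent V * finrank ℝ V *
        ∫ y, g y * (ε * rieszKernel ε (newtonExponent V - 2) (x - y)) := by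
  have hpos (z : V) : 0 < ‖z‖ ^ 2 + ε := by positivity
  have hparts (i : ι) := integral_fderiv_mul_comp_sub hg hc
    (fun z ↦ hasFDerivAt_rieszKernelFDeriv_apply (γ := newtonExponent V) (hpos z) (b i))
    (continuous_rieszKernelHessian hε _ (b i)) x (b i)
  have hint (i : ι) : Integrable fun y ↦
      g y * rieszKernelHessian ε (newtonExponent V) (b i) (x - y) (b i) := by
    refine Continuous.integrable_of_hasCompactSupport ?_ hc.mul_right
    have := hg.continuous
    have := continuous_rieszKernelHessian hε (newtonExponent V) (b i)
    fun_prop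
  simp only [hparts]
  rw [← integral_finsetSum _ fun i _ ↦ hint i, ← integral_const_mul]
  refine integral_congr_ae (.of_forall fun y ↦ ?_)
  dsimp only
  rw [← Finset.mul_sum, sum_rieszKernelHessian_apply b (hpos _) two_mul_newtonExponent_sub_one]
  ring

theorem laplacian_newtonPotential (hV : 3 ≤ finrank ℝ V) (hg : ContDiff ℝ 1 g)
    (hc : HasCompactSupport g) (x : V) :
    Δ (newtonPotential g) x = -(newtonConst V * g x) := by
  let b := stdOrthonormalBasis ℝ V
  obtain ⟨C, R, hC, hR⟩ := exists_bound_and_support_subset_ball hg.continuous hc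
  obtain ⟨ε, hε, hlim, hpeak⟩ := exists_pos_tendsto_integral_mul_rieszKernel
    (hg.continuous.integrable_of_hasCompactSupport hc) (x := x) hg.continuous.continuousAt
  have hg' (w : V) : Continuous fun y ↦ fderiv ℝ g y w := by
    have := hg.continuous_fderiv one_ne_zero
    fun_prop
  have hterm (w : V) : Tendsto (fun j ↦ ∫ y, fderiv ℝ g y w *
      rieszKernelFDeriv (ε j) (newtonExponent V) (x - y) w) atTop
      (𝓝 ((∫ y, fderiv ℝ g y w • rieszKernelFDeriv 0 (newtonExponent V) (x - y)) w)) := by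
    obtain ⟨C', R', hC', hR'⟩ := exists_bound_and_support_subset_ball (hg' w)
      (hc.fderiv_apply ℝ w)
    exact tendsto_integral_smul_rieszKernelFDeriv hV (hg' w).aestronglyMeasurable hC' hR' hε hlim
      x w
  rw [laplacian_eq_sum_of_hasFDerivAt_apply b (contDiff_two_newtonPotential hV hg hc).contDiffAt
    (.of_forall fun y ↦
      (hasFDerivAt_newtonPotential hV hg.continuous.aestronglyMeasurable hC hR y).1)
    fun w ↦ (hasFDerivAt_integral_smul_rieszKernelFDeriv_apply hV hg hc w x).1]
  refine tendsto_nhds_unique (tendsto_finsetSum _ fun i _ ↦ hterm (b i)) ?_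
  simp only [sum_integral_fderiv_mul_rieszKernelFDeriv b hg hc (hε _)]
  convert hpeak.const_mul (2 * newtonExponent V * finrank ℝ V) using 2
  rw [newtonConst]
  ring

end NewtonPotentialRegularity

section FarField

variable {V F : Type*} [NormedAddCommGroup V] [NormedAddCommGroup F] [NormedSpace ℝ F]
  {g : V → ℝ} {B B' r γ : ℝ} {K : V → F} {x x₀ : V}

theorem le_norm_sub_of_mem_ball_of_ne_zero (hg0 : ∀ y ∈ ball x₀ (2 * r), g y = 0)
    (hx : x ∈ ball x₀ r) {y : V} (hy : g y ≠ 0) : r ≤ ‖x - y‖ := by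
  have hfar : 2 * r ≤ dist y x₀ := not_lt.1 fun h ↦ hy (hg0 y h)
  rw [← dist_eq_norm]
  linarith [dist_triangle_left y x₀ x, mem_ball.1 hx]

theorem norm_smul_comp_sub_le_rieszKernel (hγ : γ ≤ 0) (hr : 0 < r)
    (hg0 : ∀ y ∈ ball x₀ (2 * r), g y = 0) (hB : 0 ≤ B)
    (hKB : ∀ z, r ≤ ‖z‖ → ‖K z‖ ≤ B * rieszKernel 0 γ z) (hx : x ∈ ball x₀ r) (y : V) :
    ‖g y • K (x - y)‖ ≤ B * 2 ^ (-(2 * γ)) * ‖g y • rieszKernel 0 γ (x₀ - y)‖ := by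
  by_cases hy : g y = 0
  · simp [hy]
  have hkernel := rieszKernel_sub_le_mul hγ hr hx fun h ↦ hy (hg0 y h)
  rw [norm_smul, norm_smul, Real.norm_of_nonneg (rieszKernel_nonneg le_rfl γ _), mul_left_comm]
  gcongr
  calc ‖K (x - y)‖ ≤ B * rieszKernel 0 γ (x - y) :=
        hKB _ (le_norm_sub_of_mem_ball_of_ne_zero hg0 hx hy)
    _ ≤ B * 2 ^ (-(2 * γ)) * rieszKernel 0 γ (x₀ - y) := by
        rw [mul_assoc]
        gcongr

variable [InnerProductSpace ℝ V]

theorem norm_rieszKernelFDeriv_le_mul_rieszKernel (hγ : γ ≤ 1) (hr : 0 < r) {z : V}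
    (hz : r ≤ ‖z‖) :
    ‖rieszKernelFDeriv 0 γ z‖ ≤ 2 * |γ| * r ^ (-1 : ℝ) * rieszKernel 0 γ z := by
  refine (norm_rieszKernelFDeriv_le le_rfl hγ (norm_pos_iff.1 (hr.trans_le hz))).trans ?_
  rw [mul_assoc _ (r ^ _)]
  gcongr
  exact norm_rpow_sub_le_mul_rieszKernel hr hz zero_le_one γ

theorem norm_rieszKernelHessian_le_mul_rieszKernel (hγ : γ ≤ 1) (hr : 0 < r) {z : V}
    (hz : r ≤ ‖z‖) (w : V) : ‖rieszKernelHessian 0 γ w z‖ ≤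
      2 * |γ| * (1 + 2 * |γ - 1|) * ‖w‖ * r ^ (-2 : ℝ) * rieszKernel 0 γ z := by
  refine (norm_rieszKernelHessian_le le_rfl hγ w (norm_pos_iff.1 (hr.trans_le hz))).trans ?_
  rw [mul_assoc _ (r ^ _)]
  gcongr
  exact norm_rpow_sub_le_mul_rieszKernel hr hz zero_le_two γ

variable [FiniteDimensional ℝ V] [MeasurableSpace V] [BorelSpace V] {K' : V → V →L[ℝ] F}

theorem integrable_smul_comp_sub_of_far (hγ : γ ≤ 0) (hr : 0 < r) (hg : AEStronglyMeasurable g)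
    (hg0 : ∀ y ∈ ball x₀ (2 * r), g y = 0)
    (hint : Integrable fun y ↦ g y • rieszKernel 0 γ (x₀ - y)) (hK : AEStronglyMeasurable K)
    (hB : 0 ≤ B) (hKB : ∀ z, r ≤ ‖z‖ → ‖K z‖ ≤ B * rieszKernel 0 γ z) (hx : x ∈ ball x₀ r) :
    Integrable fun y ↦ g y • K (x - y) :=
  (hint.norm.const_mul _).mono' (hg.smul
    (hK.comp_measurePreserving (Measure.measurePreserving_sub_left volume x)))
    (.of_forall (norm_smul_comp_sub_le_rieszKernel hγ hr hg0 hB hKB hx))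

theorem continuousAt_integral_smul_comp_sub_of_far (hγ : γ ≤ 0) (hr : 0 < r)
    (hg : AEStronglyMeasurable g) (hg0 : ∀ y ∈ ball x₀ (2 * r), g y = 0)
    (hint : Integrable fun y ↦ g y • rieszKernel 0 γ (x₀ - y)) (hK : AEStronglyMeasurable K)
    (hB : 0 ≤ B) (hKB : ∀ z, r ≤ ‖z‖ → ‖K z‖ ≤ B * rieszKernel 0 γ z)
    (hcont : ∀ z ≠ 0, ContinuousAt K z) (hx : x ∈ ball x₀ r) :
    ContinuousAt (fun x ↦ ∫ y, g y • K (x - y)) x := by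
  have hnear : ∀ᶠ x' in 𝓝 x, x' ∈ ball x₀ r := isOpen_ball.mem_nhds hx
  refine continuousAt_of_dominated (hnear.mono fun x' hx' ↦
    (integrable_smul_comp_sub_of_far hγ hr hg hg0 hint hK hB hKB hx').aestronglyMeasurable)
    (hnear.mono fun x' hx' ↦ .of_forall
      (norm_smul_comp_sub_le_rieszKernel hγ hr hg0 hB hKB hx'))
    (hint.norm.const_mul _) (.of_forall fun y ↦ ?_)
  by_cases hy : g y = 0
  · simpa [hy] using continuousAt_const
  have hne : x - y ≠ 0 :=
    norm_pos_iff.1 (hr.trans_le (le_norm_sub_of_mem_ball_of_ne_zero hg0 hx hy))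
  exact (ContinuousAt.comp (f := fun x ↦ x - y) (hcont _ hne) (by fun_prop)).const_smul (g y)

theorem hasFDerivAt_integral_smul_comp_sub_of_far (hγ : γ ≤ 0) (hr : 0 < r)
    (hg : AEStronglyMeasurable g) (hg0 : ∀ y ∈ ball x₀ (2 * r), g y = 0)
    (hint : Integrable fun y ↦ g y • rieszKernel 0 γ (x₀ - y)) (hK : AEStronglyMeasurable K)
    (hK' : AEStronglyMeasurable K') (hB : 0 ≤ B) (hB' : 0 ≤ B')
    (hKB : ∀ z, r ≤ ‖z‖ → ‖K z‖ ≤ B * rieszKernel 0 γ z)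
    (hKB' : ∀ z, r ≤ ‖z‖ → ‖K' z‖ ≤ B' * rieszKernel 0 γ z)
    (hderiv : ∀ z ≠ 0, HasFDerivAt K (K' z) z) (hx : x ∈ ball x₀ r) :
    HasFDerivAt (fun x ↦ ∫ y, g y • K (x - y)) (∫ y, g y • K' (x - y)) x := by
  refine hasFDerivAt_integral_of_dominated_of_fderiv_le (F := fun x y ↦ g y • K (x - y))
    (F' := fun x y ↦ g y • K' (x - y)) (isOpen_ball.mem_nhds hx)
    (Eventually.mono (isOpen_ball.mem_nhds hx) fun x' hx' ↦
      (integrable_smul_comp_sub_of_far hγ hr hg hg0 hint hK hB hKB hx').aestronglyMeasurable)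
    (integrable_smul_comp_sub_of_far hγ hr hg hg0 hint hK hB hKB hx)
    (integrable_smul_comp_sub_of_far hγ hr hg hg0 hint hK' hB' hKB' hx).aestronglyMeasurable
    (.of_forall fun y x' hx' ↦ norm_smul_comp_sub_le_rieszKernel hγ hr hg0 hB' hKB' hx' y)
    (hint.norm.const_mul _) (.of_forall fun y x' hx' ↦ ?_)
  by_cases hy : g y = 0
  · simpa [hy] using hasFDerivAt_const (0 : F) x'
  have hne : x' - y ≠ 0 :=
    norm_pos_iff.1 (hr.trans_le (le_norm_sub_of_mem_ball_of_ne_zero hg0 hx' hy))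
  exact (HasFDerivAt.comp x' (hderiv _ hne) ((hasFDerivAt_id x').sub_const y)).const_smul (g y)

theorem aestronglyMeasurable_rieszKernelHessian (ε γ : ℝ) (w : V) :
    AEStronglyMeasurable (rieszKernelHessian ε γ w) :=
  (((measurable_rieszKernel ε (γ - 1)).const_mul _).aestronglyMeasurable.smul
    aestronglyMeasurable_const).add
    ((by fun_prop : Measurable fun z : V ↦ 2 * γ * ⟪w, z⟫).aestronglyMeasurable.smul
      (aestronglyMeasurable_rieszKernelFDeriv ε (γ - 1)))

theorem hasFDerivAt_integral_smul_rieszKernel_of_far (hγ : γ ≤ 0) (hr : 0 < r)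
    (hg : AEStronglyMeasurable g) (hg0 : ∀ y ∈ ball x₀ (2 * r), g y = 0)
    (hint : Integrable fun y ↦ g y • rieszKernel 0 γ (x₀ - y)) (hx : x ∈ ball x₀ r) :
    HasFDerivAt (fun x ↦ ∫ y, g y • rieszKernel 0 γ (x - y))
      (∫ y, g y • rieszKernelFDeriv 0 γ (x - y)) x := by
  refine hasFDerivAt_integral_smul_comp_sub_of_far hγ hr hg hg0 hint
    (measurable_rieszKernel 0 γ).aestronglyMeasurable (aestronglyMeasurable_rieszKernelFDeriv 0 γ)
    zero_le_one (by positivity) (fun z _ ↦ ?_)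
    (fun z hz ↦ norm_rieszKernelFDeriv_le_mul_rieszKernel (by linarith) hr hz)
    (fun z hz ↦ hasFDerivAt_rieszKernel (by positivity)) hx
  rw [Real.norm_of_nonneg (rieszKernel_nonneg le_rfl γ z), one_mul]

theorem integral_smul_rieszKernelFDeriv_apply_of_far (hγ : γ ≤ 0) (hr : 0 < r)
    (hg : AEStronglyMeasurable g) (hg0 : ∀ y ∈ ball x₀ (2 * r), g y = 0)
    (hint : Integrable fun y ↦ g y • rieszKernel 0 γ (x₀ - y)) (hx : x ∈ ball x₀ r) (w : V) :
    (∫ y, g y • rieszKernelFDeriv 0 γ (x - y)) w =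
      ∫ y, g y • rieszKernelFDeriv 0 γ (x - y) w :=
  ContinuousLinearMap.integral_apply (integrable_smul_comp_sub_of_far hγ hr hg hg0 hint
    (aestronglyMeasurable_rieszKernelFDeriv 0 γ) (by positivity)
    (fun z hz ↦ norm_rieszKernelFDeriv_le_mul_rieszKernel (by linarith) hr hz) hx) w

theorem hasFDerivAt_integral_smul_rieszKernelFDeriv_apply_of_far (hγ : γ ≤ 0) (hr : 0 < r)
    (hg : AEStronglyMeasurable g) (hg0 : ∀ y ∈ ball x₀ (2 * r), g y = 0)
    (hint : Integrable fun y ↦ g y • rieszKernel 0 γ (x₀ - y)) (w : V) (hx : x ∈ ball x₀ r) :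
    HasFDerivAt (fun x ↦ (∫ y, g y • rieszKernelFDeriv 0 γ (x - y)) w)
      (∫ y, g y • rieszKernelHessian 0 γ w (x - y)) x ∧
      ContinuousAt (fun x ↦ ∫ y, g y • rieszKernelHessian 0 γ w (x - y)) x := by
  have hpos {z : V} (hz : z ≠ 0) : 0 < ‖z‖ ^ 2 + 0 := by positivity
  have hbound (z : V) (hz : r ≤ ‖z‖) := norm_rieszKernelHessian_le_mul_rieszKernel
    (hγ.trans zero_le_one) hr hz w
  refine ⟨?_, continuousAt_integral_smul_comp_sub_of_far hγ hr hg hg0 hint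
    (aestronglyMeasurable_rieszKernelHessian 0 γ w) (by positivity) hbound
    (fun z hz ↦ continuousAt_rieszKernelHessian (hpos hz) w) hx⟩
  refine (hasFDerivAt_integral_smul_comp_sub_of_far (K := fun z ↦ rieszKernelFDeriv 0 γ z w)
    (B := 2 * |γ| * r ^ (-1 : ℝ) * ‖w‖) hγ hr hg hg0 hint ?_
    (aestronglyMeasurable_rieszKernelHessian 0 γ w) (by positivity) (by positivity)
    (fun z hz ↦ ?_) hbound (fun z hz ↦ hasFDerivAt_rieszKernelFDeriv_apply (hpos hz) w)
    hx).congr_of_eventuallyEq ?_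
  · exact (aestronglyMeasurable_rieszKernelFDeriv 0 γ).apply_continuousLinearMap w
  · refine ((rieszKernelFDeriv 0 γ z).le_opNorm w).trans ?_
    rw [mul_right_comm]
    gcongr
    exact norm_rieszKernelFDeriv_le_mul_rieszKernel (by linarith) hr hz
  · filter_upwards [isOpen_ball.mem_nhds hx] with y hy
    exact integral_smul_rieszKernelFDeriv_apply_of_far hγ hr hg hg0 hint hy w

theorem contDiffAt_newtonPotential_of_far (hV : 3 ≤ finrank ℝ V) (hr : 0 < r)
    (hg : AEStronglyMeasurable g) (hg0 : ∀ y ∈ ball x₀ (2 * r), g y = 0)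
    (hint : Integrable fun y ↦ g y • rieszKernel 0 (newtonExponent V) (x₀ - y)) :
    ContDiffAt ℝ 2 (newtonPotential g) x₀ :=
  (contDiffOn_two_of_hasFDerivAt_apply isOpen_ball
    (fun _ hx ↦ hasFDerivAt_integral_smul_rieszKernel_of_far (newtonExponent_neg hV).le hr hg hg0
      hint hx)
    fun w _ hx ↦ hasFDerivAt_integral_smul_rieszKernelFDeriv_apply_of_far
      (newtonExponent_neg hV).le hr hg hg0 hint w hx).contDiffAt (ball_mem_nhds x₀ hr)

theorem laplacian_newtonPotential_of_far (hV : 3 ≤ finrank ℝ V) (hr : 0 < r)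
    (hg : AEStronglyMeasurable g) (hg0 : ∀ y ∈ ball x₀ (2 * r), g y = 0)
    (hint : Integrable fun y ↦ g y • rieszKernel 0 (newtonExponent V) (x₀ - y)) :
    Δ (newtonPotential g) x₀ = 0 := by
  let b := stdOrthonormalBasis ℝ V
  have hγ := (newtonExponent_neg hV).le
  have hx₀ : x₀ ∈ ball x₀ r := mem_ball_self hr
  have hintHess (w : V) : Integrable fun y ↦
      g y • rieszKernelHessian 0 (newtonExponent V) w (x₀ - y) :=
    integrable_smul_comp_sub_of_far hγ hr hg hg0 hint
      (aestronglyMeasurable_rieszKernelHessian 0 _ w) (by positivity)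
      (fun z hz ↦ norm_rieszKernelHessian_le_mul_rieszKernel (by linarith) hr hz w) hx₀
  rw [laplacian_eq_sum_of_hasFDerivAt_apply b
    (contDiffAt_newtonPotential_of_far hV hr hg hg0 hint)
    (Eventually.mono (ball_mem_nhds x₀ hr) fun x hx ↦
      hasFDerivAt_integral_smul_rieszKernel_of_far hγ hr hg hg0 hint hx)
    fun w ↦ (hasFDerivAt_integral_smul_rieszKernelFDeriv_apply_of_far hγ hr hg hg0 hint w hx₀).1]
  simp only [ContinuousLinearMap.integral_apply (hintHess _)]
  rw [← integral_finsetSum _ fun i _ ↦ (hintHess (b i)).apply_continuousLinearMap (b i)]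
  refine integral_eq_zero_of_ae (.of_forall fun y ↦ ?_)
  by_cases hy : g y = 0
  · simp [hy]
  have hpos : 0 < ‖x₀ - y‖ ^ 2 + 0 := by
    have := hr.trans_le (le_norm_sub_of_mem_ball_of_ne_zero hg0 hx₀ hy)
    positivity
  simp only [smul_apply, smul_eq_mul, ← Finset.mul_sum,
    sum_rieszKernelHessian_apply b hpos two_mul_newtonExponent_sub_one, Pi.zero_apply]
  ring

end FarField

section LocalRegularity

variable {V : Type*} [NormedAddCommGroup V] [InnerProductSpace ℝ V] [FiniteDimensional ℝ V]
  {g g₁ : V → ℝ} {C R r β : ℝ} {x x₀ : V}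

theorem exists_contDiff_one_hasCompactSupport_eqOn (hr : 0 < r)
    (hg : ContDiffOn ℝ 1 g (ball x₀ (4 * r))) :
    ∃ g₁ : V → ℝ, ContDiff ℝ 1 g₁ ∧ HasCompactSupport g₁ ∧ ∀ y ∈ ball x₀ r, g y = g₁ y := by
  let χ : ContDiffBump x₀ := ⟨r, 2 * r, hr, by linarith⟩
  refine ⟨fun y ↦ χ y * g y, contDiff_iff_contDiffAt.2 fun y ↦ ?_, χ.hasCompactSupport.mul_right,
    fun y hy ↦ by simp [χ.one_of_mem_closedBall (ball_subset_closedBall hy)]⟩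
  by_cases hy : y ∈ ball x₀ (4 * r)
  · exact χ.contDiff.contDiffAt.mul (hg.contDiffAt (isOpen_ball.mem_nhds hy))
  · have hsupp : y ∉ tsupport χ := by
      rw [χ.tsupport_eq, mem_closedBall]
      rw [mem_ball] at hy
      change ¬ _ ≤ 2 * r
      linarith
    refine contDiffAt_const (c := (0 : ℝ)) |>.congr_of_eventuallyEq ?_
    filter_upwards [(isClosed_tsupport χ).isOpen_compl.mem_nhds hsupp] with z hz
    rw [image_eq_zero_of_notMem_tsupport hz, zero_mul]

variable [MeasurableSpace V] [BorelSpace V]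

theorem integrable_smul_newtonKernel (hV : 3 ≤ finrank ℝ V) (hg : AEStronglyMeasurable g)
    (hgC : ∀ y, ‖g y‖ ≤ C) (hgR : Function.support g ⊆ ball 0 R) (x : V) :
    Integrable fun y ↦ g y • rieszKernel 0 (newtonExponent V) (x - y) :=
  integrable_smul_comp_sub hg hgC hgR
    (locallyIntegrable_rieszKernel (newtonExponent_neg hV).le one_sub_two_mul_newtonExponent_lt) x

theorem exists_newtonPotential_eventuallyEq_add (hV : 3 ≤ finrank ℝ V) (hr : 0 < r)
    (hg : AEStronglyMeasurable g)
    (hint : Integrable fun y ↦ g y • rieszKernel 0 (newtonExponent V) (x₀ - y))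
    (hg₁ : AEStronglyMeasurable g₁) (hgC : ∀ y, ‖g₁ y‖ ≤ C)
    (hgR : Function.support g₁ ⊆ ball 0 R) (heq : ∀ y ∈ ball x₀ (2 * r), g y = g₁ y) :
    ∃ v : V → ℝ, ContDiffAt ℝ 2 v x₀ ∧ Δ v x₀ = 0 ∧
      newtonPotential g =ᶠ[𝓝 x₀] newtonPotential g₁ + v := by
  have hnear := integrable_smul_newtonKernel hV hg₁ hgC hgR
  have hfar : ∀ y ∈ ball x₀ (2 * r), (g - g₁) y = 0 := fun y hy ↦ sub_eq_zero.2 (heq y hy)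
  have hintfar : Integrable fun y ↦ (g - g₁) y • rieszKernel 0 (newtonExponent V) (x₀ - y) :=
    (hint.sub (hnear x₀)).congr (.of_forall fun y ↦ (sub_smul (g y) (g₁ y) _).symm)
  refine ⟨newtonPotential (g - g₁),
    contDiffAt_newtonPotential_of_far hV hr (hg.sub hg₁) hfar hintfar,
    laplacian_newtonPotential_of_far hV hr (hg.sub hg₁) hfar hintfar, ?_⟩
  filter_upwards [ball_mem_nhds x₀ hr] with x hx
  have hintx : Integrable fun y ↦ (g - g₁) y • rieszKernel 0 (newtonExponent V) (x - y) :=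
    integrable_smul_comp_sub_of_far (newtonExponent_neg hV).le hr (hg.sub hg₁) hfar hintfar
      (measurable_rieszKernel 0 _).aestronglyMeasurable zero_le_one (fun z _ ↦ by
        rw [Real.norm_of_nonneg (rieszKernel_nonneg le_rfl _ z), one_mul]) hx
  rw [Pi.add_apply, newtonPotential, newtonPotential, newtonPotential,
    ← integral_add (hnear x) hintx]
  simp only [Pi.sub_apply, ← add_smul, add_sub_cancel]

theorem contDiffAt_one_newtonPotential (hV : 3 ≤ finrank ℝ V) (hr : 0 < r)
    (hg : AEStronglyMeasurable g) (hgC : ∀ y ∈ ball x₀ (2 * r), ‖g y‖ ≤ C)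
    (hint : Integrable fun y ↦ g y • rieszKernel 0 (newtonExponent V) (x₀ - y)) :
    ContDiffAt ℝ 1 (newtonPotential g) x₀ := by
  have hC : 0 ≤ C := (norm_nonneg _).trans (hgC x₀ (mem_ball_self (by positivity)))
  have hg₁ : AEStronglyMeasurable ((ball x₀ (2 * r)).indicator g) := hg.indicator measurableSet_ball
  have hg₁C (y : V) : ‖(ball x₀ (2 * r)).indicator g y‖ ≤ C := by
    by_cases hy : y ∈ ball x₀ (2 * r) <;> simp_all
  have hg₁R : Function.support ((ball x₀ (2 * r)).indicator g) ⊆ ball 0 (2 * r + dist x₀ 0) :=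
    support_indicator_subset.trans (ball_subset_ball' le_rfl)
  obtain ⟨v, hv, -, heq⟩ := exists_newtonPotential_eventuallyEq_add hV hr hg hint hg₁ hg₁C hg₁R
    fun y hy ↦ (indicator_of_mem hy g).symm
  refine ContDiffAt.congr_of_eventuallyEq (.add ?_ (hv.of_le one_le_two)) heq
  have hderiv := hasFDerivAt_newtonPotential hV hg₁ hg₁C hg₁R
  exact contDiffAt_one_iff.2 ⟨_, univ, univ_mem, fun x _ ↦ (hderiv x).2.continuousWithinAt,
    fun x _ ↦ (hderiv x).1⟩

theorem contDiffAt_two_and_laplacian_newtonPotential (hV : 3 ≤ finrank ℝ V) (hr : 0 < r)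
    (hg : AEStronglyMeasurable g) (hg1 : ContDiffOn ℝ 1 g (ball x₀ r))
    (hint : Integrable fun y ↦ g y • rieszKernel 0 (newtonExponent V) (x₀ - y)) :
    ContDiffAt ℝ 2 (newtonPotential g) x₀ ∧
      Δ (newtonPotential g) x₀ = -(newtonConst V * g x₀) := by
  obtain ⟨g₁, hg₁, hc, heq⟩ := exists_contDiff_one_hasCompactSupport_eqOn (r := r / 4)
    (by positivity) (by rwa [mul_div_cancel₀ _ four_ne_zero])
  obtain ⟨C, R, hC, hR⟩ := exists_bound_and_support_subset_ball hg₁.continuous hc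
  obtain ⟨v, hv, hΔv, hadd⟩ := exists_newtonPotential_eventuallyEq_add (r := r / 8) hV
    (by positivity) hg hint hg₁.continuous.aestronglyMeasurable hC hR
    fun y hy ↦ heq y (ball_subset_ball (by linarith) hy)
  have hu : ContDiffAt ℝ 2 (newtonPotential g₁) x₀ :=
    (contDiff_two_newtonPotential hV hg₁ hc).contDiffAt
  refine ⟨(hu.add hv).congr_of_eventuallyEq hadd, ?_⟩
  rw [laplacian_congr_nhds hadd |>.eq_of_nhds, hu.laplacian_add hv,
    laplacian_newtonPotential hV hg₁ hc, hΔv, add_zero, heq x₀ (mem_ball_self (by positivity))]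

theorem abs_newtonPotential_le_of_two_mul_le_norm (hV : 3 ≤ finrank ℝ V) (hg : Integrable g)
    (hgR : Function.support g ⊆ ball 0 R) (hR : 0 < R) (hx : 2 * R ≤ ‖x‖) :
    |newtonPotential g x| ≤ (∫ y, ‖g y‖) * (‖x‖ / 2) ^ (2 * newtonExponent V) := by
  rw [← integral_mul_const]
  refine norm_integral_le_of_norm_le (G := ℝ) (hg.norm.mul_const _) (.of_forall fun y ↦ ?_)
  by_cases hy : g y = 0
  · simp [hy]
  rw [norm_smul, Real.norm_of_nonneg (rieszKernel_nonneg le_rfl _ _), rieszKernel_zero_eq]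
  gcongr ?_ * ?_
  have hyR : ‖y‖ < R := mem_ball_zero_iff.1 (hgR hy)
  exact Real.rpow_le_rpow_of_nonpos (by linarith) (by linarith [norm_sub_norm_le x y])
    (by linarith [newtonExponent_neg hV])

theorem exists_abs_newtonPotential_le_rpow (hV : 3 ≤ finrank ℝ V) (hg : AEStronglyMeasurable g)
    (hgC : ∀ y, ‖g y‖ ≤ C) (hgR : Function.support g ⊆ ball 0 R)
    (hβ : 2 * newtonExponent V ≤ β) (hβ0 : β ≤ 0) :
    ∃ B, 0 ≤ B ∧ ∀ x ≠ 0, |newtonPotential g x| ≤ B * ‖x‖ ^ β := by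
  wlog hR1 : 1 ≤ R generalizing R
  · exact this (hgR.trans (ball_subset_ball (le_max_left R 1))) (le_max_right R 1)
  have hC : 0 ≤ C := (norm_nonneg _).trans (hgC 0)
  have hgint : Integrable g := by
    simpa using integrable_smul_comp_sub hg hgC hgR (locallyIntegrable_const (1 : ℝ)) 0
  set γ := newtonExponent V
  set B := C * ∫ z in ball (0 : V) (R + 3 * R), ‖rieszKernel 0 γ z‖
  have hB : 0 ≤ B := by positivity
  refine ⟨B * (2 * R) ^ (-β) + (∫ y, ‖g y‖) * 2 ^ (-(2 * γ)), by positivity, fun x hx ↦ ?_⟩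
  rw [add_mul]
  rcases lt_or_ge ‖x‖ (2 * R) with hxR | hxR
  · refine le_add_of_le_of_nonneg ?_ (by positivity)
    have hone : 1 ≤ (2 * R) ^ (-β) * ‖x‖ ^ β := by
      rw [Real.rpow_neg (by positivity), ← div_eq_inv_mul, one_le_div (by positivity)]
      exact Real.rpow_le_rpow_of_nonpos (norm_pos_iff.2 hx) hxR.le hβ0
    rw [mul_assoc]
    exact (norm_integral_smul_comp_sub_le hgC hgR (locallyIntegrable_rieszKernel
      (newtonExponent_neg hV).le one_sub_two_mul_newtonExponent_lt)
      (mem_ball_zero_iff.2 (by linarith))).trans (le_mul_of_one_le_right hB hone)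
  · refine le_add_of_nonneg_of_le (by positivity) ?_
    refine (abs_newtonPotential_le_of_two_mul_le_norm hV hgint hgR (by positivity) hxR).trans ?_
    rw [mul_assoc, Real.div_rpow (norm_nonneg x) zero_le_two, div_eq_inv_mul,
      ← Real.rpow_neg zero_le_two]
    gcongr
    linarith

end LocalRegularity

section Meridian

theorem deriv_deriv_comp_sqrt {φ : ℝ → ℝ} {a : ℝ} (ha : 0 < a) (hφ : ContDiffAt ℝ 2 φ a) :
    deriv (deriv fun t ↦ φ √(t ^ 2 + a ^ 2)) 0 = deriv φ a / a := by
  have hpos (t : ℝ) : 0 < t ^ 2 + a ^ 2 := by positivity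
  have hsqrt (t : ℝ) : HasDerivAt (fun t ↦ √(t ^ 2 + a ^ 2)) (t / √(t ^ 2 + a ^ 2)) t := by
    refine (((hasDerivAt_pow 2 t).add_const (a ^ 2)).sqrt (hpos t).ne').congr_deriv ?_
    simpa using mul_div_mul_left t √(t ^ 2 + a ^ 2) two_ne_zero
  have hzero : √((0 : ℝ) ^ 2 + a ^ 2) = a := by simp [sqrt_sq ha.le]
  have hφ' : ∀ᶠ r in 𝓝 a, HasDerivAt φ (deriv φ r) r :=
    (hφ.eventually (by simp)).mono fun r hr ↦ (hr.differentiableAt two_ne_zero).hasDerivAt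
  have hφ'' : DifferentiableAt ℝ (deriv φ) a := by
    have h := ((hφ.fderiv_right (m := 1) (by norm_num)).differentiableAt one_ne_zero).clm_apply
      (differentiableAt_const (1 : ℝ))
    exact h
  have hderiv : deriv (fun t ↦ φ √(t ^ 2 + a ^ 2)) =ᶠ[𝓝 0]
      fun t ↦ deriv φ √(t ^ 2 + a ^ 2) * (t / √(t ^ 2 + a ^ 2)) := by
    filter_upwards [(hsqrt 0).continuousAt.eventually (hzero.symm ▸ hφ')] with t ht
    exact (ht.comp t (hsqrt t)).deriv
  have h₁ := HasDerivAt.comp (0 : ℝ) (hzero.symm ▸ hφ''.hasDerivAt) (hsqrt 0)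
  have h₂ : HasDerivAt (fun t ↦ t / √(t ^ 2 + a ^ 2)) (1 / a) 0 := by
    refine ((hasDerivAt_id 0).div (hsqrt 0) (sqrt_pos.2 (hpos 0)).ne').congr_deriv ?_
    rw [hzero]
    field_simp
    simp
  refine hderiv.deriv_eq.trans ((h₁.mul h₂).deriv.trans ?_)
  simp [sqrt_sq ha.le, div_eq_mul_inv]

variable {Z E : Type*} [NormedAddCommGroup Z] [NormedAddCommGroup E] [InnerProductSpace ℝ E]

/-- The representative in `{⟪e, ·⟫ ≥ 0}` of the point `Y` of `Z × E` modulo rotations of the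
subspace `Z ⊕ ℝe`: the component along `Z ⊕ ℝe` is replaced by its norm times `e`. -/
noncomputable def meridianPoint (e : E) (Y : WithLp 2 (Z × E)) : E :=
  Y.snd + (√(‖Y.fst‖ ^ 2 + ⟪e, Y.snd⟫ ^ 2) - ⟪e, Y.snd⟫) • e

variable {e : E} {Y Y' : WithLp 2 (Z × E)} {x : E}

theorem continuous_meridianPoint : Continuous (meridianPoint (Z := Z) e) := by
  unfold meridianPoint
  fun_prop

theorem inner_meridianPoint (he : ‖e‖ = 1) :
    ⟪e, meridianPoint e Y⟫ = √(‖Y.fst‖ ^ 2 + ⟪e, Y.snd⟫ ^ 2) := by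
  rw [meridianPoint, inner_add_right, inner_smul_right, real_inner_self_eq_norm_sq, he]
  ring

theorem inner_meridianPoint_nonneg (he : ‖e‖ = 1) : 0 ≤ ⟪e, meridianPoint e Y⟫ :=
  (sqrt_nonneg _).trans_eq (inner_meridianPoint he).symm

theorem norm_meridianPoint (he : ‖e‖ = 1) : ‖meridianPoint e Y‖ = ‖Y‖ := by
  have hsq := sq_sqrt (by positivity : 0 ≤ ‖Y.fst‖ ^ 2 + ⟪e, Y.snd⟫ ^ 2)
  rw [← sq_eq_sq₀ (norm_nonneg _) (norm_nonneg _), WithLp.prod_norm_sq_eq_of_L2, meridianPoint,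
    norm_add_sq_real, norm_smul, inner_smul_right, real_inner_comm e, he, mul_one, norm_eq_abs,
    sq_abs]
  linear_combination hsq

theorem meridianPoint_eq_of_norm_eq (he : ‖e‖ = 1) {r : ℝ} (hnorm : ‖Y‖ = ‖Y'‖)
    (hsnd : Y'.snd = Y.snd + r • e) : meridianPoint e Y' = meridianPoint e Y := by
  have hinner : ⟪e, Y'.snd⟫ = ⟪e, Y.snd⟫ + r := by
    rw [hsnd, inner_add_right, inner_smul_right, real_inner_self_eq_norm_sq, he]
    ring
  have hnorm_snd : ‖Y'.snd‖ ^ 2 = ‖Y.snd‖ ^ 2 + 2 * r * ⟪e, Y.snd⟫ + r ^ 2 := by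
    rw [hsnd, norm_add_sq_real, norm_smul, inner_smul_right, real_inner_comm e, he, mul_one,
      norm_eq_abs, sq_abs]
    ring
  have hradius : ‖Y'.fst‖ ^ 2 + ⟪e, Y'.snd⟫ ^ 2 = ‖Y.fst‖ ^ 2 + ⟪e, Y.snd⟫ ^ 2 := by
    have := congrArg (· ^ 2) hnorm
    simp only [WithLp.prod_norm_sq_eq_of_L2] at this
    rw [hinner]
    linarith
  rw [meridianPoint, hradius, hinner, hsnd, meridianPoint]
  module

theorem meridianPoint_toLp_zero (hx : 0 ≤ ⟪e, x⟫) :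
    meridianPoint e (WithLp.toLp 2 ((0 : Z), x)) = x := by
  simp [meridianPoint, sqrt_sq hx]

variable [InnerProductSpace ℝ Z]

theorem meridianPoint_toLp_smul (z : Z) (hz : ‖z‖ = 1) (t : ℝ) :
    meridianPoint e (WithLp.toLp 2 (t • z, x)) = x + (√(t ^ 2 + ⟪e, x⟫ ^ 2) - ⟪e, x⟫) • e := by
  simp [meridianPoint, norm_smul, hz]

theorem contDiffAt_meridianPoint {n : WithTop ℕ∞} (he : ‖e‖ = 1)
    (hY : 0 < ⟪e, meridianPoint e Y⟫) : ContDiffAt ℝ n (meridianPoint (Z := Z) e) Y := by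
  rw [inner_meridianPoint he, sqrt_pos] at hY
  have hfst : ContDiff ℝ n fun Y : WithLp 2 (Z × E) ↦ Y.fst := (WithLp.fstL 2 ℝ Z E).contDiff
  have hsnd : ContDiff ℝ n fun Y : WithLp 2 (Z × E) ↦ Y.snd := (WithLp.sndL 2 ℝ Z E).contDiff
  have hinner : ContDiff ℝ n fun Y : WithLp 2 (Z × E) ↦ ⟪e, Y.snd⟫ := contDiff_const.inner ℝ hsnd
  exact hsnd.contDiffAt.add (((((hfst.norm_sq ℝ).add (hinner.pow 2)).contDiffAt.sqrt hY.ne').sub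
    hinner.contDiffAt).smul contDiffAt_const)

theorem exists_linearIsometryEquiv_meridianPoint (he : ‖e‖ = 1) (Y : WithLp 2 (Z × E)) :
    ∃ R : WithLp 2 (Z × E) ≃ₗᵢ[ℝ] WithLp 2 (Z × E),
      R Y = WithLp.toLp 2 (0, meridianPoint e Y) ∧
      ∀ Y', meridianPoint e (R Y') = meridianPoint e Y' := by
  set Y₀ : WithLp 2 (Z × E) := WithLp.toLp 2 (0, meridianPoint e Y) with hY₀
  have hnorm : ‖Y‖ = ‖Y₀‖ := by
    rw [← sq_eq_sq₀ (norm_nonneg _) (norm_nonneg _), WithLp.prod_norm_sq_eq_of_L2 Y₀]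
    simp [hY₀, norm_meridianPoint he]
  refine ⟨(ℝ ∙ (Y - Y₀))ᗮ.reflection, Submodule.reflection_sub hnorm, fun Y' ↦ ?_⟩
  refine meridianPoint_eq_of_norm_eq he (LinearIsometryEquiv.norm_map _ _).symm
    (r := 2 * (⟪Y - Y₀, Y'⟫ / ‖Y - Y₀‖ ^ 2) * (√(‖Y.fst‖ ^ 2 + ⟪e, Y.snd⟫ ^ 2) - ⟪e, Y.snd⟫)) ?_
  rw [Submodule.reflection_orthogonal_apply, Submodule.reflection_singleton_apply]
  simp only [hY₀, meridianPoint, WithLp.sub_snd, WithLp.neg_snd, WithLp.smul_snd, WithLp.toLp_snd]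
  module

section Laplacian

variable {v : E → ℝ}

theorem contDiffAt_of_comp_meridianPoint {n : WithTop ℕ∞} (hx : x ∈ openHalfSpace e)
    (hv : ContDiffAt ℝ n (fun Y : WithLp 2 (Z × E) ↦ v (meridianPoint e Y))
      (WithLp.toLp 2 (0, x))) : ContDiffAt ℝ n v x := by
  have hembed : ContDiff ℝ n fun y : E ↦ WithLp.toLp 2 ((0 : Z), y) :=
    ((WithLp.prodContinuousLinearEquiv 2 ℝ Z E).symm.contDiff).comp
      (contDiff_const.prodMk contDiff_id)
  refine (ContDiffAt.comp x hv hembed.contDiffAt).congr_of_eventuallyEq ?_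
  filter_upwards [(isOpen_openHalfSpace e).mem_nhds hx] with y hy
  exact (congrArg v (meridianPoint_toLp_zero hy.le)).symm

theorem fderiv_fderiv_comp_meridianPoint_fst (hx : x ∈ openHalfSpace e)
    (hv : ContDiffAt ℝ 2 (fun Y : WithLp 2 (Z × E) ↦ v (meridianPoint e Y))
      (WithLp.toLp 2 (0, x))) {z : Z} (hz : ‖z‖ = 1) :
    fderiv ℝ (fderiv ℝ fun Y : WithLp 2 (Z × E) ↦ v (meridianPoint e Y)) (WithLp.toLp 2 (0, x))
      (WithLp.toLp 2 (z, 0)) (WithLp.toLp 2 (z, 0)) = fderiv ℝ v x e / ⟪e, x⟫ := by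
  have hvx := contDiffAt_of_comp_meridianPoint hx hv
  set φ : ℝ → ℝ := fun r ↦ v (x + (r - ⟪e, x⟫) • e) with hφ
  have hline : HasDerivAt (fun r : ℝ ↦ x + (r - ⟪e, x⟫) • e) e ⟪e, x⟫ := by
    simpa using (((hasDerivAt_id ⟪e, x⟫).sub_const ⟪e, x⟫).smul_const e).const_add x
  have hx_eq : x = x + (⟪e, x⟫ - ⟪e, x⟫) • e := by simp
  have hφ2 : ContDiffAt ℝ 2 φ ⟪e, x⟫ :=
    ContDiffAt.comp ⟪e, x⟫ (hx_eq ▸ hvx) (by fun_prop)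
  have hφ' : HasDerivAt φ (fderiv ℝ v x e) ⟪e, x⟫ :=
    HasFDerivAt.comp_hasDerivAt ⟪e, x⟫
      (by rw [← hx_eq]; exact (hvx.differentiableAt two_ne_zero).hasFDerivAt) hline
  rw [← deriv_deriv_add_smul hv, ← hφ'.deriv, ← deriv_deriv_comp_sqrt hx hφ2]
  congr 2 with t
  simp only [hφ, ← meridianPoint_toLp_smul z hz]
  congr 2
  simp [← WithLp.toLp_smul, ← WithLp.toLp_add]

theorem fderiv_fderiv_comp_meridianPoint_snd (hx : x ∈ openHalfSpace e)
    (hv : ContDiffAt ℝ 2 (fun Y : WithLp 2 (Z × E) ↦ v (meridianPoint e Y))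
      (WithLp.toLp 2 (0, x))) (w : E) :
    fderiv ℝ (fderiv ℝ fun Y : WithLp 2 (Z × E) ↦ v (meridianPoint e Y)) (WithLp.toLp 2 (0, x))
      (WithLp.toLp 2 (0, w)) (WithLp.toLp 2 (0, w)) = fderiv ℝ (fderiv ℝ v) x w w := by
  rw [← deriv_deriv_add_smul hv, ← deriv_deriv_add_smul (contDiffAt_of_comp_meridianPoint hx hv)]
  have hline : ContinuousAt (fun t : ℝ ↦ x + t • w) 0 := by fun_prop
  have hmem : ∀ᶠ t : ℝ in 𝓝 0, x + t • w ∈ openHalfSpace e :=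
    hline.eventually ((isOpen_openHalfSpace e).mem_nhds (by simpa using hx))
  refine Filter.EventuallyEq.deriv_eq (Filter.EventuallyEq.deriv ?_)
  filter_upwards [hmem] with t ht
  rw [← meridianPoint_toLp_zero (Z := Z) ht.le]
  congr 2
  simp [← WithLp.toLp_smul, ← WithLp.toLp_add]

theorem laplacian_comp_meridianPoint [FiniteDimensional ℝ Z] [FiniteDimensional ℝ E]
    (hx : x ∈ openHalfSpace e)
    (hv : ContDiffAt ℝ 2 (fun Y : WithLp 2 (Z × E) ↦ v (meridianPoint e Y))
      (WithLp.toLp 2 (0, x))) :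
    Δ (fun Y : WithLp 2 (Z × E) ↦ v (meridianPoint e Y)) (WithLp.toLp 2 (0, x)) =
      Δ v x + finrank ℝ Z / ⟪e, x⟫ * fderiv ℝ v x e := by
  set bZ := stdOrthonormalBasis ℝ Z
  set bE := stdOrthonormalBasis ℝ E
  rw [laplacian_eq_sum_fderiv (bZ.prod bE) hv, Fintype.sum_sum_type,
    laplacian_eq_sum_fderiv bE (contDiffAt_of_comp_meridianPoint hx hv)]
  simp [fderiv_fderiv_comp_meridianPoint_fst hx hv, fderiv_fderiv_comp_meridianPoint_snd hx hv]
  ring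

end Laplacian

end Meridian

section GreenOperator

theorem newtonPotential_map_of_comp_eq {V : Type*} [NormedAddCommGroup V] [InnerProductSpace ℝ V]
    [FiniteDimensional ℝ V] [MeasurableSpace V] [BorelSpace V] {g : V → ℝ} (R : V ≃ₗᵢ[ℝ] V)
    (hg : ∀ y, g (R y) = g y) (x : V) : newtonPotential g (R x) = newtonPotential g x := by
  rw [newtonPotential, newtonPotential,
    ← R.measurePreserving.integral_comp R.toHomeomorph.measurableEmbedding]
  simp only [hg, ← map_sub, rieszKernel, R.norm_map]

/-- The space in which the Green operator becomes a Newton potential: for `u = x₁ ^ s v` the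
operator `Δ - s (s - 1) / x₁²` acts on `v` as the Laplacian in `2 s` additional variables, `x₁`
being the distance to the axis. -/
abbrev LiftSpace (s : ℕ) (E : Type*) : Type _ := WithLp 2 (EuclideanSpace ℝ (Fin (2 * s)) × E)

variable {E : Type*} [NormedAddCommGroup E] [InnerProductSpace ℝ E] {e x : E}
  {s : ℕ} {h h₁ h₂ : E → ℝ} {C b : ℝ}

/-- The density on `LiftSpace s E` whose Newton potential represents the Green potential of
`h`. It vanishes where `⟪e, meridianPoint e Y⟫ = 0`. -/
noncomputable def liftDensity (s : ℕ) (e : E) (h : E → ℝ) (Y : LiftSpace s E) : ℝ :=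
  (⟪e, meridianPoint e Y⟫ ^ s)⁻¹ * h (meridianPoint e Y)

theorem contDiffAt_liftDensity {n : WithTop ℕ∞} (he : ‖e‖ = 1) {Y : LiftSpace s E}
    (hY : meridianPoint e Y ∈ openHalfSpace e) (hh : ContDiffAt ℝ n h (meridianPoint e Y)) :
    ContDiffAt ℝ n (liftDensity s e h) Y := by
  have hmer := contDiffAt_meridianPoint (n := n) he hY
  exact (((contDiffAt_const.inner ℝ hmer).pow s).inv (pow_pos hY s).ne').mul (hh.comp Y hmer)

theorem exists_eventually_abs_liftDensity_le
    (hC : ∀ x ∈ openHalfSpace e, |h x| ≤ C * ⟪e, x⟫ ^ b) {Y₀ : LiftSpace s E}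
    (hY₀ : meridianPoint e Y₀ ∈ openHalfSpace e) :
    ∃ C', ∀ᶠ Y in 𝓝 Y₀, |liftDensity s e h Y| ≤ C' := by
  have hmer : ContinuousAt (fun Y : LiftSpace s E ↦ ⟪e, meridianPoint e Y⟫) Y₀ :=
    (continuous_const.inner continuous_meridianPoint).continuousAt
  have hcont : ContinuousAt (fun Y : LiftSpace s E ↦ (⟪e, meridianPoint e Y⟫ ^ s)⁻¹ *
      (C * ⟪e, meridianPoint e Y⟫ ^ b)) Y₀ :=
    ((hmer.pow s).inv₀ (pow_pos hY₀ s).ne').mul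
      (continuousAt_const.mul (hmer.rpow_const (.inl hY₀.ne')))
  obtain ⟨C', hC'⟩ := hcont.tendsto.isBoundedUnder_le
  refine ⟨C', ?_⟩
  filter_upwards [hmer.eventually (lt_mem_nhds hY₀), eventually_map.1 hC'] with Y hY hY'
  refine le_trans ?_ hY'
  rw [liftDensity, abs_mul, abs_of_pos (inv_pos.2 (pow_pos hY s))]
  gcongr
  exact hC _ hY

theorem liftDensity_eq_zero (hs : s ≠ 0) {Y : LiftSpace s E} (hY : ⟪e, meridianPoint e Y⟫ = 0) :
    liftDensity s e h Y = 0 := by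
  simp [liftDensity, hY, hs]

theorem liftDensity_mono (he : ‖e‖ = 1) (hs : s ≠ 0)
    (hle : ∀ x ∈ openHalfSpace e, h₁ x ≤ h₂ x) (Y : LiftSpace s E) :
    liftDensity s e h₁ Y ≤ liftDensity s e h₂ Y := by
  rcases (inner_meridianPoint_nonneg he (Y := Y)).eq_or_lt' with hY | hY
  · rw [liftDensity_eq_zero hs hY, liftDensity_eq_zero hs hY]
  · exact mul_le_mul_of_nonneg_left (hle _ hY) (by positivity)

theorem abs_liftDensity (he : ‖e‖ = 1) (Y : LiftSpace s E) :
    |liftDensity s e h Y| = liftDensity s e (fun x ↦ |h x|) Y := by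
  rw [liftDensity, abs_mul, abs_of_nonneg]
  · rfl
  · exact inv_nonneg.2 (pow_nonneg (inner_meridianPoint_nonneg he) s)

theorem norm_greenIntegrand_le (he : ‖e‖ = 1) (hs : s ≠ 0)
    (hle : ∀ x ∈ openHalfSpace e, |h₁ x| ≤ h₂ x) (Y : LiftSpace s E) :
    ‖liftDensity s e h₁ Y •
        rieszKernel 0 (newtonExponent (LiftSpace s E)) (WithLp.toLp 2 (0, x) - Y)‖ ≤
      liftDensity s e h₂ Y •
        rieszKernel 0 (newtonExponent (LiftSpace s E)) (WithLp.toLp 2 (0, x) - Y) := by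
  rw [norm_smul, norm_eq_abs, norm_of_nonneg (rieszKernel_nonneg le_rfl _ _), abs_liftDensity he]
  exact mul_le_mul_of_nonneg_right (liftDensity_mono he hs hle Y) (rieszKernel_nonneg le_rfl _ _)

variable [FiniteDimensional ℝ E]

theorem three_le_finrank_liftSpace (hs : s ≠ 0) (hE : 1 ≤ finrank ℝ E) :
    3 ≤ finrank ℝ (LiftSpace s E) := by
  rw [(WithLp.linearEquiv 2 ℝ _).finrank_eq, finrank_prod, finrank_euclideanSpace_fin]
  omega

theorem HasLaplacianAt.inner_rpow_mul {v : E → ℝ} {g : E} {l : ℝ} (hv : HasLaplacianAt v g l x)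
    (he : ‖e‖ = 1) (hx : x ∈ openHalfSpace e) (α : ℝ) :
    HasLaplacianAt (fun y ↦ ⟪e, y⟫ ^ α * v y)
      (⟪e, x⟫ ^ α • g + (v x * (α * ⟪e, x⟫ ^ (α - 1))) • e)
      (⟪e, x⟫ ^ α * (l + 2 * α / ⟪e, x⟫ * ⟪g, e⟫ + α * (α - 1) / ⟪e, x⟫ ^ 2 * v x)) x := by
  have hpos : 0 < ⟪e, x⟫ := hx
  refine (((HasLaplacianAt.inner_left e).rpow_const hx α).mul hv).congr ?_ ?_
  · rw [smul_smul]
  · rw [he, real_inner_smul_left, real_inner_comm g, rpow_sub hpos, rpow_sub hpos, rpow_one,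
      rpow_two]
    field_simp
    ring

variable [MeasurableSpace E] [BorelSpace E]

theorem measurable_liftDensity (hh : Measurable h) : Measurable (liftDensity s e h) := by
  have hmer := (continuous_meridianPoint (Z := EuclideanSpace ℝ (Fin (2 * s))) (e := e)).measurable
  have := hh.comp hmer
  unfold liftDensity
  fun_prop

/-- The potential at the points `(0, x)` of `LiftSpace s E` generated by `liftDensity s e h`. -/
noncomputable def axialPotential (s : ℕ) (e : E) (h : E → ℝ) (x : E) : ℝ :=
  newtonPotential (liftDensity s e h) (WithLp.toLp 2 (0, x))

/-- The Green potential of `h` in the half-space with inner normal `e`: it solves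
`-Δ u + s (s - 1) / x₁² u = h`. -/
noncomputable def greenPotential (s : ℕ) (e : E) (h : E → ℝ) (x : E) : ℝ :=
  (newtonConst (LiftSpace s E))⁻¹ * (⟪e, x⟫ ^ s * axialPotential s e h x)

/-- Absolute convergence of the integral defining `greenPotential s e h x`. -/
def GreenIntegrable (s : ℕ) (e : E) (h : E → ℝ) (x : E) : Prop :=
  Integrable fun Y : LiftSpace s E ↦ liftDensity s e h Y •
    rieszKernel 0 (newtonExponent (LiftSpace s E)) (WithLp.toLp 2 (0, x) - Y)

theorem newtonPotential_liftDensity (he : ‖e‖ = 1) :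
    newtonPotential (liftDensity s e h) = fun Y ↦ axialPotential s e h (meridianPoint e Y) := by
  ext Y
  obtain ⟨R, hR, hmer⟩ := exists_linearIsometryEquiv_meridianPoint he Y
  rw [axialPotential, ← hR, newtonPotential_map_of_comp_eq]
  simp [liftDensity, hmer]

theorem contDiffAt_one_greenPotential (he : ‖e‖ = 1) (hdim : 3 ≤ finrank ℝ (LiftSpace s E))
    (hh : Measurable h) (hC : ∀ x ∈ openHalfSpace e, |h x| ≤ C * ⟪e, x⟫ ^ b)
    (hx : x ∈ openHalfSpace e) (hint : GreenIntegrable s e h x) :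
    ContDiffAt ℝ 1 (greenPotential s e h) x := by
  set Y₀ : LiftSpace s E := WithLp.toLp 2 (0, x)
  have hY₀ : meridianPoint e Y₀ = x := meridianPoint_toLp_zero hx.le
  obtain ⟨C', hC'⟩ := exists_eventually_abs_liftDensity_le hC (s := s) (Y₀ := Y₀) (by rwa [hY₀])
  obtain ⟨r, hr, hball⟩ := Metric.eventually_nhds_iff_ball.1 hC'
  have hN : ContDiffAt ℝ 1 (newtonPotential (liftDensity s e h)) Y₀ :=
    contDiffAt_one_newtonPotential hdim (half_pos hr)
      (measurable_liftDensity hh).aestronglyMeasurable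
      (fun Y hY ↦ hball Y (by simpa [mul_div_cancel₀] using hY)) hint
  rw [newtonPotential_liftDensity he] at hN
  exact contDiffAt_const.mul (((contDiffAt_const.inner ℝ contDiffAt_id).pow s).mul
    (contDiffAt_of_comp_meridianPoint hx hN))

theorem contDiffAt_two_and_laplacian_greenPotential (he : ‖e‖ = 1)
    (hdim : 3 ≤ finrank ℝ (LiftSpace s E)) (hh : Measurable h)
    (hh1 : ContDiffOn ℝ 1 h (openHalfSpace e)) (hx : x ∈ openHalfSpace e)
    (hint : GreenIntegrable s e h x) :
    ContDiffAt ℝ 2 (greenPotential s e h) x ∧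
      Δ (greenPotential s e h) x = s * (s - 1) / ⟪e, x⟫ ^ 2 * greenPotential s e h x - h x := by
  set Y₀ : LiftSpace s E := WithLp.toLp 2 (0, x)
  have hY₀ : meridianPoint e Y₀ = x := meridianPoint_toLp_zero hx.le
  have hopen : IsOpen (meridianPoint (Z := EuclideanSpace ℝ (Fin (2 * s))) e ⁻¹' openHalfSpace e) :=
    (isOpen_openHalfSpace e).preimage continuous_meridianPoint
  obtain ⟨r, hr, hball⟩ := Metric.isOpen_iff.1 hopen Y₀ (by rwa [mem_preimage, hY₀])
  have hg1 : ContDiffOn ℝ 1 (liftDensity s e h) (ball Y₀ r) := fun Y hY ↦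
    (contDiffAt_liftDensity he (hball hY)
      (hh1.contDiffAt ((isOpen_openHalfSpace e).mem_nhds (hball hY)))).contDiffWithinAt
  obtain ⟨hN, hΔN⟩ := contDiffAt_two_and_laplacian_newtonPotential hdim hr
    (measurable_liftDensity hh).aestronglyMeasurable hg1 hint
  rw [newtonPotential_liftDensity he] at hN hΔN
  rw [laplacian_comp_meridianPoint hx hN] at hΔN
  have hv := hasLaplacianAt_of_contDiffAt (contDiffAt_of_comp_meridianPoint hx hN)
  have hlap := (hv.inner_rpow_mul he hx s).const_mul (newtonConst (LiftSpace s E))⁻¹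
  simp only [rpow_natCast] at hlap
  refine ⟨hlap.contDiffAt, hlap.laplacian_eq.trans ?_⟩
  have hpos : 0 < ⟪e, x⟫ := hx
  have hω := (newtonConst_pos hdim).ne'
  rw [liftDensity, hY₀, finrank_euclideanSpace_fin, hv.fderiv_apply, Nat.cast_mul,
    Nat.cast_ofNat] at hΔN
  rw [greenPotential, hΔN]
  field_simp
  ring

end GreenOperator

theorem integrable_and_integral_le_of_tendsto {α : Type*} [MeasurableSpace α] {μ : Measure α}
    {f : ℕ → α → ℝ} {F : α → ℝ} {I : ℝ} (hf : ∀ n, Integrable (f n) μ) (hf0 : ∀ n x, 0 ≤ f n x)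
    (hlim : ∀ x, Tendsto (fun n ↦ f n x) atTop (𝓝 (F x))) (hI : ∀ n, ∫ x, f n x ∂μ ≤ I) :
    Integrable F μ ∧ ∫ x, F x ∂μ ≤ I := by
  have hI0 : 0 ≤ I := (integral_nonneg (hf0 0)).trans (hI 0)
  have hF0 (x : α) : 0 ≤ F x := ge_of_tendsto' (hlim x) fun n ↦ hf0 n x
  have hFm : AEStronglyMeasurable F μ :=
    aestronglyMeasurable_of_tendsto_ae _ (fun n ↦ (hf n).aestronglyMeasurable) (.of_forall hlim)
  have hfatou : ∫⁻ x, ‖F x‖ₑ ∂μ ≤ ENNReal.ofReal I := by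
    simp only [← (hlim _).enorm.liminf_eq]
    refine (lintegral_liminf_le' fun n ↦ (hf n).aestronglyMeasurable.enorm).trans
      (liminf_le_of_le (by isBoundedDefault) fun b hb ↦ ?_)
    obtain ⟨n, hn⟩ := hb.exists
    refine hn.trans ?_
    rw [← ofReal_integral_norm_eq_lintegral_enorm (hf n)]
    simpa only [norm_of_nonneg (hf0 n _)] using ENNReal.ofReal_le_ofReal (hI n)
  refine ⟨⟨hFm, hfatou.trans_lt ENNReal.ofReal_lt_top⟩, ?_⟩
  rw [integral_eq_lintegral_of_nonneg_ae (.of_forall hF0) hFm]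
  refine ENNReal.toReal_le_of_le_ofReal hI0 ?_
  simpa only [enorm_of_nonneg (hF0 _)] using hfatou

section TruncatedPower

variable {E : Type*} [NormedAddCommGroup E] [InnerProductSpace ℝ E] {e x : E} {a R : ℝ} {s : ℕ}

/-- A smooth nonnegative truncation of `x₁ ^ (-a - 2)` to a sublevel set of
`halfSpaceExhaustion`. -/
noncomputable def truncatedPower (e : E) (a R : ℝ) (x : E) : ℝ :=
  smoothTransition (2 - halfSpaceExhaustion e x / R) * ⟪e, x⟫ ^ (-a - 2)

theorem contDiffOn_truncatedPower :
    ContDiffOn ℝ 1 (truncatedPower e a R) (openHalfSpace e) := by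
  intro x hx
  have hinner : ContDiffAt ℝ 1 (fun y ↦ ⟪e, y⟫) x := contDiffAt_const.inner ℝ contDiffAt_id
  have hψ : ContDiffAt ℝ 1 (fun y ↦ 2 - halfSpaceExhaustion e y / R) x :=
    contDiffAt_const.sub ((((hinner.pow 2).inv (pow_pos hx 2).ne').add
      (contDiffAt_id.norm_sq ℝ)).div_const R)
  exact ((smoothTransition.contDiffAt (n := 1)).comp x hψ |>.mul
    (hinner.rpow_const_of_ne hx.ne')).contDiffWithinAt

theorem measurable_truncatedPower [MeasurableSpace E] [BorelSpace E] :
    Measurable (truncatedPower e a R) := by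
  have := smoothTransition.continuous.measurable
  have : Measurable fun x : E ↦ ⟪e, x⟫ := (innerSL ℝ e).continuous.measurable
  unfold truncatedPower halfSpaceExhaustion
  fun_prop

theorem truncatedPower_nonneg (hx : x ∈ openHalfSpace e) : 0 ≤ truncatedPower e a R x :=
  mul_nonneg (smoothTransition.nonneg _) (rpow_nonneg (le_of_lt hx) _)

theorem truncatedPower_le (hx : x ∈ openHalfSpace e) :
    truncatedPower e a R x ≤ ⟪e, x⟫ ^ (-a - 2) :=
  mul_le_of_le_one_left (rpow_nonneg (le_of_lt hx) _) (smoothTransition.le_one _)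

theorem lt_of_truncatedPower_ne_zero (hR : 0 < R) (hx : truncatedPower e a R x ≠ 0) :
    halfSpaceExhaustion e x < 2 * R := by
  contrapose! hx
  rw [truncatedPower, smoothTransition.zero_of_nonpos, zero_mul]
  rw [sub_nonpos, le_div_iff₀ hR]
  exact hx

theorem tendsto_truncatedPower (e : E) (a : ℝ) (x : E) :
    Tendsto (fun j : ℕ ↦ truncatedPower e a (j + 1) x) atTop (𝓝 (⟪e, x⟫ ^ (-a - 2))) := by
  refine tendsto_const_nhds.congr' ?_
  filter_upwards [tendsto_natCast_atTop_atTop.eventually_ge_atTop (halfSpaceExhaustion e x)]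
    with j hj
  rw [truncatedPower, smoothTransition.one_of_one_le, one_mul]
  have : halfSpaceExhaustion e x / (j + 1) ≤ 1 := by
    rw [div_le_one (by positivity)]
    linarith
  linarith

theorem support_liftDensity_truncatedPower_subset (he : ‖e‖ = 1) (hR : 0 < R) :
    Function.support (liftDensity s e (truncatedPower e a R)) ⊆ ball 0 √(2 * R) := by
  intro Y hY
  have hlt := lt_of_truncatedPower_ne_zero hR (right_ne_zero_of_mul hY)
  rw [halfSpaceExhaustion, norm_meridianPoint he] at hlt
  rw [mem_ball_zero_iff]
  exact lt_sqrt_of_sq_lt (lt_of_le_of_lt (le_add_of_nonneg_left (by positivity)) hlt)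

theorem exists_norm_liftDensity_truncatedPower_le (he : ‖e‖ = 1) (ha : 0 < a) (hs : s ≠ 0)
    (hR : 0 < R) : ∃ C, ∀ Y, ‖liftDensity s e (truncatedPower e a R) Y‖ ≤ C := by
  refine ⟨√(2 * R) ^ (s + (a + 2)), fun Y ↦ ?_⟩
  rcases eq_or_ne (liftDensity s e (truncatedPower e a R) Y) 0 with hzero | hY
  · rw [hzero, norm_zero]
    positivity
  have hx : 0 < ⟪e, meridianPoint e Y⟫ :=
    (inner_meridianPoint_nonneg he).lt_of_ne' fun h ↦ hY (liftDensity_eq_zero hs h)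
  have hlt := lt_of_truncatedPower_ne_zero hR (right_ne_zero_of_mul hY)
  set X := ⟪e, meridianPoint e Y⟫
  have hinv : X⁻¹ ≤ √(2 * R) := by
    refine le_sqrt_of_sq_le ?_
    rw [inv_pow]
    exact (le_add_of_nonneg_right (sq_nonneg _)).trans hlt.le
  rw [liftDensity, norm_of_nonneg (mul_nonneg (by positivity) (truncatedPower_nonneg hx))]
  calc (X ^ s)⁻¹ * truncatedPower e a R (meridianPoint e Y)
      ≤ (X ^ s)⁻¹ * X ^ (-a - 2) := by gcongr; exact truncatedPower_le hx
    _ = X⁻¹ ^ (s + (a + 2)) := by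
      rw [inv_rpow hx.le, ← rpow_neg hx.le, ← rpow_natCast, ← rpow_neg hx.le, ← rpow_add hx]
      congr 1
      ring
    _ ≤ √(2 * R) ^ (s + (a + 2)) := by gcongr

end TruncatedPower

section Comparison

variable {E : Type*} [NormedAddCommGroup E] [InnerProductSpace ℝ E] [FiniteDimensional ℝ E]
  {e x : E}

theorem laplacian_inner_rpow (he : ‖e‖ = 1) (hx : x ∈ openHalfSpace e) (γ : ℝ) :
    Δ (fun y ↦ ⟪e, y⟫ ^ γ) x = γ * (γ - 1) * ⟪e, x⟫ ^ (γ - 2) := by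
  rw [((HasLaplacianAt.inner_left e).rpow_const hx γ).laplacian_eq, he]
  ring

theorem le_of_laplacian_sub_le {a k C D : ℝ} {u v : E → ℝ} (he : ‖e‖ = 1) (ha : 0 < a)
    (hk : (a + 2) * (a + 3) + 2 * finrank ℝ E ≤ k)
    (hu : ∀ x ∈ openHalfSpace e, ContDiffAt ℝ 2 u x)
    (hv : ∀ x ∈ openHalfSpace e, ContDiffAt ℝ 2 v x)
    (hΔ : ∀ x ∈ openHalfSpace e, Δ v x - Δ u x ≤ k / ⟪e, x⟫ ^ 2 * (v x - u x))
    (hu_le : ∀ x ∈ openHalfSpace e, u x ≤ C * ⟪e, x⟫ ^ (-a))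
    (hv_ge : ∀ x ∈ openHalfSpace e, -(D * ⟪e, x⟫ ^ (-a)) ≤ v x) (hx : x ∈ openHalfSpace e) :
    u x ≤ v x := by
  have hz (y : E) (hy : y ∈ openHalfSpace e) :=
    (hasLaplacianAt_of_contDiffAt (hv y hy)).sub (hasLaplacianAt_of_contDiffAt (hu y hy))
  refine sub_nonneg.1 (nonneg_of_laplacian_le_div_inner_sq_mul (z := fun y ↦ v y - u y)
    (C := C + D) he ha hk (fun y hy ↦ (hz y hy).contDiffAt) (fun y hy ↦ ?_) (fun y hy ↦ ?_) hx)
  · rw [(hz y hy).laplacian_eq]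
    exact hΔ y hy
  · linarith [hu_le y hy, hv_ge y hy]

end Comparison

section GreenBounds

theorem add_two_lt_of_mul_add_le {a : ℝ} {s N : ℕ} (ha : 0 < a)
    (hs : (a + 2) * (a + 3) + 2 * N ≤ s * (s - 1)) : a + 2 < s := by
  by_contra! hle
  nlinarith [(N.cast_nonneg : (0 : ℝ) ≤ N), (s.cast_nonneg : (0 : ℝ) ≤ s)]

theorem ne_zero_of_mul_add_le {a : ℝ} {s N : ℕ} (ha : 0 < a)
    (hs : (a + 2) * (a + 3) + 2 * N ≤ s * (s - 1)) : s ≠ 0 := by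
  rintro rfl
  linarith [add_two_lt_of_mul_add_le ha hs, (Nat.cast_zero : ((0 : ℕ) : ℝ) = 0)]

variable {E : Type*} [NormedAddCommGroup E] [InnerProductSpace ℝ E] [FiniteDimensional ℝ E]
  [MeasurableSpace E] [BorelSpace E] {e x : E} {a b C R : ℝ} {s : ℕ} {h h₁ h₂ : E → ℝ}

theorem greenPotential_const_mul (C : ℝ) (h : E → ℝ) (x : E) :
    greenPotential s e (fun y ↦ C * h y) x = C * greenPotential s e h x := by
  simp only [greenPotential, axialPotential, newtonPotential, liftDensity, smul_eq_mul,
    mul_left_comm _ C, mul_assoc C, integral_const_mul]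

theorem GreenIntegrable.const_mul (hint : GreenIntegrable s e h x) (C : ℝ) :
    GreenIntegrable s e (fun y ↦ C * h y) x := by
  refine (Integrable.const_mul hint C).congr (.of_forall fun Y ↦ ?_)
  simp only [liftDensity, smul_eq_mul]
  ring

theorem exists_abs_greenPotential_le_rpow (he : ‖e‖ = 1) (hE : 2 ≤ finrank ℝ E) (hs : s ≠ 0)
    (has : -a ≤ s) (has' : a ≤ s) (hh : Measurable h) (hC : ∀ Y, ‖liftDensity s e h Y‖ ≤ C)
    (hR : Function.support (liftDensity s e h) ⊆ ball 0 R) :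
    ∃ D, ∀ x ∈ openHalfSpace e, |greenPotential s e h x| ≤ D * ⟪e, x⟫ ^ (-a) := by
  have hdim := three_le_finrank_liftSpace hs (one_le_two.trans hE)
  have hfinrank : finrank ℝ (LiftSpace s E) = 2 * s + finrank ℝ E := by
    rw [(WithLp.linearEquiv 2 ℝ _).finrank_eq, finrank_prod, finrank_euclideanSpace_fin]
  obtain ⟨B, hB0, hB⟩ := exists_abs_newtonPotential_le_rpow (β := -(s + a)) hdim
    (measurable_liftDensity hh).aestronglyMeasurable hC hR
    (by
      have : (2 : ℝ) ≤ finrank ℝ E := by exact_mod_cast hE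
      rw [newtonExponent, hfinrank]
      push_cast
      linarith) (by linarith)
  refine ⟨(newtonConst (LiftSpace s E))⁻¹ * B, fun x hx ↦ ?_⟩
  have hpos : 0 < ⟪e, x⟫ := hx
  have hω := newtonConst_pos hdim
  have hnorm : ⟪e, x⟫ ≤ ‖(WithLp.toLp 2 (0, x) : LiftSpace s E)‖ := by
    rw [WithLp.norm_toLp_snd]
    simpa [he] using real_inner_le_norm e x
  rw [greenPotential, abs_mul, abs_mul, abs_of_pos (inv_pos.2 hω), abs_of_pos (pow_pos hpos s),
    mul_assoc]
  refine mul_le_mul_of_nonneg_left ?_ (inv_pos.2 hω).le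
  calc ⟪e, x⟫ ^ s * |axialPotential s e h x|
      ≤ ⟪e, x⟫ ^ s * (B * ⟪e, x⟫ ^ (-(s + a))) := by
        gcongr
        refine (hB _ (norm_pos_iff.1 (hpos.trans_le hnorm))).trans ?_
        gcongr ?_ * ?_
        exact rpow_le_rpow_of_nonpos hpos hnorm (by linarith)
    _ = B * ⟪e, x⟫ ^ (-a) := by
      rw [mul_left_comm, ← rpow_natCast, ← rpow_add hpos]
      congr 2
      ring

theorem greenPotential_le_rpow_of_le (he : ‖e‖ = 1) (hdim : 3 ≤ finrank ℝ (LiftSpace s E))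
    (ha : 0 < a) (hs : (a + 2) * (a + 3) + 2 * finrank ℝ E ≤ s * (s - 1)) (hh : Measurable h)
    (hh1 : ContDiffOn ℝ 1 h (openHalfSpace e)) (hint : ∀ x, GreenIntegrable s e h x)
    (hh_le : ∀ x ∈ openHalfSpace e, h x ≤ ⟪e, x⟫ ^ (-a - 2))
    (hC : ∀ x ∈ openHalfSpace e, greenPotential s e h x ≤ C * ⟪e, x⟫ ^ (-a))
    (hx : x ∈ openHalfSpace e) : greenPotential s e h x ≤ ⟪e, x⟫ ^ (-a) := by
  have hG (y : E) (hy : y ∈ openHalfSpace e) :=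
    contDiffAt_two_and_laplacian_greenPotential he hdim hh hh1 hy (hint y)
  have hnonneg (y : E) (hy : y ∈ openHalfSpace e) : 0 ≤ ⟪e, y⟫ ^ (-a) := rpow_nonneg (le_of_lt hy) _
  refine le_of_laplacian_sub_le (v := fun y ↦ ⟪e, y⟫ ^ (-a)) (D := 0) he ha hs
    (fun y hy ↦ (hG y hy).1)
    (fun y hy ↦ ((HasLaplacianAt.inner_left e).rpow_const hy (-a)).contDiffAt) (fun y hy ↦ ?_) hC
    (fun y hy ↦ by linarith [hnonneg y hy]) hx
  have hsa : a * (a + 1) + 1 ≤ s * (s - 1) := by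
    have : (0 : ℝ) ≤ finrank ℝ E := Nat.cast_nonneg _
    linarith
  have hpow : s * (s - 1) / ⟪e, y⟫ ^ 2 * ⟪e, y⟫ ^ (-a) = s * (s - 1) * ⟪e, y⟫ ^ (-a - 2) := by
    rw [rpow_sub hy, rpow_two]
    ring
  have hle := mul_le_mul_of_nonneg_right hsa (rpow_nonneg (le_of_lt hy) (-a - 2))
  rw [laplacian_inner_rpow he hy, (hG y hy).2, mul_sub (_ / _), hpow]
  linarith [hh_le y hy]

theorem greenPotential_truncatedPower_le (he : ‖e‖ = 1) (hE : 2 ≤ finrank ℝ E) (ha : 0 < a)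
    (hs : (a + 2) * (a + 3) + 2 * finrank ℝ E ≤ s * (s - 1)) (hR : 0 < R)
    (hx : x ∈ openHalfSpace e) :
    (∀ y, GreenIntegrable s e (truncatedPower e a R) y) ∧
      greenPotential s e (truncatedPower e a R) x ≤ ⟪e, x⟫ ^ (-a) := by
  have has := add_two_lt_of_mul_add_le ha hs
  have hs0 := ne_zero_of_mul_add_le ha hs
  have hdim := three_le_finrank_liftSpace hs0 (one_le_two.trans hE)
  obtain ⟨C, hC⟩ := exists_norm_liftDensity_truncatedPower_le he ha hs0 hR
  have hsupp := support_liftDensity_truncatedPower_subset (s := s) (a := a) he hR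
  have hmeas : Measurable (truncatedPower e a R) := measurable_truncatedPower
  have hint (y : E) : GreenIntegrable s e (truncatedPower e a R) y :=
    integrable_smul_newtonKernel hdim (measurable_liftDensity hmeas).aestronglyMeasurable hC hsupp _
  obtain ⟨D, hD⟩ := exists_abs_greenPotential_le_rpow (a := a) he hE hs0 (by linarith)
    (by linarith) hmeas hC hsupp
  exact ⟨hint, greenPotential_le_rpow_of_le he hdim ha hs hmeas contDiffOn_truncatedPower hint
    (fun y hy ↦ truncatedPower_le hy) (fun y hy ↦ (le_abs_self _).trans (hD y hy)) hx⟩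

theorem greenIntegrable_rpow_and_greenPotential_rpow_le (he : ‖e‖ = 1) (hE : 2 ≤ finrank ℝ E)
    (ha : 0 < a) (hs : (a + 2) * (a + 3) + 2 * finrank ℝ E ≤ s * (s - 1))
    (hx : x ∈ openHalfSpace e) :
    GreenIntegrable s e (fun y ↦ ⟪e, y⟫ ^ (-a - 2)) x ∧
      greenPotential s e (fun y ↦ ⟪e, y⟫ ^ (-a - 2)) x ≤ ⟪e, x⟫ ^ (-a) := by
  have hs0 := ne_zero_of_mul_add_le ha hs
  have hdim := three_le_finrank_liftSpace hs0 (one_le_two.trans hE)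
  have hω : 0 < newtonConst (LiftSpace s E) := newtonConst_pos hdim
  have hpos : 0 < ⟪e, x⟫ := hx
  have htrunc (j : ℕ) := greenPotential_truncatedPower_le he hE ha hs j.cast_add_one_pos hx
  have hgreen (h : E → ℝ) : greenPotential s e h x ≤ ⟪e, x⟫ ^ (-a) ↔
      axialPotential s e h x ≤ newtonConst (LiftSpace s E) * ⟪e, x⟫ ^ (-a) / ⟪e, x⟫ ^ s := by
    rw [greenPotential, inv_mul_le_iff₀ hω, le_div_iff₀' (pow_pos hpos s)]
  rw [hgreen]
  refine integrable_and_integral_le_of_tendsto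
    (f := fun (j : ℕ) (Y : LiftSpace s E) ↦ liftDensity s e (truncatedPower e a (j + 1)) Y •
      rieszKernel 0 (newtonExponent (LiftSpace s E)) (WithLp.toLp 2 (0, x) - Y))
    (fun j ↦ (htrunc j).1 x) (fun j Y ↦ ?_) (fun Y ↦ ?_) fun j ↦ (hgreen _).1 (htrunc j).2
  · refine smul_nonneg ?_ (rieszKernel_nonneg le_rfl _ _)
    have hle := liftDensity_mono (h₁ := fun _ ↦ 0) he hs0
      (fun y hy ↦ truncatedPower_nonneg (a := a) (R := j + 1) hy) Y
    rwa [liftDensity, mul_zero] at hle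
  · exact ((tendsto_truncatedPower e a _).const_mul _).smul_const _

theorem aestronglyMeasurable_greenIntegrand (hh : Measurable h) :
    AEStronglyMeasurable fun Y : LiftSpace s E ↦ liftDensity s e h Y •
      rieszKernel 0 (newtonExponent (LiftSpace s E)) (WithLp.toLp 2 (0, x) - Y) :=
  ((measurable_liftDensity hh).smul
    ((measurable_rieszKernel 0 _).comp (measurable_const.sub measurable_id))).aestronglyMeasurable

theorem GreenIntegrable.mono (he : ‖e‖ = 1) (hs : s ≠ 0) (hint : GreenIntegrable s e h₂ x)
    (hh : Measurable h₁) (hle : ∀ x ∈ openHalfSpace e, |h₁ x| ≤ h₂ x) :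
    GreenIntegrable s e h₁ x := by
  exact Integrable.mono' hint (aestronglyMeasurable_greenIntegrand hh)
    (.of_forall (norm_greenIntegrand_le he hs hle))

theorem greenPotential_mono (he : ‖e‖ = 1) (hdim : 3 ≤ finrank ℝ (LiftSpace s E)) (hs : s ≠ 0)
    (hint₁ : GreenIntegrable s e h₁ x) (hint₂ : GreenIntegrable s e h₂ x)
    (hle : ∀ x ∈ openHalfSpace e, h₁ x ≤ h₂ x) (hx : x ∈ openHalfSpace e) :
    greenPotential s e h₁ x ≤ greenPotential s e h₂ x := by
  have hω := newtonConst_pos hdim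
  have hpos : 0 < ⟪e, x⟫ := hx
  unfold greenPotential
  gcongr
  exact integral_mono hint₁ hint₂ fun Y ↦
    mul_le_mul_of_nonneg_right (liftDensity_mono he hs hle Y) (rieszKernel_nonneg le_rfl _ _)

theorem tendsto_greenPotential_of_tendsto (he : ‖e‖ = 1) (hs : s ≠ 0) {f : ℕ → E → ℝ} {F : E → ℝ}
    (hf : ∀ j, Measurable (f j)) (hle : ∀ j, ∀ x ∈ openHalfSpace e, |f j x| ≤ h x)
    (hint : GreenIntegrable s e h x)
    (hlim : ∀ x ∈ openHalfSpace e, Tendsto (fun j ↦ f j x) atTop (𝓝 (F x))) :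
    Tendsto (fun j ↦ greenPotential s e (f j) x) atTop (𝓝 (greenPotential s e F x)) := by
  refine ((tendsto_integral_of_dominated_convergence _
    (fun j ↦ aestronglyMeasurable_greenIntegrand (hf j)) hint
    (fun j ↦ .of_forall (norm_greenIntegrand_le he hs (hle j)))
    (.of_forall fun Y ↦ ?_)).const_mul _).const_mul _
  refine Tendsto.smul_const ?_ _
  rcases (inner_meridianPoint_nonneg he (Y := Y)).eq_or_lt' with hY | hY
  · simp only [liftDensity_eq_zero hs hY, tendsto_const_nhds]
  · exact (hlim _ hY).const_mul _

theorem greenIntegrable_and_abs_greenPotential_le (he : ‖e‖ = 1) (hE : 2 ≤ finrank ℝ E)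
    (ha : 0 < a) (hs : (a + 2) * (a + 3) + 2 * finrank ℝ E ≤ s * (s - 1)) (hh : Measurable h)
    (hC : ∀ x ∈ openHalfSpace e, |h x| ≤ C * ⟪e, x⟫ ^ (-a - 2)) (hx : x ∈ openHalfSpace e) :
    GreenIntegrable s e h x ∧ |greenPotential s e h x| ≤ C * ⟪e, x⟫ ^ (-a) := by
  have hs0 := ne_zero_of_mul_add_le ha hs
  have hdim := three_le_finrank_liftSpace hs0 (one_le_two.trans hE)
  have hC0 : 0 ≤ C := nonneg_of_mul_nonneg_left ((abs_nonneg _).trans (hC x hx))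
    (rpow_pos_of_pos hx _)
  obtain ⟨hint, hle⟩ := greenIntegrable_rpow_and_greenPotential_rpow_le he hE ha hs hx
  have hintC (D : ℝ) := hint.const_mul D
  have hinth := (hintC C).mono he hs0 hh hC
  have hCle : C * greenPotential s e (fun y ↦ ⟪e, y⟫ ^ (-a - 2)) x ≤ C * ⟪e, x⟫ ^ (-a) :=
    mul_le_mul_of_nonneg_left hle hC0
  refine ⟨hinth, abs_le.2 ⟨?_, ?_⟩⟩
  · refine (neg_le_neg hCle).trans ?_
    rw [← neg_mul, ← greenPotential_const_mul]
    refine greenPotential_mono he hdim hs0 (hintC _) hinth (fun y hy ↦ ?_) hx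
    rw [neg_mul]
    exact neg_le_of_abs_le (hC y hy)
  · refine le_trans ?_ hCle
    rw [← greenPotential_const_mul]
    exact greenPotential_mono he hdim hs0 hinth (hintC _) (fun y hy ↦ le_of_abs_le (hC y hy)) hx

end GreenBounds

section MonotoneIteration

theorem measurable_greenPotential {E : Type*} [NormedAddCommGroup E] [InnerProductSpace ℝ E]
    [FiniteDimensional ℝ E] [MeasurableSpace E] [BorelSpace E] {e : E} {s : ℕ} {h : E → ℝ}
    (hh : Measurable h) : Measurable (greenPotential s e h) := by
  have hkernel : Measurable fun q : E × LiftSpace s E ↦ liftDensity s e h q.2 •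
      rieszKernel 0 (newtonExponent (LiftSpace s E)) (WithLp.toLp 2 (0, q.1) - q.2) :=
    ((measurable_liftDensity hh).comp measurable_snd).smul
      ((measurable_rieszKernel 0 _).comp (((WithLp.prod_continuous_toLp 2 _ _).measurable.comp
        (measurable_const.prodMk measurable_fst)).sub measurable_snd))
  exact (((innerSL ℝ e).continuous.measurable.pow_const s).mul
    hkernel.stronglyMeasurable.integral_prod_right'.measurable).const_mul _

theorem greenPotential_congr {E : Type*} [NormedAddCommGroup E] [InnerProductSpace ℝ E]
    [FiniteDimensional ℝ E] [MeasurableSpace E] [BorelSpace E] {e : E} {s : ℕ} {h₁ h₂ : E → ℝ}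
    (he : ‖e‖ = 1) (hs : s ≠ 0) (heq : ∀ x ∈ openHalfSpace e, h₁ x = h₂ x) :
    greenPotential s e h₁ = greenPotential s e h₂ := by
  have hlift : liftDensity s e h₁ = liftDensity s e h₂ := funext fun Y ↦
    (liftDensity_mono he hs (fun x hx ↦ (heq x hx).le) Y).antisymm
      (liftDensity_mono he hs (fun x hx ↦ (heq x hx).ge) Y)
  unfold greenPotential axialPotential
  rw [hlift]

variable {E : Type*} [NormedAddCommGroup E] [InnerProductSpace ℝ E] {e x : E} {K μ p a A : ℝ}
  {s : ℕ} {u v w ψ φ : E → ℝ}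

/-- With `K = s (s - 1) + μ`, the equation `Δ u + μ / x₁² u = u ^ p` is
`-Δ u + s (s - 1) / x₁² u = K / x₁² u - u ^ p`. This is the right-hand side. -/
noncomputable def shiftedSource (e : E) (K p : ℝ) (u : E → ℝ) (x : E) : ℝ :=
  K / ⟪e, x⟫ ^ 2 * u x - u x ^ p

theorem monotoneOn_const_mul_sub_rpow {k p M : ℝ} (hp : 1 < p) (hM : p * M ^ (p - 1) ≤ k) :
    MonotoneOn (fun t ↦ k * t - t ^ p) (Icc 0 M) := by
  have hderiv (t : ℝ) : HasDerivAt (fun t ↦ k * t - t ^ p) (k - p * t ^ (p - 1)) t := by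
    simpa using ((hasDerivAt_id' t).const_mul k).fun_sub (hasDerivAt_rpow_const (.inr hp.le))
  refine monotoneOn_of_deriv_nonneg (convex_Icc 0 M)
    (fun t _ ↦ (hderiv t).continuousAt.continuousWithinAt)
    (fun t _ ↦ (hderiv t).differentiableAt.differentiableWithinAt) fun t ht ↦ ?_
  rw [interior_Icc] at ht
  rw [(hderiv t).deriv, sub_nonneg]
  exact (mul_le_mul_of_nonneg_left (rpow_le_rpow ht.1.le ht.2.le (by linarith))
    (by linarith)).trans hM

/-- The shift `s` makes `u ↦ K / x₁² u - u ^ p` increasing on `[0, A x₁ ^ (-a)]` and the Green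
potential of `x₁ ^ (-a - 2)` finite, in dimension `n`. -/
structure IsAdmissibleShift (n : ℕ) (μ p a A : ℝ) (s : ℕ) : Prop where
  one_lt : 1 < p
  mul_sub_one : a * (p - 1) = 2
  nonneg : 0 ≤ A
  mul_add_le : (a + 2) * (a + 3) + 2 * n ≤ s * (s - 1)
  mul_rpow_le : p * A ^ (p - 1) ≤ s * (s - 1) + μ

theorem exists_isAdmissibleShift (n : ℕ) (μ : ℝ) (hp : 1 < p) (hap : a * (p - 1) = 2)
    (hA : 0 ≤ A) : ∃ s, IsAdmissibleShift n μ p a A s := by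
  obtain ⟨s, hs⟩ := exists_nat_ge (2 + |(a + 2) * (a + 3) + 2 * n| + |p * A ^ (p - 1) - μ|)
  have hle : |(a + 2) * (a + 3) + 2 * n| + |p * A ^ (p - 1) - μ| ≤ s * (s - 1 : ℝ) := by
    nlinarith [abs_nonneg ((a + 2) * (a + 3) + 2 * n), abs_nonneg (p * A ^ (p - 1) - μ)]
  refine ⟨s, hp, hap, hA, ?_, ?_⟩
  · linarith [le_abs_self ((a + 2) * (a + 3) + 2 * n), abs_nonneg (p * A ^ (p - 1) - μ)]
  · linarith [le_abs_self (p * A ^ (p - 1) - μ), abs_nonneg ((a + 2) * (a + 3) + 2 * n)]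

namespace IsAdmissibleShift

theorem pos {n : ℕ} (h : IsAdmissibleShift n μ p a A s) : 0 < a :=
  pos_of_mul_pos_left (by rw [h.mul_sub_one]; exact two_pos) (sub_pos.2 h.one_lt).le

theorem ne_zero {n : ℕ} (h : IsAdmissibleShift n μ p a A s) : s ≠ 0 :=
  ne_zero_of_mul_add_le h.pos h.mul_add_le

theorem shift_nonneg {n : ℕ} (h : IsAdmissibleShift n μ p a A s) : 0 ≤ s * (s - 1) + μ :=
  (mul_nonneg (zero_le_one.trans h.one_lt.le) (rpow_nonneg h.nonneg _)).trans h.mul_rpow_le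

theorem shiftedSource_mono {n : ℕ} (h : IsAdmissibleShift n μ p a A s)
    (hx : x ∈ openHalfSpace e) (hu : 0 ≤ u x) (huv : u x ≤ v x) (hv : v x ≤ A * ⟪e, x⟫ ^ (-a)) :
    shiftedSource e (s * (s - 1) + μ) p u x ≤ shiftedSource e (s * (s - 1) + μ) p v x := by
  have hpos : 0 < ⟪e, x⟫ := hx
  refine monotoneOn_const_mul_sub_rpow h.one_lt ?_ ⟨hu, huv.trans hv⟩ ⟨hu.trans huv, hv⟩ huv
  have hpow : (⟪e, x⟫ ^ (-a)) ^ (p - 1) = (⟪e, x⟫ ^ 2)⁻¹ := by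
    rw [← rpow_mul hpos.le, neg_mul, h.mul_sub_one, rpow_neg hpos.le, rpow_two]
  rw [mul_rpow h.nonneg (rpow_nonneg hpos.le _), hpow, ← mul_assoc, div_eq_mul_inv]
  exact mul_le_mul_of_nonneg_right h.mul_rpow_le (by positivity)

theorem abs_shiftedSource_le {n : ℕ} (h : IsAdmissibleShift n μ p a A s)
    (hx : x ∈ openHalfSpace e) (hu : 0 ≤ u x) (huA : u x ≤ A * ⟪e, x⟫ ^ (-a)) :
    |shiftedSource e (s * (s - 1) + μ) p u x| ≤
      (s * (s - 1) + μ) * A * ⟪e, x⟫ ^ (-a - 2) := by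
  have hpos : 0 < ⟪e, x⟫ := hx
  have hnonneg := h.shiftedSource_mono (u := 0) hx le_rfl hu huA
  rw [shiftedSource, Pi.zero_apply, mul_zero, zero_rpow (zero_lt_one.trans h.one_lt).ne',
    sub_zero] at hnonneg
  rw [abs_of_nonneg hnonneg, shiftedSource]
  calc (s * (s - 1) + μ) / ⟪e, x⟫ ^ 2 * u x - u x ^ p
      ≤ (s * (s - 1) + μ) / ⟪e, x⟫ ^ 2 * u x := sub_le_self _ (rpow_nonneg hu p)
    _ ≤ (s * (s - 1) + μ) / ⟪e, x⟫ ^ 2 * (A * ⟪e, x⟫ ^ (-a)) :=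
      mul_le_mul_of_nonneg_left huA (div_nonneg h.shift_nonneg (by positivity))
    _ = (s * (s - 1) + μ) * A * ⟪e, x⟫ ^ (-a - 2) := by
      rw [rpow_sub hpos, rpow_two]
      ring

end IsAdmissibleShift

theorem contDiffOn_shiftedSource (hp : 1 ≤ p) (hu : ContDiffOn ℝ 1 u (openHalfSpace e)) :
    ContDiffOn ℝ 1 (shiftedSource e K p u) (openHalfSpace e) := by
  have hinner : ContDiff ℝ 1 fun y : E ↦ ⟪e, y⟫ := contDiff_const.inner ℝ contDiff_id
  have hrpow : ContDiff ℝ 1 fun t : ℝ ↦ t ^ p :=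
    contDiff_rpow_const_of_le (n := 1) (by simpa using hp)
  exact ((contDiffOn_const.div (hinner.pow 2).contDiffOn fun y hy ↦ (pow_pos hy 2).ne').mul
    hu).sub (hrpow.comp_contDiffOn hu)

variable [MeasurableSpace E]

theorem measurable_shiftedSource [BorelSpace E] (hu : Measurable u) :
    Measurable (shiftedSource e K p u) :=
  ((measurable_const.div ((innerSL ℝ e).continuous.measurable.pow_const 2)).mul hu).sub
    (hu.pow_const p)

/-- A nonnegative classical subsolution of `Δ u + μ / x₁² u = u ^ p` in the half-space. -/
structure IsHardySubsolution [FiniteDimensional ℝ E] (e : E) (μ p : ℝ) (u : E → ℝ) : Prop where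
  measurable : Measurable u
  contDiffAt : ∀ x ∈ openHalfSpace e, ContDiffAt ℝ 2 u x
  nonneg : ∀ x ∈ openHalfSpace e, 0 ≤ u x
  rpow_le : ∀ x ∈ openHalfSpace e, u x ^ p ≤ Δ u x + μ / ⟪e, x⟫ ^ 2 * u x

/-- A nonnegative classical supersolution of `Δ u + μ / x₁² u = u ^ p` in the half-space. -/
structure IsHardySupersolution [FiniteDimensional ℝ E] (e : E) (μ p : ℝ) (u : E → ℝ) : Prop where
  measurable : Measurable u
  contDiffAt : ∀ x ∈ openHalfSpace e, ContDiffAt ℝ 2 u x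
  nonneg : ∀ x ∈ openHalfSpace e, 0 ≤ u x
  le_rpow : ∀ x ∈ openHalfSpace e, Δ u x + μ / ⟪e, x⟫ ^ 2 * u x ≤ u x ^ p

variable [FiniteDimensional ℝ E] [BorelSpace E]

/-- One step of the monotone iteration: `w = iterationMap u` solves
`-Δ w + s (s - 1) / x₁² w = K / x₁² u - u ^ p`, where `K = s (s - 1) + μ`. -/
noncomputable def iterationMap (s : ℕ) (e : E) (μ p : ℝ) (u : E → ℝ) : E → ℝ :=
  greenPotential s e (shiftedSource e (s * (s - 1) + μ) p u)

theorem measurable_iterationMap (hu : Measurable u) : Measurable (iterationMap s e μ p u) :=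
  measurable_greenPotential (measurable_shiftedSource hu)

namespace IsAdmissibleShift

variable (h : IsAdmissibleShift (finrank ℝ E) μ p a A s) (he : ‖e‖ = 1) (hE : 2 ≤ finrank ℝ E)

include h he hE

theorem greenIntegrable_shiftedSource (hum : Measurable u)
    (hu : ∀ x ∈ openHalfSpace e, 0 ≤ u x ∧ u x ≤ A * ⟪e, x⟫ ^ (-a)) (hx : x ∈ openHalfSpace e) :
    GreenIntegrable s e (shiftedSource e (s * (s - 1) + μ) p u) x ∧
      |iterationMap s e μ p u x| ≤ (s * (s - 1) + μ) * A * ⟪e, x⟫ ^ (-a) :=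
  greenIntegrable_and_abs_greenPotential_le he hE h.pos h.mul_add_le (measurable_shiftedSource hum)
    (fun y hy ↦ h.abs_shiftedSource_le hy (hu y hy).1 (hu y hy).2) hx

theorem iterationMap_mono (hum : Measurable u) (hvm : Measurable v)
    (hu : ∀ x ∈ openHalfSpace e, 0 ≤ u x) (huv : ∀ x ∈ openHalfSpace e, u x ≤ v x)
    (hv : ∀ x ∈ openHalfSpace e, v x ≤ A * ⟪e, x⟫ ^ (-a)) (hx : x ∈ openHalfSpace e) :
    iterationMap s e μ p u x ≤ iterationMap s e μ p v x :=
  greenPotential_mono he (three_le_finrank_liftSpace h.ne_zero (one_le_two.trans hE)) h.ne_zero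
    (h.greenIntegrable_shiftedSource he hE hum
      (fun y hy ↦ ⟨hu y hy, (huv y hy).trans (hv y hy)⟩) hx).1
    (h.greenIntegrable_shiftedSource he hE hvm
      (fun y hy ↦ ⟨(hu y hy).trans (huv y hy), hv y hy⟩) hx).1
    (fun y hy ↦ h.shiftedSource_mono hy (hu y hy) (huv y hy) (hv y hy)) hx

theorem contDiffAt_two_and_laplacian_iterationMap (hum : Measurable u)
    (hu1 : ContDiffOn ℝ 1 u (openHalfSpace e))
    (hu : ∀ x ∈ openHalfSpace e, 0 ≤ u x ∧ u x ≤ A * ⟪e, x⟫ ^ (-a)) (hx : x ∈ openHalfSpace e) :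
    ContDiffAt ℝ 2 (iterationMap s e μ p u) x ∧ Δ (iterationMap s e μ p u) x =
      s * (s - 1) / ⟪e, x⟫ ^ 2 * iterationMap s e μ p u x -
        shiftedSource e (s * (s - 1) + μ) p u x :=
  contDiffAt_two_and_laplacian_greenPotential he
    (three_le_finrank_liftSpace h.ne_zero (one_le_two.trans hE)) (measurable_shiftedSource hum)
    (contDiffOn_shiftedSource h.one_lt.le hu1) hx
    (h.greenIntegrable_shiftedSource he hE hum hu hx).1

theorem _root_.IsHardySubsolution.le_iterationMap (hψ : IsHardySubsolution e μ p ψ)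
    (hψA : ∀ x ∈ openHalfSpace e, ψ x ≤ A * ⟪e, x⟫ ^ (-a)) (hx : x ∈ openHalfSpace e) :
    ψ x ≤ iterationMap s e μ p ψ x := by
  have hbound (y : E) (hy : y ∈ openHalfSpace e) := And.intro (hψ.nonneg y hy) (hψA y hy)
  have hψ1 : ContDiffOn ℝ 1 ψ (openHalfSpace e) := fun y hy ↦
    ((hψ.contDiffAt y hy).of_le one_le_two).contDiffWithinAt
  have hT (y : E) (hy : y ∈ openHalfSpace e) :=
    h.contDiffAt_two_and_laplacian_iterationMap he hE hψ.measurable hψ1 hbound hy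
  refine le_of_laplacian_sub_le he h.pos h.mul_add_le hψ.contDiffAt (fun y hy ↦ (hT y hy).1)
    (fun y hy ↦ ?_) hψA
    (fun y hy ↦ neg_le_of_abs_le (h.greenIntegrable_shiftedSource he hE hψ.measurable hbound hy).2)
    hx
  rw [(hT y hy).2, shiftedSource, add_div]
  linarith [hψ.rpow_le y hy]

theorem _root_.IsHardySupersolution.iterationMap_le (hw : IsHardySupersolution e μ p w)
    (hwA : ∀ x ∈ openHalfSpace e, w x ≤ A * ⟪e, x⟫ ^ (-a)) (hx : x ∈ openHalfSpace e) :
    iterationMap s e μ p w x ≤ w x := by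
  have hbound (y : E) (hy : y ∈ openHalfSpace e) := And.intro (hw.nonneg y hy) (hwA y hy)
  have hw1 : ContDiffOn ℝ 1 w (openHalfSpace e) := fun y hy ↦
    ((hw.contDiffAt y hy).of_le one_le_two).contDiffWithinAt
  have hT (y : E) (hy : y ∈ openHalfSpace e) :=
    h.contDiffAt_two_and_laplacian_iterationMap he hE hw.measurable hw1 hbound hy
  refine le_of_laplacian_sub_le he h.pos h.mul_add_le (fun y hy ↦ (hT y hy).1) hw.contDiffAt
    (fun y hy ↦ ?_)
    (fun y hy ↦ le_of_abs_le (h.greenIntegrable_shiftedSource he hE hw.measurable hbound hy).2)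
    (fun y hy ↦ ?_) (D := 0) hx
  · rw [(hT y hy).2, shiftedSource, add_div]
    linarith [hw.le_rpow y hy]
  · linarith [hw.nonneg y hy]

end IsAdmissibleShift

end MonotoneIteration

section MinimalSolution

variable {E : Type*} [NormedAddCommGroup E] [InnerProductSpace ℝ E] [FiniteDimensional ℝ E]
  [MeasurableSpace E] {e x : E} {μ p a A : ℝ} {s : ℕ} {u w φ : E → ℝ}

/-- `φ` is a maximum of classical subsolutions: each of its values is attained by a subsolution
lying below `φ`. -/
def IsHardySubsolutionEnvelope (e : E) (μ p : ℝ) (φ : E → ℝ) : Prop :=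
  ∀ x ∈ openHalfSpace e, ∃ ψ, IsHardySubsolution e μ p ψ ∧ ψ x = φ x ∧
    ∀ y ∈ openHalfSpace e, ψ y ≤ φ y

theorem IsHardySubsolutionEnvelope.nonneg (hφ : IsHardySubsolutionEnvelope e μ p φ)
    (hx : x ∈ openHalfSpace e) : 0 ≤ φ x := by
  obtain ⟨ψ, hψ, hψx, -⟩ := hφ x hx
  exact hψx ▸ hψ.nonneg x hx

variable [BorelSpace E]

theorem measurable_iterate_iterationMap (hφm : Measurable φ) (j : ℕ) :
    Measurable ((iterationMap s e μ p)^[j] φ) :=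
  Function.Iterate.rec _ hφm (fun _ ↦ measurable_iterationMap) j

theorem isHardySupersolution_const_mul_rpow (he : ‖e‖ = 1) (hp : 1 < p) (hap : a * (p - 1) = 2)
    (hA0 : 0 ≤ A) (hA : a * (a + 1) + μ ≤ A ^ (p - 1)) :
    IsHardySupersolution e μ p fun x ↦ A * ⟪e, x⟫ ^ (-a) where
  measurable := ((innerSL ℝ e).continuous.measurable.pow_const (-a)).const_mul A
  contDiffAt x hx := (((HasLaplacianAt.inner_left e).rpow_const hx (-a)).const_mul A).contDiffAt
  nonneg x hx := mul_nonneg hA0 (rpow_nonneg (le_of_lt hx) _)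
  le_rpow x hx := by
    have hpos : 0 < ⟪e, x⟫ := hx
    have hpow : (⟪e, x⟫ ^ (-a)) ^ p = ⟪e, x⟫ ^ (-a - 2) := by
      rw [← rpow_mul hpos.le]
      congr 1
      linarith
    have hAp : A ^ p = A ^ (p - 1) * A := by
      rw [← rpow_add_one' hA0 (by linarith), sub_add_cancel]
    rw [(((HasLaplacianAt.inner_left e).rpow_const hx (-a)).const_mul A).laplacian_eq,
      mul_rpow hA0 (rpow_nonneg hpos.le _), hpow, hAp, he]
    calc _ = (a * (a + 1) + μ) * (A * ⟪e, x⟫ ^ (-a - 2)) := by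
          rw [rpow_sub hpos (-a) 2, rpow_two]
          ring
      _ ≤ A ^ (p - 1) * (A * ⟪e, x⟫ ^ (-a - 2)) := by gcongr
      _ = _ := by ring

namespace IsAdmissibleShift

variable (h : IsAdmissibleShift (finrank ℝ E) μ p a A s) (he : ‖e‖ = 1) (hE : 2 ≤ finrank ℝ E)
include h he hE

theorem le_iterationMap_of_le (hφ : IsHardySubsolutionEnvelope e μ p φ) (hum : Measurable u)
    (hφu : ∀ x ∈ openHalfSpace e, φ x ≤ u x)
    (huA : ∀ x ∈ openHalfSpace e, u x ≤ A * ⟪e, x⟫ ^ (-a)) (hx : x ∈ openHalfSpace e) :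
    φ x ≤ iterationMap s e μ p u x := by
  obtain ⟨ψ, hψ, hψx, hψφ⟩ := hφ x hx
  have hψu (y : E) (hy : y ∈ openHalfSpace e) := (hψφ y hy).trans (hφu y hy)
  rw [← hψx]
  exact (hψ.le_iterationMap h he hE (fun y hy ↦ (hψu y hy).trans (huA y hy)) hx).trans
    (h.iterationMap_mono he hE hψ.measurable hum hψ.nonneg hψu huA hx)

theorem le_iterate_and_iterate_le (hφ : IsHardySubsolutionEnvelope e μ p φ) (hφm : Measurable φ)
    (hw : IsHardySupersolution e μ p w) (hφw : ∀ x ∈ openHalfSpace e, φ x ≤ w x)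
    (hwA : ∀ x ∈ openHalfSpace e, w x ≤ A * ⟪e, x⟫ ^ (-a)) (j : ℕ) :
    ∀ x ∈ openHalfSpace e, φ x ≤ (iterationMap s e μ p)^[j] φ x ∧
      (iterationMap s e μ p)^[j] φ x ≤ w x := by
  induction j with
  | zero => exact fun x hx ↦ ⟨le_rfl, hφw x hx⟩
  | succ j ih =>
    intro x hx
    have hmeas := measurable_iterate_iterationMap (s := s) (e := e) (μ := μ) (p := p) hφm j
    rw [Function.iterate_succ_apply']
    refine ⟨h.le_iterationMap_of_le he hE hφ hmeas (fun y hy ↦ (ih y hy).1)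
      (fun y hy ↦ (ih y hy).2.trans (hwA y hy)) hx, ?_⟩
    exact (h.iterationMap_mono he hE hmeas hw.measurable
      (fun y hy ↦ (hφ.nonneg hy).trans (ih y hy).1) (fun y hy ↦ (ih y hy).2) hwA hx).trans
      (hw.iterationMap_le h he hE hwA hx)

theorem monotone_iterate (hφ : IsHardySubsolutionEnvelope e μ p φ) (hφm : Measurable φ)
    (hA : ∀ j, ∀ x ∈ openHalfSpace e, φ x ≤ (iterationMap s e μ p)^[j] φ x ∧
      (iterationMap s e μ p)^[j] φ x ≤ A * ⟪e, x⟫ ^ (-a)) (hx : x ∈ openHalfSpace e) :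
    Monotone fun j ↦ (iterationMap s e μ p)^[j] φ x := by
  have hmeas := measurable_iterate_iterationMap (s := s) (e := e) (μ := μ) (p := p) hφm
  suffices hsucc : ∀ j, ∀ x ∈ openHalfSpace e,
      (iterationMap s e μ p)^[j] φ x ≤ (iterationMap s e μ p)^[j + 1] φ x from
    monotone_nat_of_le_succ fun j ↦ hsucc j x hx
  intro j
  induction j with
  | zero => exact fun x hx ↦ (hA 1 x hx).1
  | succ j ih =>
    intro x hx
    rw [Function.iterate_succ_apply', Function.iterate_succ_apply' _ (j + 1)]
    exact h.iterationMap_mono he hE (hmeas j) (hmeas (j + 1))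
      (fun y hy ↦ (hφ.nonneg hy).trans (hA j y hy).1) ih (fun y hy ↦ (hA (j + 1) y hy).2) hx

theorem tendsto_iterationMap {f : ℕ → E → ℝ} (hf : ∀ j, Measurable (f j))
    (hfA : ∀ j, ∀ x ∈ openHalfSpace e, 0 ≤ f j x ∧ f j x ≤ A * ⟪e, x⟫ ^ (-a))
    (hlim : ∀ x ∈ openHalfSpace e, Tendsto (fun j ↦ f j x) atTop (𝓝 (u x)))
    (hx : x ∈ openHalfSpace e) :
    Tendsto (fun j ↦ iterationMap s e μ p (f j) x) atTop (𝓝 (iterationMap s e μ p u x)) :=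
  tendsto_greenPotential_of_tendsto he h.ne_zero (fun j ↦ measurable_shiftedSource (hf j))
    (fun j y hy ↦ h.abs_shiftedSource_le hy (hfA j y hy).1 (hfA j y hy).2)
    ((greenIntegrable_rpow_and_greenPotential_rpow_le he hE h.pos h.mul_add_le hx).1.const_mul _)
    fun y hy ↦ ((hlim y hy).const_mul _).sub
      ((hlim y hy).rpow_const (.inr (zero_le_one.trans h.one_lt.le)))

theorem contDiffAt_two_and_laplacian_of_iterationMap_eq (hum : Measurable u)
    (hu : ∀ x ∈ openHalfSpace e, 0 ≤ u x ∧ u x ≤ A * ⟪e, x⟫ ^ (-a))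
    (hfix : ∀ x ∈ openHalfSpace e, iterationMap s e μ p u x = u x) (hx : x ∈ openHalfSpace e) :
    ContDiffAt ℝ 2 (iterationMap s e μ p u) x ∧ Δ (iterationMap s e μ p u) x +
      μ / ⟪e, x⟫ ^ 2 * iterationMap s e μ p u x = iterationMap s e μ p u x ^ p := by
  set v := iterationMap s e μ p u
  have hvm : Measurable v := measurable_iterationMap hum
  have hvbound (y : E) (hy : y ∈ openHalfSpace e) : 0 ≤ v y ∧ v y ≤ A * ⟪e, y⟫ ^ (-a) := by
    rw [hfix y hy]
    exact hu y hy
  have hv1 : ContDiffOn ℝ 1 v (openHalfSpace e) := fun y hy ↦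
    (contDiffAt_one_greenPotential he
      (three_le_finrank_liftSpace h.ne_zero (one_le_two.trans hE)) (measurable_shiftedSource hum)
      (fun z hz ↦ h.abs_shiftedSource_le hz (hu z hz).1 (hu z hz).2) hy
      (h.greenIntegrable_shiftedSource he hE hum hu hy).1).contDiffWithinAt
  have hvv : iterationMap s e μ p v = v := greenPotential_congr he h.ne_zero fun y hy ↦ by
    rw [shiftedSource, shiftedSource, hfix y hy]
  obtain ⟨hC2, hlap⟩ := h.contDiffAt_two_and_laplacian_iterationMap he hE hvm hv1 hvbound hx
  rw [hvv] at hC2 hlap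
  refine ⟨hC2, ?_⟩
  rw [hlap, shiftedSource]
  ring

end IsAdmissibleShift

theorem exists_minimal_solution (he : ‖e‖ = 1) (hE : 2 ≤ finrank ℝ E) (hp : 1 < p)
    (hap : a * (p - 1) = 2) (hA0 : 0 ≤ A) (hA : a * (a + 1) + μ ≤ A ^ (p - 1))
    (hφm : Measurable φ) (hφ : IsHardySubsolutionEnvelope e μ p φ)
    (hφA : ∀ x ∈ openHalfSpace e, φ x ≤ A * ⟪e, x⟫ ^ (-a)) :
    ∃ u : E → ℝ, (∀ x ∈ openHalfSpace e, ContDiffAt ℝ 2 u x ∧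
        Δ u x + μ / ⟪e, x⟫ ^ 2 * u x = u x ^ p ∧ φ x ≤ u x) ∧
      ∀ w, IsHardySupersolution e μ p w → (∀ x ∈ openHalfSpace e, φ x ≤ w x) →
        (∀ x ∈ openHalfSpace e, w x ≤ A * ⟪e, x⟫ ^ (-a)) → ∀ x ∈ openHalfSpace e, u x ≤ w x := by
  obtain ⟨s, h⟩ := exists_isAdmissibleShift (finrank ℝ E) μ hp hap hA0
  set T := iterationMap s e μ p
  have hTm : ∀ j, Measurable (T^[j] φ) := measurable_iterate_iterationMap hφm
  have hTw {w : E → ℝ} := h.le_iterate_and_iterate_le he hE (w := w) hφ hφm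
  have hTA := hTw (isHardySupersolution_const_mul_rpow he hp hap hA0 hA) hφA fun _ _ ↦ le_rfl
  set u := fun x ↦ ⨆ j, T^[j] φ x
  have hum : Measurable u := Measurable.iSup hTm
  have hlim (x : E) (hx : x ∈ openHalfSpace e) : Tendsto (fun j ↦ T^[j] φ x) atTop (𝓝 (u x)) :=
    tendsto_atTop_ciSup (h.monotone_iterate he hE hφ hφm hTA hx)
      ⟨_, forall_mem_range.2 fun j ↦ (hTA j x hx).2⟩
  have hφu (x : E) (hx : x ∈ openHalfSpace e) : φ x ≤ u x :=
    ge_of_tendsto' (hlim x hx) fun j ↦ (hTA j x hx).1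
  have huw {w : E → ℝ} (hle : ∀ j, ∀ x ∈ openHalfSpace e, φ x ≤ T^[j] φ x ∧ T^[j] φ x ≤ w x)
      (x : E) (hx : x ∈ openHalfSpace e) : u x ≤ w x :=
    le_of_tendsto' (hlim x hx) fun j ↦ (hle j x hx).2
  have hfix (x : E) (hx : x ∈ openHalfSpace e) : T u x = u x := by
    refine tendsto_nhds_unique (h.tendsto_iterationMap he hE hTm
      (fun j y hy ↦ ⟨(hφ.nonneg hy).trans (hTA j y hy).1, (hTA j y hy).2⟩) hlim hx) ?_
    exact ((hlim x hx).comp (tendsto_add_atTop_nat 1)).congr fun j ↦ by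
      rw [Function.comp_apply, Function.iterate_succ_apply']
  refine ⟨T u, fun x hx ↦ ?_, fun w hw hφw hwA x hx ↦ (hfix x hx).trans_le
    (huw (hTw hw hφw hwA) x hx)⟩
  obtain ⟨hC2, heq⟩ := h.contDiffAt_two_and_laplacian_of_iterationMap_eq he hE hum
    (fun y hy ↦ ⟨(hφ.nonneg hy).trans (hφu y hy), huw hTA y hy⟩) hfix hx
  exact ⟨hC2, heq, (hφu x hx).trans_eq (hfix x hx).symm⟩

end MinimalSolution

section SingularSubsolution

variable {E : Type*} [NormedAddCommGroup E] [InnerProductSpace ℝ E] {e x y g : E}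
  {v : E → ℝ} {F : Set E} {l μ p a α δ t q : ℝ}

theorem inner_le_dist_of_inner_eq_zero (he : ‖e‖ = 1) (hy : ⟪e, y⟫ = 0) (x : E) :
    ⟪e, x⟫ ≤ dist x y := by
  calc ⟪e, x⟫ = ⟪e, x - y⟫ := by rw [inner_sub_right, hy, sub_zero]
    _ ≤ ‖e‖ * ‖x - y‖ := real_inner_le_norm e _
    _ = dist x y := by rw [he, one_mul, dist_eq_norm]

theorem inner_le_infDist_of_subset (he : ‖e‖ = 1) (hF : F.Nonempty)
    (hFe : ∀ y ∈ F, ⟪e, y⟫ = 0) (x : E) : ⟪e, x⟫ ≤ infDist x F :=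
  (le_infDist hF).2 fun y hy ↦ inner_le_dist_of_inner_eq_zero he (hFe y hy) x

/- Since `a (p - 1) = 2`, the profile `t ^ α q ^ (-(α + a) / 2)`, of degree `-a` when `q` has the
scaling of a squared length, is mapped to degree `-a - 2` both by `u ↦ u ^ p` and by `Δ`. -/
theorem rpow_mul_rpow_rpow (ht : 0 < t) (hq : 0 < q) (hap : a * (p - 1) = 2) :
    (t ^ α * q ^ (-(α + a) / 2)) ^ p =
      t ^ α * q ^ (-(α + a) / 2 - 1) * (t / √q) ^ (α * (p - 1)) := by
  have htp : t ^ (α * p) = t ^ α * t ^ (α * (p - 1)) := by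
    rw [← rpow_add ht]
    congr 1
    ring
  have hqp : q ^ (-(α + a) / 2 * p) = q ^ (-(α + a) / 2 - 1) / q ^ (1 / 2 * (α * (p - 1))) := by
    rw [← rpow_sub hq]
    congr 1
    linear_combination (-1 / 2) * hap
  rw [mul_rpow (by positivity) (by positivity), div_rpow ht.le (sqrt_nonneg q), ← rpow_mul ht.le,
    ← rpow_mul hq.le, sqrt_eq_rpow, ← rpow_mul hq.le, htp, hqp]
  ring

variable [FiniteDimensional ℝ E]

theorem laplacian_inner_rpow_mul_rpow (he : ‖e‖ = 1) (hv : HasLaplacianAt v g l x)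
    (hx : x ∈ openHalfSpace e) (hvx : 0 < v x) (α γ μ : ℝ) :
    Δ (fun y ↦ ⟪e, y⟫ ^ α * v y ^ γ) x + μ / ⟪e, x⟫ ^ 2 * (⟪e, x⟫ ^ α * v x ^ γ) =
      ⟪e, x⟫ ^ α * v x ^ (γ - 1) *
        (γ * l + γ * (γ - 1) * (‖g‖ ^ 2 / v x) + 2 * α * γ * (⟪g, e⟫ / ⟪e, x⟫)) +
      (α * (α - 1) + μ) / ⟪e, x⟫ ^ 2 * (⟪e, x⟫ ^ α * v x ^ γ) := by
  have hpos : 0 < ⟪e, x⟫ := hx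
  have hγ1 : v x ^ (γ - 1) = v x ^ γ / v x := rpow_sub_one hvx.ne' γ
  have hγ2 : v x ^ (γ - 2) = v x ^ γ / v x ^ 2 := by rw [rpow_sub hvx, rpow_two]
  rw [((hv.rpow_const hvx γ).inner_rpow_mul he hx α).laplacian_eq, real_inner_smul_left, hγ1, hγ2]
  field_simp
  ring

theorem laplacian_inner_rpow_mul_norm_sq_rpow (he : ‖e‖ = 1) (hy : ⟪e, y⟫ = 0)
    (hx : x ∈ openHalfSpace e) (hαμ : α * (α - 1) + μ = 0) (γ : ℝ) :
    Δ (fun z ↦ ⟪e, z⟫ ^ α * (‖z - y‖ ^ 2) ^ γ) x +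
        μ / ⟪e, x⟫ ^ 2 * (⟪e, x⟫ ^ α * (‖x - y‖ ^ 2) ^ γ) =
      ⟪e, x⟫ ^ α * (‖x - y‖ ^ 2) ^ (γ - 1) * (2 * γ * (finrank ℝ E + 2 * γ - 2 + 2 * α)) := by
  have hpos : 0 < ⟪e, x⟫ := hx
  have hq : 0 < ‖x - y‖ ^ 2 := by
    rw [← dist_eq_norm]
    exact pow_pos (hpos.trans_le (inner_le_dist_of_inner_eq_zero he hy x)) 2
  have hinner : ⟪x - y, e⟫ = ⟪e, x⟫ := by rw [real_inner_comm, inner_sub_right, hy, sub_zero]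
  rw [laplacian_inner_rpow_mul_rpow he (.norm_sub_sq y) hx hq, hαμ, norm_smul, mul_pow,
    mul_div_cancel_right₀ _ hq.ne', real_inner_smul_left, hinner, mul_div_cancel_right₀ _ hpos.ne',
    norm_two]
  ring

variable [MeasurableSpace E] [BorelSpace E]

theorem isHardySubsolution_inner_rpow_mul_dist_rpow (he : ‖e‖ = 1) (hy : ⟪e, y⟫ = 0) (hp : 1 < p)
    (hap : a * (p - 1) = 2) (hα : 0 ≤ α) (hαμ : α * (α - 1) + μ = 0) (hδ0 : 0 ≤ δ)
    (hδ : δ ^ (p - 1) ≤ (α + a) * (a + 2 - finrank ℝ E - α)) :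
    IsHardySubsolution e μ p fun x ↦ δ * (⟪e, x⟫ ^ α * dist x y ^ (-(α + a))) := by
  set γ := -(α + a) / 2 with hγ
  have hsq : (fun x ↦ δ * (⟪e, x⟫ ^ α * dist x y ^ (-(α + a)))) =
      fun x ↦ δ * (⟪e, x⟫ ^ α * (‖x - y‖ ^ 2) ^ γ) := by
    ext x
    rw [dist_eq_norm, ← rpow_two, ← rpow_mul (norm_nonneg _), mul_div_cancel₀ _ two_ne_zero]
  rw [hsq]
  have hle (x : E) : ⟪e, x⟫ ≤ √(‖x - y‖ ^ 2) := by
    rw [sqrt_sq (norm_nonneg _), ← dist_eq_norm]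
    exact inner_le_dist_of_inner_eq_zero he hy x
  have hq (x : E) (hx : x ∈ openHalfSpace e) : 0 < ‖x - y‖ ^ 2 :=
    sqrt_pos.1 (lt_of_lt_of_le hx (hle x))
  have hprofile (x : E) (hx : x ∈ openHalfSpace e) :=
    hasLaplacianAt_of_contDiffAt (((HasLaplacianAt.norm_sub_sq (x := x) y).rpow_const (hq x hx)
      γ).inner_rpow_mul he hx α).contDiffAt
  refine ⟨by fun_prop, fun x hx ↦ ((hprofile x hx).const_mul δ).contDiffAt, fun x hx ↦ ?_,
    fun x hx ↦ ?_⟩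
  · have hpos : 0 < ⟪e, x⟫ := hx
    positivity
  have hpos : 0 < ⟪e, x⟫ := hx
  have hqx : 0 < ‖x - y‖ ^ 2 := hq x hx
  set q := ‖x - y‖ ^ 2
  have hδp : δ ^ p = δ ^ (p - 1) * δ := by
    rw [← rpow_add_one' hδ0 (by linarith), sub_add_cancel]
  calc (δ * (⟪e, x⟫ ^ α * q ^ γ)) ^ p
      = δ ^ (p - 1) * δ * (⟪e, x⟫ ^ α * q ^ (γ - 1) * (⟪e, x⟫ / √q) ^ (α * (p - 1))) := by
        rw [mul_rpow hδ0 (by positivity), hγ, rpow_mul_rpow_rpow hpos hqx hap, hδp]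
    _ ≤ (α + a) * (a + 2 - finrank ℝ E - α) * δ * (⟪e, x⟫ ^ α * q ^ (γ - 1) * 1) := by
        gcongr ?_ * δ * (_ * ?_)
        · exact mul_nonneg ((rpow_nonneg hδ0 _).trans hδ) hδ0
        · exact rpow_le_one (by positivity) (div_le_one_of_le₀ (hle x) (sqrt_nonneg q))
            (mul_nonneg hα (sub_nonneg.2 hp.le))
    _ = δ * (⟪e, x⟫ ^ α * q ^ (γ - 1) * (2 * γ * (finrank ℝ E + 2 * γ - 2 + 2 * α))) := by
        rw [hγ]
        ring
    _ = _ := by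
        rw [((hprofile x hx).const_mul δ).laplacian_eq,
          ← laplacian_inner_rpow_mul_norm_sq_rpow he hy hx hαμ γ]
        ring

theorem isHardySubsolutionEnvelope_infDist (he : ‖e‖ = 1) (hF : F.Nonempty) (hFc : IsClosed F)
    (hFe : ∀ y ∈ F, ⟪e, y⟫ = 0) (hp : 1 < p) (hap : a * (p - 1) = 2) (hα : 0 ≤ α)
    (hαμ : α * (α - 1) + μ = 0) (hδ0 : 0 ≤ δ)
    (hδ : δ ^ (p - 1) ≤ (α + a) * (a + 2 - finrank ℝ E - α)) :
    IsHardySubsolutionEnvelope e μ p fun x ↦ δ * (⟪e, x⟫ ^ α * infDist x F ^ (-(α + a))) := by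
  intro x _
  obtain ⟨y, hyF, hxy⟩ := hFc.exists_infDist_eq_dist hF x
  have ha : 0 < a := pos_of_mul_pos_left (hap ▸ two_pos) (sub_pos.2 hp).le
  refine ⟨_, isHardySubsolution_inner_rpow_mul_dist_rpow he (hFe y hyF) hp hap hα hαμ hδ0 hδ,
    by simp only [hxy], fun z hz ↦ ?_⟩
  have hpos : 0 < ⟪e, z⟫ := hz
  have hdist : 0 < infDist z F := hpos.trans_le (inner_le_infDist_of_subset he hF hFe z)
  have hdist_le : infDist z F ≤ dist z y := infDist_le_dist_of_mem hyF
  have hle : dist z y ^ (-(α + a)) ≤ infDist z F ^ (-(α + a)) :=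
    rpow_le_rpow_of_nonpos hdist hdist_le (by linarith)
  dsimp only
  gcongr

end SingularSubsolution

section Cutoff

theorem hasDerivAt_max_zero_pow (n : ℕ) (t : ℝ) :
    HasDerivAt (fun t : ℝ ↦ max 0 t ^ (n + 2)) ((n + 2) * max 0 t ^ (n + 1)) t := by
  rcases lt_trichotomy t 0 with ht | rfl | ht
  · have hzero : (fun t : ℝ ↦ max 0 t ^ (n + 2)) =ᶠ[𝓝 t] fun _ ↦ 0 := by
      filter_upwards [gt_mem_nhds ht] with y hy
      simp [max_eq_left hy.le]
    simpa [max_eq_left ht.le] using (hasDerivAt_const t (0 : ℝ)).congr_of_eventuallyEq hzero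
  · have hbound (t : ℝ) : ‖max 0 t ^ (n + 2)‖ ≤ ‖t ^ (n + 2)‖ := by
      rw [norm_pow, norm_pow, norm_eq_abs, norm_eq_abs, abs_of_nonneg (le_max_left 0 t)]
      exact pow_le_pow_left₀ (le_max_left 0 t) (max_le (abs_nonneg t) (le_abs_self t)) _
    have hlittle : (fun t : ℝ ↦ max 0 t ^ (n + 2)) =o[𝓝 0] fun t ↦ t :=
      (Asymptotics.isBigO_of_le _ hbound).trans_isLittleO
        (Asymptotics.isLittleO_pow_id (by lia))
    simpa [hasDerivAt_iff_isLittleO] using hlittle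
  · have hpow : (fun t : ℝ ↦ max 0 t ^ (n + 2)) =ᶠ[𝓝 t] fun t ↦ t ^ (n + 2) := by
      filter_upwards [lt_mem_nhds ht] with y hy
      rw [max_eq_right hy.le]
    simpa [max_eq_right ht.le] using (hasDerivAt_pow (n + 2) t).congr_of_eventuallyEq hpow

theorem contDiff_max_zero_pow (n : ℕ) : ContDiff ℝ n fun t : ℝ ↦ max 0 t ^ (n + 1) := by
  induction n with
  | zero => exact contDiff_zero.2 (by fun_prop)
  | succ n ih =>
    have hderiv := hasDerivAt_max_zero_pow n
    rw [Nat.cast_succ, contDiff_succ_iff_deriv]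
    refine ⟨fun t ↦ (hderiv t).differentiableAt, by simp, ?_⟩
    rw [funext fun t ↦ (hderiv t).deriv]
    exact contDiff_const.mul ih

end Cutoff

section SingularSupersolution

variable {E : Type*} [NormedAddCommGroup E] [InnerProductSpace ℝ E] {e x y ξ : E}
  {d r α a p μ : ℝ}

/-- A `C²` substitute for the squared distance from `x` to the part of the boundary hyperplane
outside the ball `B(ξ, d)`, where `ξ` lies on the hyperplane. For `d = 0` the convention `0⁻¹ = 0`
makes it the squared distance to the whole hyperplane. -/
noncomputable def offBallSqDist (e ξ : E) (d : ℝ) (x : E) : ℝ :=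
  ⟪e, x⟫ ^ 2 + (d ^ 4)⁻¹ * max 0 (d ^ 2 - ‖x - ξ‖ ^ 2) ^ 3

theorem inner_sq_le_offBallSqDist (e ξ : E) (d : ℝ) (x : E) :
    ⟪e, x⟫ ^ 2 ≤ offBallSqDist e ξ d x :=
  le_add_of_nonneg_right (by positivity)

theorem offBallSqDist_pos (ξ : E) (d : ℝ) (hx : x ∈ openHalfSpace e) :
    0 < offBallSqDist e ξ d x :=
  (pow_pos hx 2).trans_le (inner_sq_le_offBallSqDist e ξ d x)

theorem inv_pow_four_mul_max_zero_sq_le_one (d r : ℝ) :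
    (d ^ 4)⁻¹ * max 0 (d ^ 2 - r ^ 2) ^ 2 ≤ 1 := by
  have hmax : max 0 (d ^ 2 - r ^ 2) ≤ d ^ 2 := max_le (sq_nonneg d) (sub_le_self _ (sq_nonneg r))
  calc (d ^ 4)⁻¹ * max 0 (d ^ 2 - r ^ 2) ^ 2 ≤ (d ^ 4)⁻¹ * (d ^ 2) ^ 2 := by gcongr
    _ = (d ^ 4)⁻¹ * d ^ 4 := by ring
    _ ≤ 1 := inv_mul_le_one

theorem inv_pow_four_mul_max_zero_mul_sq_le_one (d r : ℝ) :
    (d ^ 4)⁻¹ * (max 0 (d ^ 2 - r ^ 2) * r ^ 2) ≤ 1 := by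
  have hmax : max 0 (d ^ 2 - r ^ 2) * r ^ 2 ≤ d ^ 2 * d ^ 2 := by
    rw [max_mul_of_nonneg _ _ (sq_nonneg r), zero_mul]
    exact max_le (by positivity) (by nlinarith [sq_nonneg (d ^ 2), sq_nonneg (r ^ 2 - d ^ 2)])
  calc (d ^ 4)⁻¹ * (max 0 (d ^ 2 - r ^ 2) * r ^ 2) ≤ (d ^ 4)⁻¹ * (d ^ 2 * d ^ 2) := by gcongr
    _ = (d ^ 4)⁻¹ * d ^ 4 := by ring
    _ ≤ 1 := inv_mul_le_one

theorem offBallSqDist_le (he : ‖e‖ = 1) (hy : ⟪e, y⟫ = 0) (hd : 0 ≤ d) (hyd : d ≤ dist ξ y)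
    (x : E) : offBallSqDist e ξ d x ≤ 9 * dist x y ^ 2 := by
  have hinner : ⟪e, x⟫ ^ 2 ≤ dist x y ^ 2 := by
    simpa [inner_sub_right, hy, dist_eq_norm] using
      inner_sq_le_norm_sq_of_norm_eq_one he (x - y)
  suffices hcutoff : (d ^ 4)⁻¹ * max 0 (d ^ 2 - dist x ξ ^ 2) ^ 3 ≤ 8 * dist x y ^ 2 by
    rw [offBallSqDist, ← dist_eq_norm]
    linarith
  set m := max 0 (d ^ 2 - dist x ξ ^ 2)
  have htri : d - dist x ξ ≤ dist x y := by linarith [dist_triangle ξ x y, dist_comm ξ x]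
  have hmd : m ≤ d ^ 2 := max_le (sq_nonneg d) (sub_le_self _ (sq_nonneg _))
  have hmxy : m ≤ 2 * d * dist x y := by
    refine max_le (by positivity) ?_
    rcases le_total (dist x ξ) d with hle | hle
    · nlinarith [dist_nonneg (x := x) (y := ξ), dist_nonneg (x := x) (y := y)]
    · nlinarith [mul_nonneg hd (dist_nonneg (x := x) (y := y))]
  calc (d ^ 4)⁻¹ * m ^ 3 = (d ^ 4)⁻¹ * (m * m ^ 2) := by ring
    _ ≤ (d ^ 4)⁻¹ * (d ^ 2 * (2 * d * dist x y) ^ 2) := by gcongr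
    _ = (d ^ 4)⁻¹ * d ^ 4 * (4 * dist x y ^ 2) := by ring
    _ ≤ 1 * (4 * dist x y ^ 2) := by gcongr; exact inv_mul_le_one
    _ ≤ 8 * dist x y ^ 2 := by linarith [sq_nonneg (dist x y)]

theorem infDist_sq_le_offBallSqDist {F : Set E} (hx : x ∈ openHalfSpace e)
    (hξ : dist x ξ = ⟪e, x⟫) : infDist x F ^ 2 ≤ 9 * offBallSqDist e ξ (infDist ξ F) x := by
  have hpos : 0 < ⟪e, x⟫ := hx
  have hle : infDist x F ≤ infDist ξ F + ⟪e, x⟫ := hξ ▸ infDist_le_infDist_add_dist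
  have hd0 : 0 ≤ infDist ξ F := infDist_nonneg
  have hq := inner_sq_le_offBallSqDist e ξ (infDist ξ F) x
  rw [offBallSqDist, ← dist_eq_norm, hξ] at hq ⊢
  set d := infDist ξ F
  rcases le_total d (2 * ⟪e, x⟫) with hd | hd
  · calc infDist x F ^ 2 ≤ (3 * ⟪e, x⟫) ^ 2 := by
          gcongr
          · exact infDist_nonneg
          · linarith
      _ = 9 * ⟪e, x⟫ ^ 2 := by ring
      _ ≤ _ := by gcongr
  have hdpos : 0 < d := by linarith
  have hm : 3 / 4 * d ^ 2 ≤ max 0 (d ^ 2 - ⟪e, x⟫ ^ 2) := le_max_of_le_right (by nlinarith)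
  have hcutoff : 27 / 64 * d ^ 2 ≤ (d ^ 4)⁻¹ * max 0 (d ^ 2 - ⟪e, x⟫ ^ 2) ^ 3 := by
    calc 27 / 64 * d ^ 2 = (d ^ 4)⁻¹ * (3 / 4 * d ^ 2) ^ 3 := by field_simp; ring
      _ ≤ _ := by gcongr
  calc infDist x F ^ 2 ≤ (3 / 2 * d) ^ 2 := by
        gcongr
        · exact infDist_nonneg
        · linarith
    _ ≤ 9 * (27 / 64 * d ^ 2) := by nlinarith
    _ ≤ _ := by
        gcongr
        exact hcutoff.trans (le_add_of_nonneg_left (by positivity))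

variable [FiniteDimensional ℝ E]

theorem hasLaplacianAt_offBallSqDist (he : ‖e‖ = 1) (ξ : E) (d : ℝ) (x : E) :
    HasLaplacianAt (offBallSqDist e ξ d)
      ((2 * ⟪e, x⟫) • e - (6 * ((d ^ 4)⁻¹ * max 0 (d ^ 2 - ‖x - ξ‖ ^ 2) ^ 2)) • (x - ξ))
      (2 - 6 * ((d ^ 4)⁻¹ * max 0 (d ^ 2 - ‖x - ξ‖ ^ 2) ^ 2) * finrank ℝ E +
        24 * ((d ^ 4)⁻¹ * (max 0 (d ^ 2 - ‖x - ξ‖ ^ 2) * ‖x - ξ‖ ^ 2))) x := by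
  have hcutoff := ((HasLaplacianAt.const (d ^ 2)).sub (.norm_sub_sq (x := x) ξ)).comp
    (contDiff_max_zero_pow 2).contDiffAt (.of_forall (hasDerivAt_max_zero_pow 1))
    ((hasDerivAt_max_zero_pow 0 _).const_mul _)
  have hinner := (HasLaplacianAt.inner_left (x := x) e).mul (.inner_left e)
  simp only [← sq] at hinner
  refine (hinner.add (hcutoff.const_mul (d ^ 4)⁻¹)).congr ?_ ?_
  · push_cast
    match_scalars <;> ring
  · rw [real_inner_self_eq_norm_sq, he, zero_sub ((2 : ℝ) • (x - ξ)), norm_neg,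
      norm_smul, norm_two]
    push_cast
    ring

theorem exists_hasLaplacianAt_offBallSqDist (he : ‖e‖ = 1) (hξ : ⟪e, ξ⟫ = 0) (d : ℝ)
    (hx : x ∈ openHalfSpace e) :
    ∃ g l, HasLaplacianAt (offBallSqDist e ξ d) g l x ∧ |l| ≤ 26 + 6 * finrank ℝ E ∧
      ‖g‖ ^ 2 ≤ 72 * offBallSqDist e ξ d x ∧ |⟪g, e⟫| ≤ 8 * ⟪e, x⟫ := by
  have hpos : 0 < ⟪e, x⟫ := hx
  refine ⟨_, _, hasLaplacianAt_offBallSqDist he ξ d x, ?_⟩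
  rw [offBallSqDist]
  have hb := inv_pow_four_mul_max_zero_sq_le_one d ‖x - ξ‖
  have hc := inv_pow_four_mul_max_zero_mul_sq_le_one d ‖x - ξ‖
  have hm0 : 0 ≤ max 0 (d ^ 2 - ‖x - ξ‖ ^ 2) := le_max_left _ _
  set m := max 0 (d ^ 2 - ‖x - ξ‖ ^ 2)
  set b := (d ^ 4)⁻¹ * m ^ 2 with hbdef
  set c := (d ^ 4)⁻¹ * (m * ‖x - ξ‖ ^ 2) with hcdef
  have hb0 : 0 ≤ b := by positivity
  have hc0 : 0 ≤ c := by positivity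
  refine ⟨?_, ?_, ?_⟩
  · have hbN : b * finrank ℝ E ≤ finrank ℝ E := mul_le_of_le_one_left (Nat.cast_nonneg _) hb
    have hbN0 : 0 ≤ b * finrank ℝ E := by positivity
    rw [abs_le]
    constructor <;> linarith
  · calc ‖(2 * ⟪e, x⟫) • e - (6 * b) • (x - ξ)‖ ^ 2
        ≤ (‖(2 * ⟪e, x⟫) • e‖ + ‖(6 * b) • (x - ξ)‖) ^ 2 := by gcongr; exact norm_sub_le _ _
      _ ≤ 2 * (‖(2 * ⟪e, x⟫) • e‖ ^ 2 + ‖(6 * b) • (x - ξ)‖ ^ 2) := add_sq_le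
      _ = 8 * ⟪e, x⟫ ^ 2 + 72 * ((d ^ 4)⁻¹ * m ^ 3 * c) := by
        rw [norm_smul, norm_smul, he, mul_one, mul_pow, norm_eq_abs, norm_eq_abs, sq_abs, sq_abs,
          hbdef, hcdef]
        ring
      _ ≤ 72 * (⟪e, x⟫ ^ 2 + (d ^ 4)⁻¹ * m ^ 3) := by
        have : (d ^ 4)⁻¹ * m ^ 3 * c ≤ (d ^ 4)⁻¹ * m ^ 3 :=
          mul_le_of_le_one_right (by positivity) hc
        linarith [sq_nonneg ⟪e, x⟫]
  · have hinner : ⟪(2 * ⟪e, x⟫) • e - (6 * b) • (x - ξ), e⟫ = (2 - 6 * b) * ⟪e, x⟫ := by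
      rw [inner_sub_left, real_inner_smul_left, real_inner_smul_left, real_inner_self_eq_norm_sq,
        he, real_inner_comm e, inner_sub_right, hξ]
      ring
    rw [hinner, abs_mul, abs_of_pos hpos]
    gcongr
    rw [abs_le]
    constructor <;> linarith

end SingularSupersolution

section Barrier

variable {E : Type*} [NormedAddCommGroup E] [InnerProductSpace ℝ E] {e x y ξ : E}
  {d α a p μ : ℝ}

theorem inner_div_sqrt_offBallSqDist_le_one (ξ : E) (d : ℝ) (x : E) :
    ⟪e, x⟫ / √(offBallSqDist e ξ d x) ≤ 1 :=
  div_le_one_of_le₀ (le_sqrt_of_sq_le (inner_sq_le_offBallSqDist e ξ d x)) (sqrt_nonneg _)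

/-- With `q = offBallSqDist`, the supersolution profile `x₁ ^ α q ^ (-(α + a) / 2)` minus half of
`x₁ ^ (α + 1) q ^ (-(α + a + 1) / 2)`. When `α` is an indicial root the first term is harmonic to
leading order at `x₁ = 0`, and the second one supplies a negative term of order `x₁ ^ (α - 1)`. -/
noncomputable def singularBarrier (e : E) (α a : ℝ) (ξ : E) (d : ℝ) (x : E) : ℝ :=
  ⟪e, x⟫ ^ α * offBallSqDist e ξ d x ^ (-(α + a) / 2) -
    1 / 2 * (⟪e, x⟫ ^ (α + 1) * offBallSqDist e ξ d x ^ (-(α + 1 + a) / 2))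

theorem singularBarrier_eq (hx : x ∈ openHalfSpace e) :
    singularBarrier e α a ξ d x = ⟪e, x⟫ ^ α * offBallSqDist e ξ d x ^ (-(α + a) / 2) *
      (1 - ⟪e, x⟫ / √(offBallSqDist e ξ d x) / 2) := by
  have hpos : 0 < ⟪e, x⟫ := hx
  have hq := offBallSqDist_pos ξ d hx
  have hexp : -(α + 1 + a) / 2 = -(α + a) / 2 - 1 / 2 := by ring
  rw [singularBarrier, rpow_add_one hpos.ne', hexp, rpow_sub hq, ← sqrt_eq_rpow]
  ring

theorem singularBarrier_le (hx : x ∈ openHalfSpace e) :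
    singularBarrier e α a ξ d x ≤ ⟪e, x⟫ ^ α * offBallSqDist e ξ d x ^ (-(α + a) / 2) := by
  have hpos : 0 < ⟪e, x⟫ := hx
  have hq := offBallSqDist_pos ξ d hx
  rw [singularBarrier_eq hx]
  exact mul_le_of_le_one_right (by positivity) (sub_le_self _ (by positivity))

theorem half_mul_le_singularBarrier (hx : x ∈ openHalfSpace e) :
    1 / 2 * (⟪e, x⟫ ^ α * offBallSqDist e ξ d x ^ (-(α + a) / 2)) ≤
      singularBarrier e α a ξ d x := by
  have hpos : 0 < ⟪e, x⟫ := hx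
  have hq := offBallSqDist_pos ξ d hx
  rw [singularBarrier_eq hx, mul_comm]
  gcongr
  linarith [inner_div_sqrt_offBallSqDist_le_one (e := e) ξ d x]

theorem singularBarrier_nonneg (hx : x ∈ openHalfSpace e) : 0 ≤ singularBarrier e α a ξ d x := by
  have hpos : 0 < ⟪e, x⟫ := hx
  have hq := offBallSqDist_pos ξ d hx
  exact le_trans (by positivity) (half_mul_le_singularBarrier hx)

theorem eventually_mul_sub_div_le_rpow (hp : 1 < p) (hα : 0 < α) {C : ℝ} (hC : 0 < C) :
    ∀ᶠ A : ℝ in atTop, ∀ τ > 0,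
      A * (C - α / τ) ≤ (A * (1 / 2)) ^ p * τ ^ (α * (p - 1)) := by
  have hlarge : Tendsto (fun A : ℝ ↦ A ^ (p - 1)) atTop atTop := tendsto_rpow_atTop (by linarith)
  filter_upwards [hlarge.eventually_ge_atTop (C * 2 ^ p / (α / C) ^ (α * (p - 1))),
    eventually_gt_atTop 0] with A hA hA0 τ hτ
  rcases le_total τ (α / C) with hle | hle
  · have hneg : C - α / τ ≤ 0 := sub_nonpos.2 ((le_div_comm₀ hC hτ).2 hle)
    exact (mul_nonpos_of_nonneg_of_nonpos hA0.le hneg).trans (by positivity)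
  have hAp : A ^ p = A ^ (p - 1) * A := by rw [← rpow_add_one hA0.ne', sub_add_cancel]
  calc A * (C - α / τ) ≤ A * C := by
        gcongr
        exact sub_le_self _ (by positivity)
    _ = A * (C * 2 ^ p / (α / C) ^ (α * (p - 1))) / 2 ^ p * (α / C) ^ (α * (p - 1)) := by
        field_simp
    _ ≤ A * A ^ (p - 1) / 2 ^ p * τ ^ (α * (p - 1)) := by
        gcongr
    _ = (A * (1 / 2)) ^ p * τ ^ (α * (p - 1)) := by
        rw [mul_one_div, div_rpow hA0.le zero_le_two, hAp, mul_comm A]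

theorem rpow_add_one_mul_rpow_sub_one {t q : ℝ} (ht : 0 < t) (hq : 0 < q) :
    t ^ (α + 1) * q ^ (-(α + 1 + a) / 2 - 1) = t ^ α * q ^ (-(α + a) / 2 - 1) * (t / √q) := by
  have hexp : -(α + 1 + a) / 2 - 1 = -(α + a) / 2 - 1 - 1 / 2 := by ring
  rw [rpow_add_one ht.ne', hexp, rpow_sub hq, ← sqrt_eq_rpow]
  ring

theorem rpow_add_one_mul_rpow_div_sq {t q : ℝ} (ht : 0 < t) (hq : 0 < q) :
    t ^ (α + 1) * q ^ (-(α + 1 + a) / 2) / t ^ 2 =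
      t ^ α * q ^ (-(α + a) / 2 - 1) / (t / √q) := by
  have hexp : -(α + 1 + a) / 2 = -(α + a) / 2 - 1 + 1 / 2 := by ring
  rw [rpow_add_one ht.ne', hexp, rpow_add hq, ← sqrt_eq_rpow]
  field_simp

variable [FiniteDimensional ℝ E]

theorem exists_laplacian_inner_rpow_mul_offBallSqDist_rpow (he : ‖e‖ = 1) (α γ μ : ℝ) :
    ∃ C > 0, ∀ ξ d x, ⟪e, ξ⟫ = 0 → x ∈ openHalfSpace e →
      ContDiffAt ℝ 2 (fun y ↦ ⟪e, y⟫ ^ α * offBallSqDist e ξ d y ^ γ) x ∧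
      ∃ R, |R| ≤ C ∧ Δ (fun y ↦ ⟪e, y⟫ ^ α * offBallSqDist e ξ d y ^ γ) x +
          μ / ⟪e, x⟫ ^ 2 * (⟪e, x⟫ ^ α * offBallSqDist e ξ d x ^ γ) =
        ⟪e, x⟫ ^ α * offBallSqDist e ξ d x ^ (γ - 1) * R +
          (α * (α - 1) + μ) / ⟪e, x⟫ ^ 2 * (⟪e, x⟫ ^ α * offBallSqDist e ξ d x ^ γ) := by
  refine ⟨|γ| * (26 + 6 * finrank ℝ E) + |γ * (γ - 1)| * 72 + |2 * α * γ| * 8 + 1, by positivity,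
    fun ξ d x hξ hx ↦ ?_⟩
  have hpos : 0 < ⟪e, x⟫ := hx
  have hq := offBallSqDist_pos ξ d hx
  obtain ⟨g, l, hgl, hl, hg, hge⟩ := exists_hasLaplacianAt_offBallSqDist he hξ d hx
  refine ⟨((hgl.rpow_const hq γ).inner_rpow_mul he hx α).contDiffAt, _, ?_,
    laplacian_inner_rpow_mul_rpow he hgl hx hq α γ μ⟩
  have hg' : |‖g‖ ^ 2 / offBallSqDist e ξ d x| ≤ 72 := by
    rwa [abs_of_nonneg (by positivity), div_le_iff₀ hq]
  have hge' : |⟪g, e⟫ / ⟪e, x⟫| ≤ 8 := by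
    rwa [abs_div, abs_of_pos hpos, div_le_iff₀ hpos]
  refine le_trans ?_ (le_add_of_nonneg_right zero_le_one)
  refine (abs_add_three _ _ _).trans ?_
  rw [abs_mul γ l, abs_mul _ (‖g‖ ^ 2 / _), abs_mul _ (⟪g, e⟫ / _)]
  gcongr

theorem exists_laplacian_singularBarrier_le (he : ‖e‖ = 1) (hαμ : α * (α - 1) + μ = 0) (a : ℝ) :
    ∃ C > 0, ∀ ξ d x, ⟪e, ξ⟫ = 0 → x ∈ openHalfSpace e →
      ContDiffAt ℝ 2 (singularBarrier e α a ξ d) x ∧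
      Δ (singularBarrier e α a ξ d) x + μ / ⟪e, x⟫ ^ 2 * singularBarrier e α a ξ d x ≤
        ⟪e, x⟫ ^ α * offBallSqDist e ξ d x ^ (-(α + a) / 2 - 1) *
          (C - α / (⟪e, x⟫ / √(offBallSqDist e ξ d x))) := by
  obtain ⟨C₁, hC₁, h₁⟩ :=
    exists_laplacian_inner_rpow_mul_offBallSqDist_rpow he α (-(α + a) / 2) μ
  obtain ⟨C₂, hC₂, h₂⟩ :=
    exists_laplacian_inner_rpow_mul_offBallSqDist_rpow he (α + 1) (-(α + 1 + a) / 2) μ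
  refine ⟨C₁ + 1 / 2 * C₂, by positivity, fun ξ d x hξ hx ↦ ?_⟩
  have hpos : 0 < ⟪e, x⟫ := hx
  have hq := offBallSqDist_pos ξ d hx
  have hτ := inner_div_sqrt_offBallSqDist_le_one (e := e) ξ d x
  obtain ⟨hcont₁, R₁, hR₁, heq₁⟩ := h₁ ξ d x hξ hx
  obtain ⟨hcont₂, R₂, hR₂, heq₂⟩ := h₂ ξ d x hξ hx
  have hb := (hasLaplacianAt_of_contDiffAt hcont₁).sub
    ((hasLaplacianAt_of_contDiffAt hcont₂).const_mul (1 / 2))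
  refine ⟨hb.contDiffAt, ?_⟩
  have hlap : Δ (singularBarrier e α a ξ d) x = _ := hb.laplacian_eq
  rw [hlap, singularBarrier]
  set q := offBallSqDist e ξ d x
  have hindicial : (α + 1) * (α + 1 - 1) + μ = 2 * α := by linarith
  rw [hαμ, zero_div, zero_mul, add_zero] at heq₁
  rw [hindicial, rpow_add_one_mul_rpow_sub_one hpos hq, div_mul_eq_mul_div (2 * α),
    mul_div_assoc (2 * α), rpow_add_one_mul_rpow_div_sq hpos hq] at heq₂
  set τ := ⟪e, x⟫ / √q
  have hτ0 : 0 < τ := by positivity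
  have hR : R₁ - 1 / 2 * (τ * R₂) ≤ C₁ + 1 / 2 * C₂ := by
    have hτR : |τ * R₂| ≤ 1 * C₂ := by
      rw [abs_mul, abs_of_pos hτ0]
      gcongr
    linarith [le_of_abs_le hR₁, neg_le_of_abs_le hτR]
  calc _ = ⟪e, x⟫ ^ α * q ^ (-(α + a) / 2 - 1) * (R₁ - 1 / 2 * (τ * R₂) - α / τ) := by
        linear_combination heq₁ - 1 / 2 * heq₂
    _ ≤ _ := by gcongr

variable [MeasurableSpace E] [BorelSpace E]

theorem eventually_isHardySupersolution_mul_singularBarrier (he : ‖e‖ = 1) (hp : 1 < p)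
    (hap : a * (p - 1) = 2) (hα : 0 < α) (hαμ : α * (α - 1) + μ = 0) :
    ∀ᶠ A : ℝ in atTop, ∀ ξ d, ⟪e, ξ⟫ = 0 →
      IsHardySupersolution e μ p fun x ↦ A * singularBarrier e α a ξ d x := by
  obtain ⟨C, hC, hbarrier⟩ := exists_laplacian_singularBarrier_le he hαμ a
  filter_upwards [eventually_mul_sub_div_le_rpow hp hα hC, eventually_gt_atTop 0]
    with A hA hA0 ξ d hξ
  have hmeas : Measurable fun x ↦ A * singularBarrier e α a ξ d x := by
    unfold singularBarrier offBallSqDist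
    fun_prop
  refine ⟨hmeas, fun x hx ↦ contDiffAt_const.mul (hbarrier ξ d x hξ hx).1,
    fun x hx ↦ mul_nonneg hA0.le (singularBarrier_nonneg hx), fun x hx ↦ ?_⟩
  have hpos : 0 < ⟪e, x⟫ := hx
  have hq := offBallSqDist_pos ξ d hx
  have hhalf := half_mul_le_singularBarrier (α := α) (a := a) (ξ := ξ) (d := d) hx
  obtain ⟨hcont, hle⟩ := hbarrier ξ d x hξ hx
  have hlap : Δ (fun y ↦ A * singularBarrier e α a ξ d y) x = _ :=
    ((hasLaplacianAt_of_contDiffAt hcont).const_mul A).laplacian_eq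
  set q := offBallSqDist e ξ d x
  have hτ : 0 < ⟪e, x⟫ / √q := by positivity
  calc _ = A * (Δ (singularBarrier e α a ξ d) x +
          μ / ⟪e, x⟫ ^ 2 * singularBarrier e α a ξ d x) := by
        rw [hlap]
        ring
    _ ≤ A * (⟪e, x⟫ ^ α * q ^ (-(α + a) / 2 - 1) * (C - α / (⟪e, x⟫ / √q))) := by gcongr
    _ = ⟪e, x⟫ ^ α * q ^ (-(α + a) / 2 - 1) * (A * (C - α / (⟪e, x⟫ / √q))) := by ring
    _ ≤ ⟪e, x⟫ ^ α * q ^ (-(α + a) / 2 - 1) *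
          ((A * (1 / 2)) ^ p * (⟪e, x⟫ / √q) ^ (α * (p - 1))) :=
        mul_le_mul_of_nonneg_left (hA _ hτ) (by positivity)
    _ = (A * (1 / 2 * (⟪e, x⟫ ^ α * q ^ (-(α + a) / 2)))) ^ p := by
        rw [← mul_assoc A, mul_rpow (x := A * (1 / 2)) (by positivity) (by positivity),
          rpow_mul_rpow_rpow hpos hq hap]
        ring
    _ ≤ (A * singularBarrier e α a ξ d x) ^ p := by gcongr

end Barrier

section SingularSolution

theorem exists_pos_rpow_le_and_le {s M b : ℝ} (hs : 0 < s) (hM : 0 < M) (hb : 0 < b) :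
    ∃ δ > 0, δ ^ s ≤ M ∧ δ ≤ b := by
  refine ⟨min (M ^ s⁻¹) b, by positivity, ?_, min_le_right _ _⟩
  calc min (M ^ s⁻¹) b ^ s ≤ (M ^ s⁻¹) ^ s := by
        gcongr
        exact min_le_left _ _
    _ = M := rpow_inv_rpow hM.le hs.ne'

variable {E : Type*} [NormedAddCommGroup E] [InnerProductSpace ℝ E] {e x y ξ : E}
  {F : Set E} {α a δ p μ r t : ℝ}

theorem rpow_mul_rpow_neg_add_le (ht : 0 < t) (htr : t ≤ r) (hαa : 0 ≤ α + a) :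
    t ^ α * r ^ (-(α + a)) ≤ t ^ (-a) := by
  calc t ^ α * r ^ (-(α + a)) ≤ t ^ α * t ^ (-(α + a)) := by
        gcongr ?_ * ?_
        exact rpow_le_rpow_of_nonpos ht htr (neg_nonpos.2 hαa)
    _ = t ^ (-a) := by
        rw [← rpow_add ht]
        congr 1
        ring

theorem sqrt_offBallSqDist_infDist_le [FiniteDimensional ℝ E] (he : ‖e‖ = 1) (hF : F.Nonempty)
    (hFc : IsClosed F) (hFe : ∀ y ∈ F, ⟪e, y⟫ = 0) (ξ x : E) :
    √(offBallSqDist e ξ (infDist ξ F) x) ≤ 3 * infDist x F := by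
  obtain ⟨y, hyF, hxy⟩ := hFc.exists_infDist_eq_dist hF x
  rw [hxy]
  refine sqrt_le_iff.2 ⟨by positivity, ?_⟩
  linarith [offBallSqDist_le he (hFe y hyF) infDist_nonneg (infDist_le_dist_of_mem (x := ξ) hyF) x]

theorem infDist_le_sqrt_offBallSqDist (hx : x ∈ openHalfSpace e) (hξ : dist x ξ = ⟪e, x⟫) :
    infDist x F ≤ 3 * √(offBallSqDist e ξ (infDist ξ F) x) := by
  refine abs_le_of_sq_le_sq' ?_ (by positivity) |>.2
  rw [mul_pow, sq_sqrt (offBallSqDist_pos ξ _ hx).le]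
  linarith [infDist_sq_le_offBallSqDist (F := F) hx hξ]

theorem offBallSqDist_rpow_eq (hx : x ∈ openHalfSpace e) (ξ : E) (d β : ℝ) :
    offBallSqDist e ξ d x ^ (-β / 2) = √(offBallSqDist e ξ d x) ^ (-β) :=
  rpow_div_two_eq_sqrt _ (offBallSqDist_pos ξ d hx).le

theorem singularBarrier_le_inner_rpow (hx : x ∈ openHalfSpace e) (hαa : 0 ≤ α + a) (ξ : E)
    (d : ℝ) : singularBarrier e α a ξ d x ≤ ⟪e, x⟫ ^ (-a) := by
  refine (singularBarrier_le hx).trans ?_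
  rw [offBallSqDist_rpow_eq hx]
  exact rpow_mul_rpow_neg_add_le hx (le_sqrt_of_sq_le (inner_sq_le_offBallSqDist e ξ d x)) hαa

theorem singularBarrier_infDist_le (he : ‖e‖ = 1) (hF : F.Nonempty) (hFe : ∀ y ∈ F, ⟪e, y⟫ = 0)
    (hx : x ∈ openHalfSpace e) (hξ : dist x ξ = ⟪e, x⟫) (hαa : 0 ≤ α + a) :
    singularBarrier e α a ξ (infDist ξ F) x ≤
      3 ^ (α + a) * (⟪e, x⟫ ^ α * infDist x F ^ (-(α + a))) := by
  have hpos : 0 < ⟪e, x⟫ := hx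
  have hdist : 0 < infDist x F := hpos.trans_le (inner_le_infDist_of_subset he hF hFe x)
  set q := offBallSqDist e ξ (infDist ξ F) x with hq
  have hle : infDist x F / 3 ≤ √q := by
    rw [div_le_iff₀' three_pos]
    exact infDist_le_sqrt_offBallSqDist hx hξ
  calc singularBarrier e α a ξ (infDist ξ F) x
      ≤ ⟪e, x⟫ ^ α * q ^ (-(α + a) / 2) := singularBarrier_le hx
    _ = ⟪e, x⟫ ^ α * √q ^ (-(α + a)) := by rw [hq, offBallSqDist_rpow_eq hx]
    _ ≤ ⟪e, x⟫ ^ α * (infDist x F / 3) ^ (-(α + a)) := by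
        gcongr ?_ * ?_
        exact rpow_le_rpow_of_nonpos (by positivity) hle (neg_nonpos.2 hαa)
    _ = 3 ^ (α + a) * (⟪e, x⟫ ^ α * infDist x F ^ (-(α + a))) := by
        rw [div_rpow hdist.le zero_le_three, rpow_neg zero_le_three, div_inv_eq_mul]
        ring

theorem le_singularBarrier_infDist [FiniteDimensional ℝ E] (he : ‖e‖ = 1) (hF : F.Nonempty)
    (hFc : IsClosed F) (hFe : ∀ y ∈ F, ⟪e, y⟫ = 0) (hx : x ∈ openHalfSpace e)
    (hαa : 0 ≤ α + a) (ξ : E) :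
    1 / 2 * 3 ^ (-(α + a)) * (⟪e, x⟫ ^ α * infDist x F ^ (-(α + a))) ≤
      singularBarrier e α a ξ (infDist ξ F) x := by
  have hpos : 0 < ⟪e, x⟫ := hx
  set q := offBallSqDist e ξ (infDist ξ F) x with hq
  have hq0 : 0 < √q := sqrt_pos.2 (offBallSqDist_pos ξ _ hx)
  calc 1 / 2 * 3 ^ (-(α + a)) * (⟪e, x⟫ ^ α * infDist x F ^ (-(α + a)))
      = 1 / 2 * (⟪e, x⟫ ^ α * (3 * infDist x F) ^ (-(α + a))) := by
        rw [mul_rpow zero_le_three infDist_nonneg]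
        ring
    _ ≤ 1 / 2 * (⟪e, x⟫ ^ α * √q ^ (-(α + a))) := by
        gcongr _ * (_ * ?_)
        exact rpow_le_rpow_of_nonpos hq0 (sqrt_offBallSqDist_infDist_le he hF hFc hFe ξ x)
          (neg_nonpos.2 hαa)
    _ = 1 / 2 * (⟪e, x⟫ ^ α * q ^ (-(α + a) / 2)) := by rw [hq, offBallSqDist_rpow_eq hx]
    _ ≤ singularBarrier e α a ξ (infDist ξ F) x := half_mul_le_singularBarrier hx

theorem dist_sub_inner_smul (he : ‖e‖ = 1) (hx : x ∈ openHalfSpace e) :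
    dist x (x - ⟪e, x⟫ • e) = ⟪e, x⟫ := by
  rw [dist_self_sub_right, norm_smul, he, mul_one, norm_of_nonneg (le_of_lt hx)]

theorem inner_add_smul_self (he : ‖e‖ = 1) (hy : ⟪e, y⟫ = 0) (t : ℝ) : ⟪e, y + t • e⟫ = t := by
  rw [inner_add_right, hy, real_inner_smul_right, real_inner_self_eq_norm_sq, he]
  ring

theorem infDist_add_smul (he : ‖e‖ = 1) (hFe : ∀ y ∈ F, ⟪e, y⟫ = 0) (hy : y ∈ F) (ht : 0 ≤ t) :
    infDist (y + t • e) F = t := by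
  refine le_antisymm ?_ ?_
  · calc infDist (y + t • e) F ≤ dist (y + t • e) y := infDist_le_dist_of_mem hy
      _ = t := by rw [dist_self_add_left, norm_smul, he, mul_one, norm_of_nonneg ht]
  · calc t = ⟪e, y + t • e⟫ := (inner_add_smul_self he (hFe y hy) t).symm
      _ ≤ infDist (y + t • e) F := inner_le_infDist_of_subset he ⟨y, hy⟩ hFe _

theorem tendsto_inner_rpow_mul_infDist_rpow (hFc : IsClosed F) (hF : F.Nonempty) (hα : 0 < α)
    (hy : ⟪e, y⟫ = 0) (hyF : y ∉ F) (β : ℝ) :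
    Tendsto (fun x ↦ ⟪e, x⟫ ^ α * infDist x F ^ β) (𝓝 y) (𝓝 0) := by
  have hdist : 0 < infDist y F := (hFc.notMem_iff_infDist_pos hF).1 hyF
  have hinner : ContinuousAt (fun x : E ↦ ⟪e, x⟫ ^ α) y :=
    ContinuousAt.rpow_const (by fun_prop) (.inr hα.le)
  have hinfDist : ContinuousAt (fun x ↦ infDist x F ^ β) y :=
    (continuous_infDist_pt F).continuousAt.rpow_const (.inl hdist.ne')
  have hzero : ⟪e, y⟫ ^ α * infDist y F ^ β = 0 := by rw [hy, zero_rpow hα.ne', zero_mul]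
  exact hzero ▸ (hinner.mul hinfDist).tendsto

variable [FiniteDimensional ℝ E] [MeasurableSpace E] [BorelSpace E]

theorem exists_solution_between_inner_rpow_mul_infDist_rpow (he : ‖e‖ = 1)
    (hE : 2 ≤ finrank ℝ E) (hp : 1 < p) (hap : a * (p - 1) = 2) (hα : 0 < α)
    (hαμ : α * (α - 1) + μ = 0) (hgap : 0 < a + 2 - finrank ℝ E - α) :
    ∃ δ > 0, ∃ A > 0, ∀ F : Set E, F.Nonempty → IsClosed F → (∀ y ∈ F, ⟪e, y⟫ = 0) →
      ∃ u : E → ℝ, ∀ x ∈ openHalfSpace e, ContDiffAt ℝ 2 u x ∧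
        Δ u x + μ / ⟪e, x⟫ ^ 2 * u x = u x ^ p ∧
        δ * (⟪e, x⟫ ^ α * infDist x F ^ (-(α + a))) ≤ u x ∧
        u x ≤ A * (⟪e, x⟫ ^ α * infDist x F ^ (-(α + a))) := by
  have ha : 0 < a := pos_of_mul_pos_left (hap ▸ two_pos) (sub_pos.2 hp).le
  have hαa : 0 < α + a := add_pos hα ha
  have hlarge : Tendsto (fun A : ℝ ↦ A ^ (p - 1)) atTop atTop :=
    tendsto_rpow_atTop (sub_pos.2 hp)
  obtain ⟨A, hsuper, hA, hA0⟩ :=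
    ((eventually_isHardySupersolution_mul_singularBarrier he hp hap hα hαμ).and
      ((hlarge.eventually_ge_atTop (a * (a + 1) + μ)).and (eventually_gt_atTop 0))).exists
  obtain ⟨δ, hδ0, hδ, hδA⟩ := exists_pos_rpow_le_and_le (sub_pos.2 hp)
    (mul_pos hαa hgap) (show 0 < A * (1 / 2 * 3 ^ (-(α + a))) by positivity)
  refine ⟨δ, hδ0, A * 3 ^ (α + a), by positivity, fun F hF hFc hFe ↦ ?_⟩
  set φ := fun x ↦ δ * (⟪e, x⟫ ^ α * infDist x F ^ (-(α + a)))
  have hφ_le (ξ x : E) (hx : x ∈ openHalfSpace e) :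
      φ x ≤ A * singularBarrier e α a ξ (infDist ξ F) x := by
    have hpos : 0 < ⟪e, x⟫ := hx
    have hdist : 0 ≤ infDist x F := infDist_nonneg
    calc φ x ≤ A * (1 / 2 * 3 ^ (-(α + a))) * (⟪e, x⟫ ^ α * infDist x F ^ (-(α + a))) := by
          dsimp only [φ]
          gcongr
      _ ≤ A * singularBarrier e α a ξ (infDist ξ F) x := by
          rw [mul_assoc]
          gcongr
          exact le_singularBarrier_infDist he hF hFc hFe hx hαa.le ξ
  have hbarrier_le (ξ x : E) (hx : x ∈ openHalfSpace e) :
      A * singularBarrier e α a ξ (infDist ξ F) x ≤ A * ⟪e, x⟫ ^ (-a) :=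
    mul_le_mul_of_nonneg_left (singularBarrier_le_inner_rpow hx hαa.le ξ _) hA0.le
  obtain ⟨u, hu, hmin⟩ := exists_minimal_solution he hE hp hap hA0.le hA (φ := φ) (by fun_prop)
    (isHardySubsolutionEnvelope_infDist he hF hFc hFe hp hap hα.le hαμ hδ0.le hδ)
    fun x hx ↦ (hφ_le 0 x hx).trans (hbarrier_le 0 x hx)
  refine ⟨u, fun x hx ↦ ⟨(hu x hx).1, (hu x hx).2.1, (hu x hx).2.2, ?_⟩⟩
  set ξ := x - ⟪e, x⟫ • e
  have hξ : ⟪e, ξ⟫ = 0 := by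
    rw [inner_sub_right, real_inner_smul_right, real_inner_self_eq_norm_sq, he]
    ring
  calc u x ≤ A * singularBarrier e α a ξ (infDist ξ F) x :=
        hmin _ (hsuper ξ _ hξ) (hφ_le ξ) (hbarrier_le ξ) x hx
    _ ≤ A * (3 ^ (α + a) * (⟪e, x⟫ ^ α * infDist x F ^ (-(α + a)))) := by
        gcongr
        exact singularBarrier_infDist_le he hF hFe hx (dist_sub_inner_smul he hx) hαa.le
    _ = A * 3 ^ (α + a) * (⟪e, x⟫ ^ α * infDist x F ^ (-(α + a))) := (mul_assoc _ _ _).symm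

theorem exists_pos_solution_comparable_inner_rpow_mul_infDist_rpow (he : ‖e‖ = 1)
    (hE : 2 ≤ finrank ℝ E) (hp : 1 < p) (hap : a * (p - 1) = 2) (hα : 0 < α)
    (hαμ : α * (α - 1) + μ = 0) (hgap : 0 < a + 2 - finrank ℝ E - α) :
    ∃ c > 0, ∀ F : Set E, F.Nonempty → IsClosed F → (∀ y ∈ F, ⟪e, y⟫ = 0) →
      ∃ u : E → ℝ, ∀ x ∈ openHalfSpace e, ContDiffAt ℝ 2 u x ∧ 0 < u x ∧
        Δ u x + μ / ⟪e, x⟫ ^ 2 * u x = u x ^ p ∧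
        c⁻¹ * (⟪e, x⟫ ^ α * infDist x F ^ (-(α + a))) ≤ u x ∧
        u x ≤ c * (⟪e, x⟫ ^ α * infDist x F ^ (-(α + a))) := by
  obtain ⟨δ, hδ, A, hA, hsol⟩ :=
    exists_solution_between_inner_rpow_mul_infDist_rpow he hE hp hap hα hαμ hgap
  have hc : (max δ⁻¹ A)⁻¹ ≤ δ := inv_le_of_inv_le₀ hδ (le_max_left _ _)
  refine ⟨max δ⁻¹ A, lt_max_of_lt_right hA, fun F hF hFc hFe ↦ ?_⟩
  obtain ⟨u, hu⟩ := hsol F hF hFc hFe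
  refine ⟨u, fun x hx ↦ ?_⟩
  obtain ⟨hcont, heq, hlow, hup⟩ := hu x hx
  have hpos : 0 < ⟪e, x⟫ := hx
  have hdist : 0 < infDist x F := hpos.trans_le (inner_le_infDist_of_subset he hF hFe x)
  have hprofile : 0 < ⟪e, x⟫ ^ α * infDist x F ^ (-(α + a)) := by positivity
  exact ⟨hcont, (mul_pos hδ hprofile).trans_le hlow, heq,
    (mul_le_mul_of_nonneg_right hc hprofile.le).trans hlow,
    hup.trans (mul_le_mul_of_nonneg_right (le_max_right _ _) hprofile.le)⟩

end SingularSolution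

theorem norm_e1 {n : ℕ} (hn : 0 < n) : ‖e1 n‖ = 1 := by
  rw [e1, dif_pos hn, PiLp.norm_single, norm_one]

theorem x1_eq_inner {n : ℕ} (hn : 0 < n) (x : EuclideanSpace ℝ (Fin n)) : x1 x = ⟪e1 n, x⟫ := by
  rw [x1, dif_pos hn, e1, dif_pos hn, EuclideanSpace.inner_single_left, map_one, one_mul]

theorem lap_eq_laplacian {n : ℕ} (u : EuclideanSpace ℝ (Fin n) → ℝ) : lap u = Δ u := by
  ext x
  simp only [laplacian_eq_iteratedFDeriv_orthonormalBasis u (EuclideanSpace.basisFun (Fin n) ℝ),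
    EuclideanSpace.basisFun_apply, lap]

theorem halfSpace_eq {n : ℕ} (hn : 0 < n) : halfSpace n = openHalfSpace (e1 n) := by
  simp only [halfSpace, openHalfSpace, x1_eq_inner hn]

theorem aPlus_pos (μ : ℝ) : 0 < aPlus μ := by
  rw [aPlus]
  positivity

theorem aPlus_mul_sub_one_add {μ : ℝ} (hμ : μ ≤ 1 / 4) : aPlus μ * (aPlus μ - 1) + μ = 0 := by
  rw [aPlus]
  linear_combination sq_sqrt (sub_nonneg.2 hμ)

theorem stmt5_general {E : Type*} [NormedAddCommGroup E] [InnerProductSpace ℝ E]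
    [FiniteDimensional ℝ E] {e : E} (he : ‖e‖ = 1) (hE : 2 ≤ finrank ℝ E) {α μ p : ℝ}
    (hα : 0 < α) (hαμ : α * (α - 1) + μ = 0) (hp : 1 < p)
    (hpc : p < 1 + 2 / (finrank ℝ E - 2 + α)) :
    ∃ c > 0, ∀ F : Set E, F.Nonempty → IsClosed F → F ⊆ {x | ⟪e, x⟫ = 0} →
      ∃ U : E → ℝ, ContDiffOn ℝ 2 U (openHalfSpace e) ∧ (∀ x ∈ openHalfSpace e, 0 < U x) ∧
        (∀ x ∈ openHalfSpace e, Δ U x + μ / ⟪e, x⟫ ^ 2 * U x = U x ^ p) ∧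
        (∀ y, ⟪e, y⟫ = 0 → y ∉ F → Tendsto U (𝓝[openHalfSpace e] y) (𝓝 0)) ∧
        (∀ y ∈ F, ∀ t > 0, c⁻¹ * t ^ (-(2 / (p - 1))) ≤ U (y + t • e) ∧
          U (y + t • e) ≤ c * t ^ (-(2 / (p - 1)))) ∧
        ∀ x ∈ openHalfSpace e,
          c⁻¹ * ⟪e, x⟫ ^ α * infDist x F ^ (-α - 2 / (p - 1)) ≤ U x ∧
          U x ≤ c * ⟪e, x⟫ ^ α * infDist x F ^ (-α - 2 / (p - 1)) := by
  borelize E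
  set a := 2 / (p - 1)
  have hp0 : 0 < p - 1 := sub_pos.2 hp
  have hap : a * (p - 1) = 2 := div_mul_cancel₀ 2 hp0.ne'
  have hgap : 0 < a + 2 - finrank ℝ E - α := by
    have hN : (2 : ℝ) ≤ finrank ℝ E := by exact_mod_cast hE
    have hlt : p - 1 < 2 / (finrank ℝ E - 2 + α) := by linarith
    linarith [(lt_div_comm₀ hp0 (by linarith)).1 hlt]
  obtain ⟨c, hc, hsol⟩ :=
    exists_pos_solution_comparable_inner_rpow_mul_infDist_rpow he hE hp hap hα hαμ hgap
  refine ⟨c, hc, fun F hF hFc hFe ↦ ?_⟩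
  obtain ⟨U, hU⟩ := hsol F hF hFc hFe
  refine ⟨U, fun x hx ↦ (hU x hx).1.contDiffWithinAt, fun x hx ↦ (hU x hx).2.1,
    fun x hx ↦ (hU x hx).2.2.1, fun y hy hyF ↦ ?_, fun y hy t ht ↦ ?_, fun x hx ↦ ?_⟩
  · have hlim := (tendsto_inner_rpow_mul_infDist_rpow hFc hF hα hy hyF (-(α + a))).const_mul c
    rw [mul_zero] at hlim
    exact squeeze_zero' (eventually_mem_nhdsWithin.mono fun x hx ↦ (hU x hx).2.1.le)
      (eventually_mem_nhdsWithin.mono fun x hx ↦ (hU x hx).2.2.2.2)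
      (hlim.mono_left nhdsWithin_le_nhds)
  · have hinner : ⟪e, y + t • e⟫ = t := inner_add_smul_self he (hFe hy) t
    have hexp : t ^ (-a) = t ^ α * t ^ (-(α + a)) := by
      rw [← rpow_add ht, neg_add, add_neg_cancel_left]
    have hbounds := (hU (y + t • e) (ht.trans_eq hinner.symm)).2.2.2
    rwa [hinner, infDist_add_smul he hFe hy (le_of_lt ht), ← hexp] at hbounds
  · simpa only [mul_assoc, neg_add'] using (hU x hx).2.2.2

/-- for `1 < p < p_c` and any nonempty closed subset `F` of the
boundary hyperplane there is a positive classical solution `U` of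
`ΔU + (μ/x₁²)U = U^p` on the half-space which vanishes on `∂ℝⁿ₊ \ F`, has a
strong singularity `≈ x₁^{−2/(p−1)}` above every point of `F`, and satisfies
`c⁻¹ x₁^{α₊} dist(x,F)^{−α₊−2/(p−1)} ≤ U ≤ c x₁^{α₊} dist(x,F)^{−α₊−2/(p−1)}`,
with `c > 0` depending only on `n, μ, p`. -/
theorem stmt5 (n : ℕ) (hn : 2 ≤ n) (μ p : ℝ) (hμ : μ < 1 / 4) (hp1 : 1 < p)
    (hpc : p < 1 + 2 / ((n : ℝ) - 2 + aPlus μ)) :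
    ∃ c > (0 : ℝ), ∀ F : Set (EuclideanSpace ℝ (Fin n)),
      F.Nonempty → IsClosed F → F ⊆ {x | x1 x = 0} →
      ∃ U : EuclideanSpace ℝ (Fin n) → ℝ,
        ContDiffOn ℝ 2 U (halfSpace n) ∧
        (∀ x ∈ halfSpace n, 0 < U x) ∧
        (∀ x ∈ halfSpace n, lap U x + (μ / (x1 x) ^ 2) * U x = U x ^ p) ∧
        (∀ y : EuclideanSpace ℝ (Fin n), x1 y = 0 → y ∉ F →
          Filter.Tendsto U (nhdsWithin y (halfSpace n)) (nhds 0)) ∧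
        (∀ y ∈ F, ∀ t ∈ Set.Ioo (0 : ℝ) 1,
          c⁻¹ * t ^ (-(2 / (p - 1))) ≤ U (y + t • e1 n) ∧
          U (y + t • e1 n) ≤ c * t ^ (-(2 / (p - 1)))) ∧
        (∀ x ∈ halfSpace n,
          c⁻¹ * x1 x ^ aPlus μ * Metric.infDist x F ^ (-(aPlus μ) - 2 / (p - 1)) ≤ U x ∧
          U x ≤ c * x1 x ^ aPlus μ * Metric.infDist x F ^ (-(aPlus μ) - 2 / (p - 1))) := by
  have hn0 : 0 < n := two_pos.trans_le hn
  obtain ⟨c, hc, hsol⟩ := stmt5_general (norm_e1 hn0) (finrank_euclideanSpace_fin.ge.trans' hn)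
    (aPlus_pos μ) (aPlus_mul_sub_one_add hμ.le) hp1 (by rwa [finrank_euclideanSpace_fin])
  refine ⟨c, hc, fun F hF hFc hFe ↦ ?_⟩
  simp only [halfSpace_eq hn0, x1_eq_inner hn0, lap_eq_laplacian] at hFe ⊢
  obtain ⟨U, hU, hpos, heq, hlim, hsing, hbounds⟩ := hsol F hF hFc hFe
  exact ⟨U, hU, hpos, heq, hlim, fun y hy t ht ↦ hsing y hy t ht.1, hbounds⟩
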